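/- arXiv:2605.28449 — 3 statements merged into one kernel-verified Lean document; each statement's English description precedes it below -/
import Mathlib

section
/- With notation as in the context, let k and A be fixed positive integers, set c₁ = Y⁸ and c₂ = 2.02·10¹²·(log Y)², and let γ = max{|α|, |β|}. Suppose the integers n ≥ 0, a₁, …, a_k with |a_i| ≤ A for all i, and m₁ > m₂ > ⋯ > m_k ≥ 1 satisfy u_n = a₁·m₁! + ⋯ + a_k·m_k!, and suppose that for all indices 1 ≤ j₁ ≤ j₂ ≤ k the partial sum Σ_{i=j₁}^{j₂} a_i·m_i! is different from both (a·n + c)·α^n and b·β^n. Then either n ≤ c₁ or n < (1/log γ)·(log(4A) + 10.49·c₂·(log n)³)^k; in particular, n ≤ max{c₁, n₀}, where n₀ is the largest positive integer solution of the inequality n < (1/log γ)·(log(4A) + 10.49·c₂·(log n)³)^k. -/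
/-- Iterated differences annihilate `z ↦ P(z) (1 + ε) ^ z` when `ε` is nilpotent. -/
theorem fwdDiff_iter_polynomial_mul_unipotent_pow {R : Type*} [CommRing R] (ε : R) (M : ℕ)
    (hε : ε ^ M = 0) (J : ℕ) :
    ∀ (m a : ℕ) (P : Polynomial R), P.degree < a → a + M ≤ J + m → ∀ z : ℕ,
      (fwdDiff 1)^[J] (fun z : ℕ => ε ^ m * P.eval (z : R) * (1 + ε) ^ z) z = 0 := by
  induction J with
  | zero =>
    intro m a P _ h z
    have : ε ^ m = 0 := pow_eq_zero_of_le (by omega) hε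
    simp [this]
  | succ J ih =>
    intro m a P hP h z
    by_cases hP0 : P = 0
    · simp [hP0, fwdDiff_iter_eq_sum_shift]
    obtain ⟨a, rfl⟩ : ∃ a', a = a' + 1 := by
      cases a with
      | zero => exact absurd (Polynomial.degree_eq_bot.mp (by
          simpa [Nat.WithBot.lt_zero_iff] using hP)) hP0
      | succ a => exact ⟨a, rfl⟩
    have hdeg : (Polynomial.taylor 1 P).degree = P.degree := by simp
    have hlt : (Polynomial.taylor 1 P - P).degree < (a : ℕ) := by
      have h1 : (Polynomial.taylor 1 P - P).degree < (Polynomial.taylor 1 P).degree :=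
        Polynomial.degree_sub_lt_left hdeg (by simpa using hP0) (by simp)
      rw [hdeg, Polynomial.degree_eq_natDegree hP0] at h1
      rw [Polynomial.degree_eq_natDegree hP0] at hP
      have h2 : P.natDegree < a + 1 := by exact_mod_cast hP
      exact lt_of_lt_of_le h1 (by exact_mod_cast Nat.lt_succ_iff.mp h2)
    have key : fwdDiff 1 (fun z : ℕ => ε ^ m * P.eval (z : R) * (1 + ε) ^ z) =
        (fun z : ℕ => ε ^ m * (Polynomial.taylor 1 P - P).eval (z : R) * (1 + ε) ^ z) +
        (fun z : ℕ => ε ^ (m + 1) * (Polynomial.taylor 1 P).eval (z : R) * (1 + ε) ^ z) := by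
      funext z
      simp only [fwdDiff, Pi.add_apply, Polynomial.eval_sub, Polynomial.taylor_eval]
      push_cast
      ring
    rw [Function.iterate_succ_apply, key, fwdDiff_iter_add, Pi.add_apply,
      ih m a _ hlt (by omega), ih (m + 1) (a + 1) _ (hdeg ▸ hP) (by omega), add_zero]

theorem eq_zero_of_fwdDiff_iter_eq_zero {R : Type*} [CommRing R] (f : ℕ → R) (J : ℕ)
    (hJ : ∀ z, (fwdDiff 1)^[J] f z = 0) (h0 : ∀ z < J, f z = 0) (z : ℕ) : f z = 0 := by
  have hz := shift_eq_sum_fwdDiff_iter 1 f z 0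
  have hJ' : (fwdDiff 1)^[J] f = fun _ => 0 := funext hJ
  rw [smul_eq_mul, mul_one, zero_add] at hz
  rw [hz]
  refine Finset.sum_eq_zero fun i _ => ?_
  suffices (fwdDiff 1)^[i] f 0 = 0 by rw [this, smul_zero]
  rcases lt_or_ge i J with hi | hi
  · rw [fwdDiff_iter_eq_sum_shift]
    refine Finset.sum_eq_zero fun j hj => ?_
    rw [h0 _ (by simp at hj ⊢; omega), smul_zero]
  · obtain ⟨d, rfl⟩ := Nat.exists_eq_add_of_le' hi
    rw [Function.iterate_add_apply, hJ', fwdDiff_iter_eq_sum_shift]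
    simp

/-- A nonzero polynomial in two variables with small integer coefficients (pigeonhole principle)
whose values along `z ↦ (z, g ^ z)` are all divisible by a high power of two. -/
theorem exists_small_auxiliary_polynomial (g : ℤ) (hg : 8 ∣ g - 1) (K L M b : ℕ)
    (hcard : 3 * M * (K + M) < b * (K * L)) :
    ∃ p : Fin K → Fin L → ℤ, p ≠ 0 ∧ (∀ k l, |p k l| ≤ 2 ^ b) ∧
      ∀ z : ℕ, (2 : ℤ) ^ (3 * M) ∣ ∑ k, ∑ l, p k l * ((z : ℤ) ^ (k : ℕ) * (g ^ z) ^ (l : ℕ)) := by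
  have : NeZero (2 ^ (3 * M)) := ⟨by positivity⟩
  let Φ : (Fin K → Fin L → ℤ) → ℕ → ZMod (2 ^ (3 * M)) := fun p z =>
    ((∑ k, ∑ l, p k l * ((z : ℤ) ^ (k : ℕ) * (g ^ z) ^ (l : ℕ)) : ℤ) : ZMod (2 ^ (3 * M)))
  let Ψ : (Fin K → Fin L → Fin (2 ^ b)) → Fin (K + M) → ZMod (2 ^ (3 * M)) := fun q j =>
    Φ (fun k l => ((q k l : ℕ) : ℤ)) j
  obtain ⟨q, q', hne, heq⟩ := Fintype.exists_ne_map_eq_of_card_lt Ψ (by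
    simp only [Fintype.card_pi, Finset.prod_const, Finset.card_univ, Fintype.card_fin,
      ZMod.card]
    rw [← pow_mul, ← pow_mul, ← pow_mul]
    exact Nat.pow_lt_pow_right (by norm_num) (by nlinarith))
  refine ⟨fun k l => (q k l : ℤ) - (q' k l : ℤ), ?_, ?_, ?_⟩
  · intro h
    apply hne
    funext k l
    have := congrFun (congrFun h k) l
    simp only [Pi.zero_apply, sub_eq_zero] at this
    exact Fin.ext (by exact_mod_cast this)
  · intro k l
    have h1 : ((q k l : ℕ) : ℤ) < 2 ^ b := by exact_mod_cast (q k l).isLt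
    have h2 : ((q' k l : ℕ) : ℤ) < 2 ^ b := by exact_mod_cast (q' k l).isLt
    change |(q k l : ℤ) - (q' k l : ℤ)| ≤ 2 ^ b
    rw [abs_le]; constructor <;> omega
  · intro z
    have hsub : ∀ z : ℕ, Φ (fun k l => (q k l : ℤ) - (q' k l : ℤ)) z =
        Φ (fun k l => (q k l : ℤ)) z - Φ (fun k l => (q' k l : ℤ)) z := by
      intro z
      simp only [Φ, ← Int.cast_sub, ← Finset.sum_sub_distrib, sub_mul]
    have hzero : Φ (fun k l => (q k l : ℤ) - (q' k l : ℤ)) z = 0 := by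
      refine eq_zero_of_fwdDiff_iter_eq_zero _ (K + M) ?_ ?_ z
      · intro z
        have hexp : Φ (fun k l => (q k l : ℤ) - (q' k l : ℤ)) = ∑ k : Fin K, ∑ l : Fin L,
            (((q k l : ℤ) - (q' k l : ℤ) : ℤ) : ZMod (2 ^ (3 * M))) • fun z : ℕ =>
              ((g : ZMod (2 ^ (3 * M))) ^ (l : ℕ) - 1) ^ 0 *
                (Polynomial.X ^ (k : ℕ) : Polynomial (ZMod (2 ^ (3 * M)))).eval
                  (z : ZMod (2 ^ (3 * M))) *
                (1 + ((g : ZMod (2 ^ (3 * M))) ^ (l : ℕ) - 1)) ^ z := by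
          funext z
          simp only [Φ, Finset.sum_apply, Pi.smul_apply, smul_eq_mul, pow_zero, one_mul,
            Polynomial.eval_pow, Polynomial.eval_X, add_sub_cancel]
          push_cast
          refine Finset.sum_congr rfl fun k _ => Finset.sum_congr rfl fun l _ => ?_
          rw [pow_right_comm]
        rw [hexp, fwdDiff_iter_finsetSum, Finset.sum_apply]
        refine Finset.sum_eq_zero fun k _ => ?_
        rw [fwdDiff_iter_finsetSum, Finset.sum_apply]
        refine Finset.sum_eq_zero fun l _ => ?_
        rw [fwdDiff_iter_const_smul, Pi.smul_apply,
          fwdDiff_iter_polynomial_mul_unipotent_pow _ M _ (K + M) 0 K, smul_zero]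
        · exact lt_of_le_of_lt (Polynomial.degree_X_pow_le _) (by exact_mod_cast k.isLt)
        · omega
        · obtain ⟨h, hh⟩ := hg.trans (sub_one_dvd_pow_sub_one g l)
          have : ((g : ZMod (2 ^ (3 * M))) ^ (l : ℕ) - 1) ^ M =
              ((((2 ^ (3 * M) : ℕ) : ℤ) * h ^ M : ℤ) : ZMod (2 ^ (3 * M))) := by
            have h3 : (((2 ^ (3 * M) : ℕ) : ℤ) * h ^ M : ℤ) = (g ^ (l : ℕ) - 1) ^ M := by
              rw [hh, mul_pow, pow_mul]; norm_num
            rw [h3]; push_cast; rfl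
          rw [this, Int.cast_mul, Int.cast_natCast, ZMod.natCast_self, zero_mul]
      · intro z hz
        have := congrFun heq ⟨z, hz⟩
        rw [hsub]
        exact sub_eq_zero.mpr this
    have := (ZMod.intCast_zmod_eq_zero_iff_dvd _ _).mp hzero
    exact_mod_cast this

open Polynomial in
/-- A determinant of translated polynomials twisted by a Vandermonde matrix has the degree and
leading coefficient suggested by its entries. -/
theorem det_twisted_taylor_ne_zero {m : ℕ} (Q : Fin m → ℚ[X]) (hQ : ∀ j, Q j ≠ 0) (v : Fin m → ℚ)
    (hv : Function.Injective v) (hv0 : ∀ j, v j ≠ 0) :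
    (Matrix.of fun i j : Fin m => C (v j ^ (i : ℕ)) * taylor ((i : ℕ) : ℚ) (Q j)).det ≠ 0 ∧
    (Matrix.of fun i j : Fin m => C (v j ^ (i : ℕ)) * taylor ((i : ℕ) : ℚ) (Q j)).det.natDegree
      ≤ ∑ j, (Q j).natDegree := by
  have hdeg : ∀ σ : Equiv.Perm (Fin m),
      (∏ j, (C (v j ^ ((σ j : Fin m) : ℕ)) * taylor (((σ j : Fin m) : ℕ) : ℚ) (Q j))).natDegree
        = ∑ j, (Q j).natDegree := by
    intro σ
    rw [natDegree_prod]
    · refine Finset.sum_congr rfl fun j _ => ?_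
      rw [natDegree_C_mul (pow_ne_zero _ (hv0 j)), natDegree_taylor]
    · intro j _
      exact mul_ne_zero (C_ne_zero.mpr (pow_ne_zero _ (hv0 j))) (by simpa using hQ j)
  have hcoeff : (Matrix.of fun i j : Fin m =>
      C (v j ^ (i : ℕ)) * taylor ((i : ℕ) : ℚ) (Q j)).det.coeff (∑ j, (Q j).natDegree)
      = (∏ j, (Q j).leadingCoeff) * (Matrix.vandermonde v).transpose.det := by
    rw [Matrix.det_apply, Matrix.det_apply, finsetSum_coeff, Finset.mul_sum]
    refine Finset.sum_congr rfl fun σ _ => ?_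
    simp only [Matrix.of_apply]
    rw [coeff_smul, ← hdeg σ, coeff_natDegree, leadingCoeff_prod, mul_smul_comm]
    congr 1
    rw [← Finset.prod_mul_distrib]
    refine Finset.prod_congr rfl fun j _ => ?_
    rw [leadingCoeff_mul, leadingCoeff_C, leadingCoeff_taylor, Matrix.transpose_apply,
      Matrix.vandermonde_apply, mul_comm]
  constructor
  · intro h
    rw [h, coeff_zero, Matrix.det_transpose] at hcoeff
    exact mul_ne_zero (Finset.prod_ne_zero_iff.mpr fun j _ => leadingCoeff_ne_zero.mpr (hQ j))
      (Matrix.det_vandermonde_ne_zero_iff.mpr hv) hcoeff.symm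
  · rw [Matrix.det_apply]
    refine natDegree_sum_le_of_forall_le _ _ fun σ _ => ?_
    refine (natDegree_smul_le _ _).trans ?_
    simp only [Matrix.of_apply]
    exact (hdeg σ).le

open Polynomial in
/-- A polynomial vanishing at enough points `(t + s n, g ^ t ρ ^ s)` is zero. -/
theorem zero_estimate (g : ℚ) (hg : 1 < g) (ρ : ℚ) (hρ : ρ ≠ 0) (n K L T S : ℕ)
    (hTn : T ≤ n) (hK : 0 < K) (hcard : L * (K - 1) < T * S) (p : Fin K → Fin L → ℚ)
    (hvan : ∀ t < T + L, ∀ s < S,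
      ∑ k, ∑ l, p k l * (((t + s * n : ℕ) : ℚ) ^ (k : ℕ) * (g ^ t * ρ ^ s) ^ (l : ℕ)) = 0) :
    p = 0 := by
  classical
  by_contra hp
  let Q : Fin L → ℚ[X] := fun l => ∑ k : Fin K, C (p k l) * X ^ (k : ℕ)
  have hQdeg : ∀ l, (Q l).natDegree ≤ K - 1 := fun l =>
    natDegree_sum_le_of_forall_le _ _ fun k _ =>
      (natDegree_C_mul_X_pow_le _ _).trans (by omega)
  have hQcoeff : ∀ (k : Fin K) l, (Q l).coeff k = p k l := by
    intro k l
    simp only [Q, finsetSum_coeff, coeff_C_mul_X_pow]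
    rw [Finset.sum_eq_single k] <;> simp +contextual [Fin.ext_iff, eq_comm]
  let Λ : Finset (Fin L) := Finset.univ.filter fun l => Q l ≠ 0
  let e : Fin Λ.card ≃ Λ := (Λ.orderIsoOfFin rfl).toEquiv
  have hΛ : 0 < Λ.card := by
    rw [Finset.card_pos]
    by_contra hempty
    apply hp
    funext k l
    have : Q l = 0 := by
      by_contra h
      exact hempty ⟨l, by simp [Λ, h]⟩
    rw [← hQcoeff, this]; simp
  have hΛL : Λ.card ≤ L := by simpa using Finset.card_le_univ Λ
  have hg0 : g ≠ 0 := by positivity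
  obtain ⟨hD0, hDdeg⟩ := det_twisted_taylor_ne_zero (fun j => Q (e j).1)
    (fun j => (Finset.mem_filter.mp (e j).2).2) (fun j => g ^ ((e j).1 : ℕ))
    (fun i j hij => e.injective (Subtype.ext (Fin.ext
      (pow_right_injective₀ (by linarith) hg.ne' hij))))
    (fun j => pow_ne_zero _ hg0)
  apply hD0
  refine eq_zero_of_natDegree_lt_card_of_eval_eq_zero _
    (f := fun x : Fin T × Fin S => (((x.1 : ℕ) + (x.2 : ℕ) * n : ℕ) : ℚ)) ?_ ?_ ?_
  · rintro ⟨t, s⟩ ⟨t', s'⟩ h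
    have h' : (t : ℕ) + s * n = t' + s' * n := by
      simp only at h
      exact_mod_cast h
    have ht := t.isLt
    have ht' := t'.isLt
    have hs : (s : ℕ) = s' := by
      have h1 : ((t : ℕ) + s * n) / n = s := by
        rw [Nat.add_mul_div_right _ _ (by omega), Nat.div_eq_of_lt (by omega), zero_add]
      have h2 : ((t' : ℕ) + s' * n) / n = s' := by
        rw [Nat.add_mul_div_right _ _ (by omega), Nat.div_eq_of_lt (by omega), zero_add]
      rw [← h1, ← h2, h']
    rw [hs] at h'
    exact Prod.ext (Fin.ext (by simpa using h')) (Fin.ext hs)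
  · rintro ⟨t, s⟩
    rw [← coe_evalRingHom, RingHom.map_det, ← Matrix.exists_mulVec_eq_zero_iff]
    refine ⟨fun j => (g ^ (t : ℕ) * ρ ^ (s : ℕ)) ^ ((e j).1 : ℕ), ?_, ?_⟩
    · intro h
      exact pow_ne_zero _ (mul_ne_zero (pow_ne_zero _ hg0) (pow_ne_zero _ hρ))
        (congrFun h ⟨0, hΛ⟩)
    · funext i
      have hv := hvan (t + i) (by have := t.isLt; have := i.isLt; omega) s s.isLt
      rw [Finset.sum_comm] at hv
      rw [Pi.zero_apply, ← hv]
      simp only [Matrix.mulVec, dotProduct, RingHom.mapMatrix_apply, Matrix.map_apply,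
        Matrix.of_apply, coe_evalRingHom, eval_mul, eval_C, taylor_eval]
      rw [e.sum_comp (fun l : Λ => (g ^ (l.1 : ℕ)) ^ (i : ℕ) *
        (Q l.1).eval ((((t : ℕ) + (s : ℕ) * n : ℕ) : ℚ) + ((i : ℕ) : ℚ)) *
          (g ^ (t : ℕ) * ρ ^ (s : ℕ)) ^ (l.1 : ℕ))]
      rw [Finset.sum_coe_sort Λ (fun l : Fin L => (g ^ (l : ℕ)) ^ (i : ℕ) *
        (Q l).eval ((((t : ℕ) + (s : ℕ) * n : ℕ) : ℚ) + ((i : ℕ) : ℚ)) *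
          (g ^ (t : ℕ) * ρ ^ (s : ℕ)) ^ (l : ℕ))]
      rw [Finset.sum_filter_of_ne (fun l _ h => by
        intro h0; simp [h0] at h)]
      refine Finset.sum_congr rfl fun l _ => ?_
      have hpow : (g ^ ((t : ℕ) + (i : ℕ)) * ρ ^ (s : ℕ)) ^ (l : ℕ) =
          (g ^ (l : ℕ)) ^ (i : ℕ) * (g ^ (t : ℕ) * ρ ^ (s : ℕ)) ^ (l : ℕ) := by
        rw [← pow_mul, mul_comm (l : ℕ) (i : ℕ), pow_mul, ← mul_pow, pow_add]; ring
      simp only [hpow, Q, eval_finsetSum, eval_mul, eval_C, eval_pow, eval_X]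
      rw [Finset.mul_sum, Finset.sum_mul]
      refine Finset.sum_congr rfl fun k _ => ?_
      push_cast
      ring
  · simp only [Fintype.card_prod, Fintype.card_fin]
    refine lt_of_le_of_lt (hDdeg.trans ?_) hcard
    calc ∑ j, (Q (e j).1).natDegree ≤ ∑ _j : Fin Λ.card, (K - 1) :=
          Finset.sum_le_sum fun j _ => hQdeg _
      _ = Λ.card * (K - 1) := by simp
      _ ≤ L * (K - 1) := Nat.mul_le_mul_right _ hΛL

theorem abs_sum_mul_pow_le {K L : ℕ} (p : Fin K → Fin L → ℤ) (B X V x y z : ℤ)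
    (hp : ∀ k l, |p k l| ≤ B) (hX : 1 ≤ X) (hx : |x| ≤ X) (hy : |y| ≤ V) (hz : |z| ≤ V) :
    |∑ k, ∑ l, p k l * (x ^ (k : ℕ) * (y ^ (l : ℕ) * z ^ (L - l)))| ≤
      (K * L : ℤ) * (B * (X ^ K * V ^ L)) := by
  have hterm : ∀ (k : Fin K) (l : Fin L),
      |p k l * (x ^ (k : ℕ) * (y ^ (l : ℕ) * z ^ (L - l)))| ≤ B * (X ^ K * V ^ L) := by
    intro k l
    rw [abs_mul, abs_mul, abs_mul, abs_pow, abs_pow, abs_pow]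
    have hV : 0 ≤ V := (abs_nonneg _).trans hy
    have e1 : |x| ^ (k : ℕ) ≤ X ^ K :=
      (pow_le_pow_left₀ (abs_nonneg _) hx _).trans (pow_le_pow_right₀ hX k.isLt.le)
    have e2 : |y| ^ (l : ℕ) * |z| ^ (L - l) ≤ V ^ L := by
      calc |y| ^ (l : ℕ) * |z| ^ (L - l) ≤ V ^ (l : ℕ) * V ^ (L - l) := by gcongr
        _ = V ^ L := by rw [← pow_add, Nat.add_sub_of_le l.isLt.le]
    exact mul_le_mul (hp k l) (mul_le_mul e1 e2 (by positivity) (by positivity)) (by positivity)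
      ((abs_nonneg _).trans (hp k l))
  calc _ ≤ ∑ k : Fin K, ∑ l : Fin L, B * (X ^ K * V ^ L) :=
        (Finset.abs_sum_le_sum_abs _ _).trans (Finset.sum_le_sum fun k _ =>
          (Finset.abs_sum_le_sum_abs _ _).trans (Finset.sum_le_sum fun l _ => hterm k l))
    _ = (K * L : ℤ) * (B * (X ^ K * V ^ L)) := by
        simp only [Finset.sum_const, Finset.card_univ, Fintype.card_fin, nsmul_eq_mul]; ring

theorem dvd_sum_mul_pow_of_modEq {K L : ℕ} (p : Fin K → Fin L → ℤ) (q x w y z : ℤ)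
    (hy : y ≡ w * z [ZMOD q]) (hq : q ∣ ∑ k, ∑ l, p k l * (x ^ (k : ℕ) * w ^ (l : ℕ))) :
    q ∣ ∑ k, ∑ l, p k l * (x ^ (k : ℕ) * (y ^ (l : ℕ) * z ^ (L - l))) := by
  rw [← Int.modEq_zero_iff_dvd]
  have h2 : ∑ k, ∑ l, p k l * (x ^ (k : ℕ) * (y ^ (l : ℕ) * z ^ (L - l)))
      ≡ ∑ k, ∑ l, p k l * (x ^ (k : ℕ) * ((w * z) ^ (l : ℕ) * z ^ (L - l))) [ZMOD q] :=
    Int.ModEq.sum fun k _ => Int.ModEq.sum fun l _ =>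
      (((hy.pow l).mul_right _).mul_left _).mul_left _
  have h3 : ∑ k, ∑ l, p k l * (x ^ (k : ℕ) * ((w * z) ^ (l : ℕ) * z ^ (L - l))) =
      (∑ k, ∑ l, p k l * (x ^ (k : ℕ) * w ^ (l : ℕ))) * z ^ L := by
    rw [Finset.sum_mul]
    refine Finset.sum_congr rfl fun k _ => ?_
    rw [Finset.sum_mul]
    refine Finset.sum_congr rfl fun l _ => ?_
    rw [mul_pow, mul_assoc (_ ^ (l : ℕ)), ← pow_add, Nat.add_sub_of_le l.isLt.le]
    ring
  refine h2.trans ?_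
  rw [h3, Int.modEq_zero_iff_dvd]
  exact hq.mul_right _

theorem sum_mul_div_pow_eq_zero {K L : ℕ} (p : Fin K → Fin L → ℤ) (x y z : ℤ) (hz : z ≠ 0)
    (h : ∑ k, ∑ l, p k l * (x ^ (k : ℕ) * (y ^ (l : ℕ) * z ^ (L - l))) = 0) :
    ∑ k, ∑ l, (p k l : ℚ) * ((x : ℚ) ^ (k : ℕ) * ((y : ℚ) / z) ^ (l : ℕ)) = 0 := by
  have hzq : (z : ℚ) ≠ 0 := by exact_mod_cast hz
  have hmul : (∑ k, ∑ l, (p k l : ℚ) * ((x : ℚ) ^ (k : ℕ) * ((y : ℚ) / z) ^ (l : ℕ))) *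
      (z : ℚ) ^ L = 0 := by
    have h' := congrArg (Int.cast : ℤ → ℚ) h
    rw [Int.cast_zero] at h'
    rw [← h', Finset.sum_mul]
    push_cast
    refine Finset.sum_congr rfl fun k _ => ?_
    rw [Finset.sum_mul]
    refine Finset.sum_congr rfl fun l _ => ?_
    have hzL : (z : ℚ) ^ L = (z : ℚ) ^ (l : ℕ) * (z : ℚ) ^ (L - l) := by
      rw [← pow_add, Nat.add_sub_of_le l.isLt.le]
    rw [hzL, div_pow]
    field_simp
  exact (mul_eq_zero.mp hmul).resolve_right (pow_ne_zero _ hzq)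

/-- The Schneider method in two variables: if `E g ^ n + F` were divisible by `2 ^ (3 M)`, the
auxiliary polynomial would vanish at too many points. -/
theorem not_two_pow_dvd_of_parameters (g E F X V : ℤ) (n K L T S M b : ℕ) (hg1 : 1 < g)
    (hg8 : 8 ∣ g - 1) (hE0 : E ≠ 0) (hF0 : F ≠ 0) (hK : 0 < K) (hTn : T ≤ n)
    (hpigeon : 3 * M * (K + M) < b * (K * L)) (hcard : L * (K - 1) < T * S) (hX : 1 ≤ X)
    (hx : ∀ t < T + L, ∀ s < S, ((t + s * n : ℕ) : ℤ) ≤ X)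
    (hy : ∀ t < T + L, ∀ s < S, g ^ t * |F| ^ s ≤ V) (hz : ∀ s < S, |E| ^ s ≤ V)
    (hsmall : (K * L : ℤ) * (2 ^ b * (X ^ K * V ^ L)) < 2 ^ (3 * M)) :
    ¬ (2 : ℤ) ^ (3 * M) ∣ E * g ^ n + F := by
  intro hdvd
  obtain ⟨p, hp0, hpb, hpd⟩ := exists_small_auxiliary_polynomial g hg8 K L M b hpigeon
  apply hp0
  have hcast : (fun k l => (p k l : ℚ)) = 0 := by
    refine zero_estimate (g : ℚ) (by exact_mod_cast hg1) (-F / E : ℚ)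
      (by simp [hE0, hF0]) n K L T S hTn hK hcard _ fun t ht s hs => ?_
    have hmod : g ^ t * (-F) ^ s ≡ g ^ (t + s * n) * E ^ s [ZMOD 2 ^ (3 * M)] := by
      have h1 : -F ≡ E * g ^ n [ZMOD 2 ^ (3 * M)] := by
        rw [Int.modEq_iff_dvd, sub_neg_eq_add]; exact hdvd
      calc g ^ t * (-F) ^ s ≡ g ^ t * (E * g ^ n) ^ s [ZMOD 2 ^ (3 * M)] := (h1.pow s).mul_left _
        _ = g ^ (t + s * n) * E ^ s := by rw [mul_pow, pow_add, mul_comm s n, pow_mul]; ring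
    have hzero := Int.eq_zero_of_abs_lt_dvd
      (dvd_sum_mul_pow_of_modEq p _ _ _ _ _ hmod (hpd (t + s * n)))
      ((abs_sum_mul_pow_le p (2 ^ b) X V _ _ _ hpb hX (by rw [Nat.abs_cast]; exact hx t ht s hs)
        (by rw [abs_mul, abs_pow, abs_pow, abs_neg, abs_of_pos (by omega : 0 < g)]
            exact hy t ht s hs)
        (by rw [abs_pow]; exact hz s hs)).trans_lt hsmall)
    have := sum_mul_div_pow_eq_zero p _ _ _ (pow_ne_zero s hE0) hzero
    rw [← this]
    push_cast
    simp only [div_pow, mul_div_assoc]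
  funext k l
  exact Int.cast_eq_zero.mp (congrFun (congrFun hcast k) l)

theorem not_two_pow_dvd_of_modEq_one (g E F : ℤ) (n G H N : ℕ) (hg1 : 1 < g) (hg8 : 8 ∣ g - 1)
    (hgG : g ≤ 2 ^ G) (hE0 : E ≠ 0) (hF0 : F ≠ 0) (hE : |E| ≤ 2 ^ H) (hF : |F| ≤ 2 ^ H)
    (hnN : n ≤ 2 ^ N) (hG : 0 < G) (hH : 0 < H) (hN : 0 < N)
    (hHn : 220 * (H * N) ≤ n) (hGn : 240 * (G * N) ≤ n) :
    ¬ (2 : ℤ) ^ (48000 * (G * H * N ^ 2)) ∣ E * g ^ n + F := by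
  have hx0 : 0 < G * H * N ^ 2 := by positivity
  have hqx : G * H * N ≤ G * H * N ^ 2 := by
    gcongr; exact Nat.le_self_pow (by norm_num) N
  have hNH : N ≤ H * N := Nat.le_mul_of_pos_left N hH
  have hb1 : (1 : ℤ) ≤ 2 ^ G := one_le_pow₀ (by norm_num)
  have hb2 : (1 : ℤ) ≤ 2 ^ H := one_le_pow₀ (by norm_num)
  rw [show 48000 * (G * H * N ^ 2) = 3 * (16000 * (G * H * N ^ 2)) by ring]
  refine not_two_pow_dvd_of_parameters g E F (2 ^ (2 * N))
    (2 ^ (G * (220 * (H * N)) + H * (240 * (G * N)))) n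
    (2400 * (G * H * N)) (20 * N) (200 * (H * N)) (240 * (G * N)) (16000 * (G * H * N ^ 2))
    (24000 * (G * H * N ^ 2)) hg1 hg8 hE0 hF0 (by positivity) (by omega) ?_ ?_
    (one_le_pow₀ (by norm_num)) ?_ ?_ ?_ ?_
  · rw [show 2400 * (G * H * N) * (20 * N) = 48000 * (G * H * N ^ 2) by ring]
    nlinarith
  · rw [show 200 * (H * N) * (240 * (G * N)) = 20 * N * (2400 * (G * H * N)) by ring]
    have : 0 < G * H * N := by positivity
    exact Nat.mul_lt_mul_of_pos_left (by omega) (by positivity)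
  · intro t ht s hs
    have h4 : t + s * n ≤ n * n := by
      have h5 : (s + 1) * n ≤ n * n := Nat.mul_le_mul_right n (by omega)
      have h6 : (s + 1) * n = s * n + n := by ring
      omega
    have h5 : n * n ≤ 2 ^ (2 * N) := by
      rw [two_mul, pow_add]; exact Nat.mul_le_mul hnN hnN
    exact_mod_cast h4.trans h5
  · intro t ht s hs
    have hg0 : 0 ≤ g := by omega
    rw [pow_add, pow_mul 2 G, pow_mul 2 H]
    exact mul_le_mul
      ((pow_le_pow_left₀ hg0 hgG t).trans (pow_le_pow_right₀ hb1 (by omega)))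
      ((pow_le_pow_left₀ (abs_nonneg F) hF s).trans (pow_le_pow_right₀ hb2 (by omega)))
      (by positivity) (by positivity)
  · intro s hs
    rw [pow_add, pow_mul 2 H]
    refine le_trans ?_ (le_mul_of_one_le_left (by positivity) (one_le_pow₀ (by norm_num)))
    exact (pow_le_pow_left₀ (abs_nonneg E) hE s).trans (pow_le_pow_right₀ hb2 (by omega))
  · have h6 : G * H * N ^ 2 < 2 ^ (G * H * N ^ 2) := Nat.lt_two_pow_self
    have h7 : 2 ^ 16 * 2 ^ (G * H * N ^ 2) ≤ 2 ^ (17 * (G * H * N ^ 2)) := by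
      rw [← pow_add]; exact Nat.pow_le_pow_right (by norm_num) (by omega)
    have h8 : 2400 * (G * H * N) * (20 * N) ≤ 2 ^ (17 * (G * H * N ^ 2)) := by
      rw [show 2400 * (G * H * N) * (20 * N) = 48000 * (G * H * N ^ 2) by ring]
      omega
    have h9 : (((2400 * (G * H * N) : ℕ) : ℤ) * ((20 * N : ℕ) : ℤ)) ≤
        2 ^ (17 * (G * H * N ^ 2)) := by exact_mod_cast h8
    refine lt_of_le_of_lt (mul_le_mul_of_nonneg_right h9 (by positivity)) ?_
    rw [← pow_mul, ← pow_mul, ← pow_add, ← pow_add, ← pow_add]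
    refine pow_lt_pow_right₀ (by norm_num) ?_
    have h10 : 2 * N * (2400 * (G * H * N)) = 4800 * (G * H * N ^ 2) := by ring
    have h11 : (G * (220 * (H * N)) + H * (240 * (G * N))) * (20 * N) =
      9200 * (G * H * N ^ 2) := by ring
    omega

/-- A lower bound for linear forms in two 2-adic logarithms. -/
theorem not_two_pow_dvd_mul_pow_add (g E F : ℤ) (n G H N : ℕ) (hg1 : 1 < |g|)
    (hgG : |g| ≤ 2 ^ G) (hE0 : E ≠ 0) (hF0 : F ≠ 0) (hE : |E| ≤ 2 ^ H) (hF : |F| ≤ 2 ^ H)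
    (hnN : n ≤ 2 ^ N) (hG : 0 < G) (hGH : G ≤ H) (hN : 0 < N)
    (hHn : 1000 * (G * H * N) ≤ n) :
    ¬ (2 : ℤ) ^ (192000 * (G * H * N ^ 2)) ∣ E * g ^ n + F := by
  intro hdvd
  have hH : 0 < H := by omega
  have hHx : H ≤ G * H * N := by
    calc H = 1 * H * 1 := by ring
      _ ≤ G * H * N := by gcongr <;> omega
  have hNx : H * N ≤ G * H * N := by nlinarith
  rcases Int.even_or_odd g with hev | hodd
  · have h1 : (2 : ℤ) ^ (H + 1) ∣ E * g ^ n :=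
      ((pow_dvd_pow 2 (by omega)).trans (pow_dvd_pow_of_dvd hev.two_dvd n)).mul_left _
    have h2 : (2 : ℤ) ^ (H + 1) ∣ E * g ^ n + F :=
      (pow_dvd_pow 2 (by
        have : G * H * N ≤ G * H * N ^ 2 := by
          gcongr; exact Nat.le_self_pow (by norm_num) N
        omega)).trans hdvd
    have h3 := (Int.dvd_add_right h1).mp h2
    refine hF0 (Int.eq_zero_of_abs_lt_dvd h3 (lt_of_le_of_lt hF ?_))
    exact pow_lt_pow_right₀ (by norm_num) (by omega)
  · have hsq : g ^ n = g ^ (n % 2) * (g ^ 2) ^ (n / 2) := by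
      rw [← pow_mul, ← pow_add, Nat.mod_add_div]
    have hg0 : g ≠ 0 := by rintro rfl; simp at hg1
    refine not_two_pow_dvd_of_modEq_one (g ^ 2) (E * g ^ (n % 2)) F (n / 2) (2 * G) (2 * H) N ?_
      (Int.eight_dvd_sq_sub_one_of_odd hodd) ?_ (mul_ne_zero hE0 (pow_ne_zero _ hg0)) hF0 ?_
      (hF.trans (pow_le_pow_right₀ (by norm_num) (by omega))) (by omega) (by omega) (by omega) hN
      ?_ ?_ ?_
    · rw [← sq_abs]; nlinarith
    · rw [← sq_abs, mul_comm 2 G, pow_mul]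
      exact pow_le_pow_left₀ (abs_nonneg _) hgG 2
    · rw [abs_mul, abs_pow, two_mul, pow_add]
      have h4 : |g| ^ (n % 2) ≤ 2 ^ H := by
        calc |g| ^ (n % 2) ≤ |g| ^ 1 := pow_le_pow_right₀ hg1.le (by omega)
          _ ≤ 2 ^ H := by
            rw [pow_one]; exact hgG.trans (pow_le_pow_right₀ (by norm_num) hGH)
      exact mul_le_mul hE h4 (by positivity) (by positivity)
    · have : 220 * (2 * H * N) = 440 * (H * N) := by ring
      omega
    · have : 240 * (2 * G * N) = 480 * (G * N) := by ring
      have : G * N ≤ G * H * N := by nlinarith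
      omega
    · rw [mul_assoc E, ← hsq]
      convert hdvd using 2
      ring

theorem pow_dvd_factorial_mul (q i : ℕ) (hq : 0 < q) : q ^ i ∣ (q * i).factorial := by
  induction i with
  | zero => simp
  | succ i ih =>
    obtain ⟨q, rfl⟩ : ∃ r, q = r + 1 := ⟨q - 1, by omega⟩
    rw [show (q + 1) * (i + 1) = (q + 1) * i + q + 1 by ring, Nat.factorial_succ, pow_succ,
      mul_comm (_ ^ i)]
    refine Nat.mul_dvd_mul ⟨i + 1, by ring⟩ (ih.trans (Nat.factorial_dvd_factorial (by omega)))

theorem pow_dvd_factorial (q i m : ℕ) (hq : 0 < q) (h : q * i ≤ m) : q ^ i ∣ m.factorial :=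
  (pow_dvd_factorial_mul q i hq).trans (Nat.factorial_dvd_factorial h)

theorem factorial_le_two_pow (m e b : ℕ) (hm : m ≤ 2 ^ e) (hb : m * e ≤ b) :
    m.factorial ≤ 2 ^ b := by
  calc m.factorial ≤ m ^ m := Nat.factorial_le_pow m
    _ ≤ (2 ^ e) ^ m := Nat.pow_le_pow_left hm m
    _ = 2 ^ (m * e) := by rw [← pow_mul, mul_comm]
    _ ≤ 2 ^ b := Nat.pow_le_pow_right (by norm_num) hb

theorem lt_of_factorial_dvd_mul_pow_add (g E F : ℤ) (n G H N m : ℕ) (hg1 : 1 < |g|)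
    (hgG : |g| ≤ 2 ^ G) (hE0 : E ≠ 0) (hF0 : F ≠ 0) (hE : |E| ≤ 2 ^ H) (hF : |F| ≤ 2 ^ H)
    (hnN : n ≤ 2 ^ N) (hG : 0 < G) (hGH : G ≤ H) (hN : 0 < N)
    (hHn : 1000 * (G * H * N) ≤ n) (hm : (m.factorial : ℤ) ∣ E * g ^ n + F) :
    m < 384000 * (G * H * N ^ 2) := by
  by_contra hlt
  refine not_two_pow_dvd_mul_pow_add g E F n G H N hg1 hgG hE0 hF0 hE hF hnN hG hGH hN hHn
    (dvd_trans ?_ hm)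
  exact_mod_cast pow_dvd_factorial 2 (192000 * (G * H * N ^ 2)) m (by norm_num) (by omega)

theorem lt_natAbs_mul_of_factorial_dvd_mul_pow_add (g E F : ℤ) (n H m : ℕ) (hg1 : 1 < |g|)
    (hF0 : F ≠ 0) (hF : |F| ≤ 2 ^ H) (hHn : H < n)
    (hm : (m.factorial : ℤ) ∣ E * g ^ n + F) : m < g.natAbs * (H + 1) := by
  by_contra hlt
  have hg2 : 2 ≤ g.natAbs := by zify; exact hg1
  have h1 : g ^ (H + 1) ∣ (m.factorial : ℤ) := by
    rw [← Int.natAbs_dvd, Int.natAbs_pow]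
    exact_mod_cast pow_dvd_factorial g.natAbs (H + 1) m (by omega) (by omega)
  have h2 : g ^ (H + 1) ∣ F :=
    (Int.dvd_add_right ((pow_dvd_pow g (by omega : H + 1 ≤ n)).mul_left E)).mp (h1.trans hm)
  have h3 : |g| ^ (H + 1) ∣ F := by rwa [← abs_pow, abs_dvd]
  refine hF0 (Int.eq_zero_of_abs_lt_dvd h3 (lt_of_le_of_lt hF ?_))
  calc (2 : ℤ) ^ H < 2 ^ (H + 1) := pow_lt_pow_right₀ (by norm_num) (by omega)
    _ ≤ |g| ^ (H + 1) := pow_le_pow_left₀ (by norm_num) (by omega) _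

theorem abs_sub_mul_le_two_pow (F D a : ℤ) (f H N B e : ℕ) (hF : |F| ≤ 2 ^ H) (hD : |D| ≤ 2 ^ N)
    (ha : |a| ≤ 2 ^ B) (hf : f ≤ 2 ^ e) (hH : 0 < H) (hN : 0 < N) :
    |F - D * (a * f)| ≤ 2 ^ (H + (N + B + e)) := by
  have hf' : |(f : ℤ)| ≤ 2 ^ e := by rw [Nat.abs_cast]; exact_mod_cast hf
  have h1 : |D * (a * f)| ≤ 2 ^ (N + B + e) := by
    rw [abs_mul, abs_mul, pow_add, pow_add, mul_assoc]
    gcongr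
  have h2 : (2 : ℤ) ≤ 2 ^ H := le_self_pow₀ (by norm_num) (by omega)
  have h3 : (2 : ℤ) ≤ 2 ^ (N + B + e) := le_self_pow₀ (by norm_num) (by omega)
  calc |F - D * (a * f)| ≤ |F| + |D * (a * f)| := abs_sub _ _
    _ ≤ 2 ^ H + 2 ^ (N + B + e) := add_le_add hF h1
    _ ≤ 2 ^ (H + (N + B + e)) := by rw [pow_add 2 H]; nlinarith

/-- A factorial dividing `E g ^ n + F`, with `E` and `F` polynomially bounded in `n`, is small. -/
theorem factorial_le_of_dvd_mul_pow_add (g E F : ℤ) (n G N m : ℕ) (hg1 : 1 < |g|)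
    (hgG : |g| ≤ 2 ^ G) (hE0 : E ≠ 0) (hF0 : F ≠ 0) (hE : |E| ≤ 2 ^ (2 * N))
    (hF : |F| ≤ 2 ^ (2 * N)) (hnN : n ≤ 2 ^ N) (hG : 0 < G) (hGN : G ≤ N)
    (hn : 768000 * (G * N ^ 3) ≤ n) (hm : (m.factorial : ℤ) ∣ E * g ^ n + F) :
    m.factorial ≤ 2 ^ (18432000 * (G ^ 2 * N ^ 3)) := by
  have hN : 0 < N := by omega
  have hN2 : N ^ 2 ≤ N ^ 3 := Nat.pow_le_pow_right hN (by norm_num)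
  have hN1 : N ≤ N ^ 2 := Nat.le_self_pow (by norm_num) N
  have hGN3 : N ^ 3 ≤ G * N ^ 3 := Nat.le_mul_of_pos_left _ hG
  have hGN2 : G * N ^ 3 ≤ G ^ 2 * N ^ 3 := by
    gcongr; exact Nat.le_self_pow (by norm_num) G
  have hlt := lt_of_factorial_dvd_mul_pow_add g E F n G (2 * N) N m hg1 hgG hE0 hF0 hE hF hnN hG
    (by omega) hN (by
      have h1 : G * (2 * N) * N ≤ 2 * (G * N ^ 3) := by
        calc G * (2 * N) * N = 2 * (G * N ^ 2) := by ring
          _ ≤ 2 * (G * N ^ 3) := by gcongr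
      omega) hm
  rw [show 384000 * (G * (2 * N) * N ^ 2) = 768000 * (G * N ^ 3) by ring] at hlt
  rcases le_or_gt g.natAbs N with hgN | hgN
  · have h2 := lt_natAbs_mul_of_factorial_dvd_mul_pow_add g E F n (2 * N) m hg1 hF0 hF
      (by omega) hm
    have h3 : m ≤ 3 * N ^ 2 := by nlinarith
    refine factorial_le_two_pow m N _ (by omega) ?_
    calc m * N ≤ 3 * N ^ 2 * N := by gcongr
      _ = 3 * N ^ 3 := by ring
      _ ≤ 18432000 * (G ^ 2 * N ^ 3) := by omega
  · have h4 : N ≤ 2 ^ G := by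
      have : g.natAbs ≤ 2 ^ G := by zify; exact hgG
      omega
    refine factorial_le_two_pow m (20 + G + 3 * G) _ ?_ ?_
    · calc m ≤ 2 ^ 20 * (G * N ^ 3) := by omega
        _ ≤ 2 ^ 20 * (2 ^ G * (2 ^ G) ^ 3) := by gcongr; exact Nat.lt_two_pow_self.le
        _ = 2 ^ (20 + G + 3 * G) := by ring
    · calc m * (20 + G + 3 * G) ≤ 768000 * (G * N ^ 3) * (24 * G) := by gcongr; omega
        _ = 18432000 * (G ^ 2 * N ^ 3) := by ring

/-- If `E g ^ n + F` is `D` times a combination of `k` decreasing factorials and no tail of the sum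
equals `F / D`, then `n log |g| < X ^ k`: the factorials are bounded one at a time from the
smallest to the largest. -/
theorem mul_log_lt_pow_of_eq_sum_factorial (g E F D : ℤ) (n G N B k : ℕ) (a : ℕ → ℤ)
    (m : ℕ → ℕ) (X : ℝ) (hg1 : 1 < |g|) (hgG : |g| ≤ 2 ^ G) (hE0 : E ≠ 0) (hE : |E| ≤ 2 ^ (2 * N))
    (hF : |F| ≤ 2 ^ (2 * N)) (hD : |D| ≤ 2 ^ N) (hnN : n ≤ 2 ^ N) (hGN : G ≤ N) (hk : 0 < k)
    (ha : ∀ i, 1 ≤ i → i ≤ k → |a i| ≤ 2 ^ B)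
    (hm : ∀ i, 1 ≤ i → i < k → m (i + 1) < m i)
    (heq : E * g ^ n + F = D * ∑ i ∈ Finset.Ioc 0 k, a i * ((m i).factorial : ℤ))
    (hne : ∀ j, 1 ≤ j → j ≤ k → F - D * ∑ i ∈ Finset.Ioc j k, a i * ((m i).factorial : ℤ) ≠ 0)
    (hX : Real.log 2 * (B + 2e7 * (G ^ 2 * N ^ 3)) < X) :
    (n : ℝ) * Real.log |(g : ℝ)| < X ^ k := by
  by_contra! hXn
  have hG : 0 < G := by
    rcases Nat.eq_zero_or_pos G with rfl | h
    · simp at hgG; omega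
    · exact h
  have hN : 0 < N := by omega
  have hl1 : (1 : ℝ) / 2 < Real.log 2 := by linarith [Real.log_two_gt_d9]
  have hl2 : Real.log 2 < 1 := by linarith [Real.log_two_lt_d9]
  have hGr : (1 : ℝ) ≤ G := by exact_mod_cast hG
  have hNr : (1 : ℝ) ≤ N := by exact_mod_cast hN
  have hBr : (0 : ℝ) ≤ B := by positivity
  have hlogg : Real.log |(g : ℝ)| ≤ G * Real.log 2 := by
    rw [← Real.log_pow]
    refine Real.log_le_log ?_ (by exact_mod_cast hgG)
    have : (1 : ℝ) < |(g : ℝ)| := by exact_mod_cast hg1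
    linarith
  have hGN3 : (1 : ℝ) ≤ G * N ^ 3 := one_le_mul_of_one_le_of_one_le hGr (one_le_pow₀ hNr)
  have hX' : Real.log 2 * B + 1e7 * (G ^ 2 * N ^ 3) < X := by
    have : (0 : ℝ) ≤ (G : ℝ) ^ 2 * N ^ 3 := by positivity
    nlinarith
  have hGG : (G : ℝ) * N ^ 3 ≤ G ^ 2 * N ^ 3 := by
    gcongr; exact le_self_pow₀ hGr (by norm_num)
  have hlB : 0 ≤ Real.log 2 * B := by positivity
  have hX1 : 1 ≤ X := by linarith
  have hmono : ∀ j, j ≤ k → ∀ i, 1 ≤ i → i ≤ j → m j ≤ m i := by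
    intro j hj i hi hij
    induction j, hij using Nat.le_induction with
    | base => exact le_rfl
    | succ j hij ih => exact (hm j (by omega) (by omega)).le.trans (ih (by omega))
  have hsplit : ∀ j, 1 ≤ j → j ≤ k → ∑ i ∈ Finset.Ioc (j - 1) k, a i * ((m i).factorial : ℤ) =
      a j * ((m j).factorial : ℤ) + ∑ i ∈ Finset.Ioc j k, a i * ((m i).factorial : ℤ) := by
    intro j hj hjk
    rw [← Finset.sum_Ioc_consecutive _ (Nat.sub_le j 1) hjk]
    congr 1
    obtain ⟨j, rfl⟩ : ∃ j', j = j' + 1 := ⟨j - 1, by omega⟩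
    simp
  have hdvd : ∀ j, 1 ≤ j → j ≤ k → ((m j).factorial : ℤ) ∣
      E * g ^ n + (F - D * ∑ i ∈ Finset.Ioc j k, a i * ((m i).factorial : ℤ)) := by
    intro j hj hjk
    rw [← add_sub_assoc, heq, ← mul_sub,
      ← Finset.sum_Ioc_consecutive _ (Nat.zero_le j) hjk, add_sub_cancel_right]
    refine Dvd.dvd.mul_left (Finset.dvd_sum fun i hi => Dvd.dvd.mul_left ?_ _) _
    rw [Finset.mem_Ioc] at hi
    exact_mod_cast Nat.factorial_dvd_factorial (hmono j hjk i (by omega) (by omega))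
  have hsize : ∀ (i H : ℕ), i + 1 ≤ k → Real.log 2 * H ≤ X ^ i → 1e7 * (G * N ^ 3 * H : ℝ) ≤ n := by
    intro i H hi hH
    have h1 : X * (Real.log 2 * H) ≤ n * (G * Real.log 2) := by
      calc X * (Real.log 2 * H) ≤ X * X ^ i := by gcongr
        _ = X ^ (i + 1) := by ring
        _ ≤ X ^ k := pow_le_pow_right₀ hX1 hi
        _ ≤ n * Real.log |(g : ℝ)| := hXn
        _ ≤ n * (G * Real.log 2) := by gcongr
    have h2 : X * H ≤ n * G := by
      have : Real.log 2 * (X * H) ≤ Real.log 2 * (n * G) := by linarith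
      exact le_of_mul_le_mul_left this (by linarith)
    have h3 : 1e7 * (G ^ 2 * N ^ 3) * H ≤ X * H := by gcongr; linarith
    have h4 : (1e7 * (G * N ^ 3 * H : ℝ)) * G ≤ n * G := by
      refine le_trans (le_of_eq ?_) (h3.trans h2); ring
    exact le_of_mul_le_mul_right h4 (by linarith)
  have main : ∀ i, i < k → ∃ H : ℕ, 2 * N ≤ H ∧
      |F - D * ∑ i ∈ Finset.Ioc (k - (i + 1)) k, a i * ((m i).factorial : ℤ)| ≤ 2 ^ H ∧
      Real.log 2 * H < X ^ (i + 1) := by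
    intro i
    induction i with
    | zero =>
      intro _
      have hn1 : 768000 * (G * N ^ 3) ≤ n := by
        have h := hsize 0 1 (by omega) (by simp; linarith)
        have : (768000 * (G * N ^ 3) : ℝ) ≤ n := by push_cast at h; linarith
        exact_mod_cast this
      have hF0 := hne k hk le_rfl
      have hd := hdvd k hk le_rfl
      simp only [Finset.Ioc_self, Finset.sum_empty, mul_zero, sub_zero] at hF0 hd
      have hf := factorial_le_of_dvd_mul_pow_add g E F n G N (m k) hg1 hgG hE0 hF0 hE hF hnN hG hGN
        hn1 hd
      refine ⟨2 * N + (N + B + 18432000 * (G ^ 2 * N ^ 3)), by omega, ?_, ?_⟩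
      · rw [zero_add, hsplit k hk le_rfl, Finset.Ioc_self, Finset.sum_empty, add_zero]
        exact abs_sub_mul_le_two_pow _ _ _ _ _ _ _ _ hF hD (ha k hk le_rfl) hf (by omega) hN
      · rw [zero_add, pow_one]
        refine lt_of_le_of_lt ?_ hX
        gcongr
        push_cast
        have h5 : (N : ℝ) ≤ G ^ 2 * N ^ 3 := by
          calc (N : ℝ) = 1 ^ 2 * N ^ 1 := by ring
            _ ≤ G ^ 2 * N ^ 3 := by gcongr <;> first | assumption | norm_num
        linarith
    | succ i ih =>
      intro hik
      obtain ⟨H, hNH, hFH, hlH⟩ := ih (by omega)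
      have hj1 : 1 ≤ k - (i + 1) := by omega
      have hjk : k - (i + 1) ≤ k := by omega
      have hbig : 10000000 * (G * N ^ 3 * H) ≤ n := by
        have h := hsize (i + 1) H (by omega) hlH.le
        have : (10000000 * (G * N ^ 3 * H) : ℝ) ≤ n := by linarith
        exact_mod_cast this
      have hN3 : G * H * N ≤ G * N ^ 3 * H := by
        calc G * H * N = G * N * H := by ring
          _ ≤ G * N ^ 3 * H := by gcongr; exact Nat.le_self_pow (by norm_num) N
      have hN4 : G * H * N ^ 2 ≤ G * N ^ 3 * H := by
        calc G * H * N ^ 2 = G * N ^ 2 * H := by ring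
          _ ≤ G * N ^ 3 * H := by gcongr <;> omega
      have hlt := lt_of_factorial_dvd_mul_pow_add g E _ n G H N (m (k - (i + 1))) hg1 hgG hE0
        (hne _ hj1 hjk) (hE.trans (pow_le_pow_right₀ (by norm_num) hNH)) hFH hnN hG (by omega) hN
        (by omega) (hdvd _ hj1 hjk)
      have hf := factorial_le_two_pow (m (k - (i + 1))) N (384000 * (G * N ^ 3 * H)) (by omega) (by
        calc m (k - (i + 1)) * N ≤ 384000 * (G * H * N ^ 2) * N := by gcongr
          _ = 384000 * (G * N ^ 3 * H) := by ring)
      refine ⟨H + (N + B + 384000 * (G * N ^ 3 * H)), by omega, ?_, ?_⟩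
      · rw [← Nat.sub_sub, hsplit _ hj1 hjk, mul_add, ← sub_sub, sub_right_comm]
        exact abs_sub_mul_le_two_pow _ _ _ _ _ _ _ _ hFH hD (ha _ hj1 hjk) hf (by omega) hN
      · have hXi : 1 ≤ X ^ (i + 1) := one_le_pow₀ hX1
        have hNG : (N : ℝ) ≤ G * N ^ 3 := by
          calc (N : ℝ) = 1 * N ^ 1 := by ring
            _ ≤ G * N ^ 3 := by gcongr <;> first | assumption | norm_num
        push_cast
        calc Real.log 2 * (H + (N + B + 384000 * (G * N ^ 3 * H)))
            = (Real.log 2 * H) * (1 + 384000 * (G * N ^ 3)) +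
              (Real.log 2 * N + Real.log 2 * B) * 1 := by ring
          _ ≤ X ^ (i + 1) * (1 + 384000 * (G * N ^ 3)) +
              (N + Real.log 2 * B) * X ^ (i + 1) := by
            gcongr
            exact mul_le_of_le_one_left (by linarith) hl2.le
          _ = X ^ (i + 1) * (1 + 384000 * (G * N ^ 3) + N + Real.log 2 * B) := by ring
          _ < X ^ (i + 1) * X := by
            refine mul_lt_mul_of_pos_left ?_ (by linarith)
            linarith
          _ = X ^ (i + 1 + 1) := by ring
  obtain ⟨H, -, hFH, hlH⟩ := main (k - 1) (by omega)
  rw [Nat.sub_add_cancel hk, Nat.sub_self] at hFH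
  rw [Nat.sub_add_cancel hk] at hlH
  have hgn : |g| ^ n ≤ 2 ^ H := by
    have h1 : F - D * ∑ i ∈ Finset.Ioc 0 k, a i * ((m i).factorial : ℤ) = -(E * g ^ n) := by
      rw [← heq]; ring
    rw [h1, abs_neg, abs_mul, abs_pow] at hFH
    exact (le_mul_of_one_le_left (by positivity) (Int.one_le_abs hE0)).trans hFH
  have hgn' : |(g : ℝ)| ^ n ≤ 2 ^ H := by exact_mod_cast hgn
  have hg1' : (1 : ℝ) < |(g : ℝ)| := by exact_mod_cast hg1
  have := Real.log_le_log (by positivity) hgn'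
  rw [Real.log_pow, Real.log_pow] at this
  linarith

theorem log_two_mul_clog_le (n : ℕ) (hn : n ≠ 0) :
    Real.log 2 * Nat.clog 2 n ≤ Real.log 2 + Real.log n := by
  have hn' : (0 : ℝ) < n := by positivity
  rcases Nat.eq_zero_or_pos (Nat.clog 2 n) with h | h
  · rw [h]
    have := Real.log_natCast_nonneg n
    have := Real.log_nonneg (one_le_two (α := ℝ))
    simp only [Nat.cast_zero, mul_zero]
    positivity
  · have h1 : 1 < n := by
      by_contra! h0
      rw [Nat.clog_of_right_le_one h0] at h
      exact h.false
    have h2 := Nat.pow_pred_clog_lt_self one_lt_two h1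
    have h3 : (2 : ℝ) ^ Nat.clog 2 n ≤ 2 * n := by
      obtain ⟨t, ht⟩ := Nat.exists_eq_succ_of_ne_zero h.ne'
      rw [ht] at h2 ⊢
      rw [pow_succ, mul_comm]
      have : ((2 : ℝ)) ^ t ≤ n := by exact_mod_cast h2.le
      linarith
    have h4 := Real.log_le_log (by positivity) h3
    rw [Real.log_pow, Real.log_mul (by norm_num) hn'.ne'] at h4
    linarith

theorem natCast_lt_of_eq_sum_factorial (g E F D Y : ℤ) (n A k : ℕ) (a : ℕ → ℤ) (m : ℕ → ℕ)
    (hY : 11 ≤ Y) (hYn : Y ≤ n) (hg1 : 1 < |g|) (hgY : |g| ≤ Y) (hE0 : E ≠ 0)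
    (hE : |E| ≤ (n : ℤ) ^ 2) (hF : |F| ≤ (n : ℤ) ^ 2) (hD : |D| ≤ n) (hk : 0 < k) (hA : 0 < A)
    (ha : ∀ i, 1 ≤ i → i ≤ k → |a i| ≤ A)
    (hm : ∀ i, 1 ≤ i → i < k → m (i + 1) < m i)
    (heq : E * g ^ n + F = D * ∑ i ∈ Finset.Ioc 0 k, a i * ((m i).factorial : ℤ))
    (hne : ∀ j, 1 ≤ j → j ≤ k →
      F - D * ∑ i ∈ Finset.Ioc j k, a i * ((m i).factorial : ℤ) ≠ 0) :
    (n : ℝ) < (1 / Real.log ((|g| : ℤ) : ℝ)) *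
      (Real.log (4 * A) + 10.49 * (2.02e12 * Real.log (Y : ℝ) ^ 2) * Real.log n ^ 3) ^ k := by
  lift Y to ℕ using by omega
  have hlog2 : 0.69 < Real.log 2 := by linarith [Real.log_two_gt_d9]
  have hlog2' : Real.log 2 < 0.7 := by linarith [Real.log_two_lt_d9]
  have hY' : (11 : ℝ) ≤ Y := by exact_mod_cast hY
  have hlogY : 2 ≤ Real.log Y := by
    have h1 : Real.log ((2 : ℝ) ^ 3) ≤ Real.log Y :=
      Real.log_le_log (by norm_num) (by linarith)
    rw [Real.log_pow] at h1
    push_cast at h1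
    linarith
  have hlogn : Real.log Y ≤ Real.log n :=
    Real.log_le_log (by linarith) (by exact_mod_cast hYn)
  have hn2 : (n : ℤ) ≤ 2 ^ Nat.clog 2 n := by exact_mod_cast Nat.le_pow_clog one_lt_two n
  have hG : (Nat.clog 2 Y : ℝ) ≤ 2 * Real.log Y := by
    have := log_two_mul_clog_le Y (by omega)
    nlinarith
  have hN : (Nat.clog 2 n : ℝ) ≤ 2 * Real.log n := by
    have := log_two_mul_clog_le n (by omega)
    nlinarith
  have hB := log_two_mul_clog_le A hA.ne'
  have hA' : (0 : ℝ) < A := by exact_mod_cast hA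
  have h4A : Real.log (4 * A) = 2 * Real.log 2 + Real.log A := by
    rw [Real.log_mul (by norm_num) hA'.ne', show (4 : ℝ) = 2 ^ 2 by norm_num, Real.log_pow]
    norm_num
  have hn22 : (n : ℤ) ^ 2 ≤ 2 ^ (2 * Nat.clog 2 n) := by
    rw [mul_comm, pow_mul]
    gcongr
  have key := mul_log_lt_pow_of_eq_sum_factorial g E F D n (Nat.clog 2 Y) (Nat.clog 2 n)
    (Nat.clog 2 A) k a m
    (Real.log (4 * A) + 10.49 * (2.02e12 * Real.log (Y : ℝ) ^ 2) * Real.log n ^ 3) hg1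
    (hgY.trans (by exact_mod_cast Nat.le_pow_clog one_lt_two Y)) hE0 (hE.trans hn22)
    (hF.trans hn22) (hD.trans hn2) (by exact_mod_cast hn2)
    (Nat.clog_mono_right 2 (by exact_mod_cast hYn)) hk
    (fun i hi hik => (ha i hi hik).trans (by exact_mod_cast Nat.le_pow_clog one_lt_two A))
    hm heq hne ?_
  · have hg : 0 < Real.log |(g : ℝ)| := Real.log_pos (by exact_mod_cast hg1)
    rw [Int.cast_abs, one_div, inv_mul_eq_div, lt_div_iff₀ hg]
    exact_mod_cast key
  · have h1 : (Nat.clog 2 Y : ℝ) ^ 2 * (Nat.clog 2 n : ℝ) ^ 3 ≤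
        (2 * Real.log Y) ^ 2 * (2 * Real.log n) ^ 3 := by gcongr
    have h2 : 0 ≤ Real.log Y ^ 2 * Real.log n ^ 3 := by positivity
    have h3 : Real.log 2 * (2e7 * ((Nat.clog 2 Y : ℝ) ^ 2 * (Nat.clog 2 n : ℝ) ^ 3)) ≤
        0.7 * (2e7 * ((2 * Real.log Y) ^ 2 * (2 * Real.log n) ^ 3)) := by gcongr
    rw [h4A]
    nlinarith

/-- Sizes of the coefficients of `(a n + c) α ^ n + b β ^ n` after multiplication by the common
denominator `D`, in terms of the first three values. -/
theorem abs_cleared_coefficients_le (α β u₀ u₁ u₂ Y D v b' c' d' : ℤ) (hY11 : 11 ≤ Y)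
    (hαY : |α| ≤ Y) (hβY : |β| ≤ Y) (hu0Y : |u₀| ≤ Y) (hu1Y : |u₁| ≤ Y) (hu2Y : |u₂| ≤ Y)
    (hD : D = (β - α) ^ 2 * α) (hv : v = u₂ - 2 * α * u₁ + α ^ 2 * u₀) (hb' : b' = α * v)
    (hc' : c' = D * u₀ - b') (hd' : d' = (β - α) ^ 2 * u₁ - β * v - c') :
    |D| ≤ 4 * Y ^ 3 ∧ |b'| ≤ 4 * Y ^ 4 ∧ |c'| ≤ 8 * Y ^ 4 ∧ |d'| ≤ 16 * Y ^ 4 := by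
  have hY0 : (0 : ℤ) ≤ Y := by omega
  have hq : |(β - α) ^ 2| ≤ 4 * Y ^ 2 := by
    rw [abs_pow]
    have h1 : |β - α| ≤ 2 * Y := (abs_sub _ _).trans (by omega)
    calc |β - α| ^ 2 ≤ (2 * Y) ^ 2 := by gcongr
      _ = 4 * Y ^ 2 := by ring
  have hDY : |D| ≤ 4 * Y ^ 3 := by
    rw [hD, abs_mul]
    calc _ ≤ 4 * Y ^ 2 * Y := by gcongr
      _ = _ := by ring
  have hvY : |v| ≤ 4 * Y ^ 3 := by
    have h1 : |2 * α * u₁| ≤ 2 * Y * Y := by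
      rw [abs_mul, abs_mul, abs_two]; gcongr
    have h2 : |α ^ 2 * u₀| ≤ Y ^ 2 * Y := by
      rw [abs_mul, abs_pow]; gcongr
    rw [hv]
    have h3 := abs_add_le (u₂ - 2 * α * u₁) (α ^ 2 * u₀)
    have h4 := abs_sub (u₂) (2 * α * u₁)
    nlinarith [mul_nonneg hY0 hY0, mul_nonneg (mul_nonneg hY0 hY0) hY0]
  have hbY : |b'| ≤ 4 * Y ^ 4 := by
    rw [hb', abs_mul]
    calc _ ≤ Y * (4 * Y ^ 3) := by gcongr
      _ = _ := by ring
  have hcY : |c'| ≤ 8 * Y ^ 4 := by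
    have h1 : |D * u₀| ≤ 4 * Y ^ 3 * Y := by rw [abs_mul]; gcongr
    rw [hc']
    have := abs_sub (D * u₀) b'
    linarith
  have hdY : |d'| ≤ 16 * Y ^ 4 := by
    have h1 : |(β - α) ^ 2 * u₁| ≤ 4 * Y ^ 2 * Y := by rw [abs_mul]; gcongr
    have h2 : |β * v| ≤ Y * (4 * Y ^ 3) := by rw [abs_mul]; gcongr
    have h3 := abs_sub ((β - α) ^ 2 * u₁ - β * v) c'
    have h4 := abs_sub ((β - α) ^ 2 * u₁) (β * v)
    rw [hd']
    nlinarith [pow_nonneg hY0 3]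
  exact ⟨hDY, hbY, hcY, hdY⟩

set_option maxHeartbeats 1000000 in
/-- Lemma (finiteness of representations): with notation as in the context,
`c₁ = Y⁸`, `c₂ = 2.02·10¹² (log Y)²`, `γ = max{|α|, |β|}`. If `u_n = a₁ m₁! + ⋯ + a_k m_k!`
with `|aᵢ| ≤ A`, `m₁ > m₂ > ⋯ > m_k ≥ 1`, and no partial sum `Σ_{i=j₁}^{j₂} aᵢ mᵢ!`
equals `(a n + c) α^n` or `b β^n`, then either `n ≤ c₁` or
`n < (1/log γ)(log 4A + 10.49 c₂ (log n)³)^k`; in particular `n ≤ max{c₁, n₀}` for `n₀`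
the largest positive integer solution of that inequality. -/
theorem finitely_many_factorial_representations
    (r₁ r₂ r₃ : ℤ) (hr₁ : r₁ ≠ 0) (hr₂ : r₂ ≠ 0) (hr₃ : r₃ ≠ 0)
    (α β : ℤ)
    (hpoly : ∀ X : ℤ, X ^ 3 - r₁ * X ^ 2 - r₂ * X - r₃ = (X - α) ^ 2 * (X - β))
    (hone : α = 1 ∨ β = 1) (hαβ : α ≠ β) (hαβ' : α ≠ -β)
    (u : ℕ → ℤ)
    (hrec : ∀ n, 3 ≤ n → u n = r₁ * u (n - 1) + r₂ * u (n - 2) + r₃ * u (n - 3))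
    (a b c : ℚ) (ha : a ≠ 0)
    (hu : ∀ n : ℕ, (u n : ℚ) = (a * n + c) * (α : ℚ) ^ n + b * (β : ℚ) ^ n)
    (Y : ℤ)
    (hY : Y = max (max (max |r₁| |r₂|) (max |r₃| |u 0|)) (max (max |u 1| |u 2|) 11))
    (c₂ : ℝ) (hc₂ : c₂ = 2.02e12 * (Real.log (Y : ℝ)) ^ 2)
    (γ : ℤ) (hγ : γ = max |α| |β|)
    (k A : ℕ) (hk : 0 < k) (hA : 0 < A)
    (a' : ℕ → ℤ) (m : ℕ → ℕ)
    (haA : ∀ i, 1 ≤ i → i ≤ k → |a' i| ≤ (A : ℤ))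
    (hmdec : ∀ i, 1 ≤ i → i < k → m (i + 1) < m i) (hmk : 1 ≤ m k)
    (n : ℕ)
    (heq : u n = ∑ i ∈ Finset.Icc 1 k, a' i * (Nat.factorial (m i) : ℤ))
    (hnd : ∀ j₁ j₂, 1 ≤ j₁ → j₁ ≤ j₂ → j₂ ≤ k →
      (∑ i ∈ Finset.Icc j₁ j₂, (a' i : ℚ) * (Nat.factorial (m i) : ℚ))
          ≠ (a * n + c) * (α : ℚ) ^ n ∧
      (∑ i ∈ Finset.Icc j₁ j₂, (a' i : ℚ) * (Nat.factorial (m i) : ℚ))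
          ≠ b * (β : ℚ) ^ n) :
    ((n : ℤ) ≤ Y ^ 8 ∨
      (n : ℝ) < (1 / Real.log (γ : ℝ)) *
        (Real.log (4 * A) + 10.49 * c₂ * (Real.log n) ^ 3) ^ k) ∧
    ∀ n₀ : ℕ, IsGreatest {ν : ℕ | 0 < ν ∧ (ν : ℝ) < (1 / Real.log (γ : ℝ)) *
        (Real.log (4 * A) + 10.49 * c₂ * (Real.log ν) ^ 3) ^ k} n₀ →
      (n : ℤ) ≤ max (Y ^ 8) (n₀ : ℤ) := by
  have hY11 : 11 ≤ Y := by rw [hY]; simp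
  suffices hmain : Y ^ 8 < (n : ℤ) → (n : ℝ) < (1 / Real.log (γ : ℝ)) *
        (Real.log (4 * A) + 10.49 * c₂ * (Real.log n) ^ 3) ^ k by
    refine ⟨(le_or_gt (n : ℤ) (Y ^ 8)).imp id hmain, fun n₀ hn₀ => ?_⟩
    rcases le_or_gt (n : ℤ) (Y ^ 8) with h | h
    · exact le_max_of_le_left h
    · have hn : 0 < n := by
        have : 0 < Y ^ 8 := by positivity
        omega
      exact le_max_of_le_right (by exact_mod_cast hn₀.2 ⟨hn, hmain h⟩)
  intro hYn
  have hr3 : r₃ = α ^ 2 * β := by linear_combination -(hpoly 0)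
  have hα0 : α ≠ 0 := by rintro rfl; simp at hr3; exact hr₃ hr3
  have hβ0 : β ≠ 0 := by rintro rfl; simp at hr3; exact hr₃ hr3
  have hrY : |r₃| ≤ Y := by rw [hY]; simp
  have hu0Y : |u 0| ≤ Y := by rw [hY]; simp
  have hu1Y : |u 1| ≤ Y := by rw [hY]; simp
  have hu2Y : |u 2| ≤ Y := by rw [hY]; simp
  have hαY : |α| ≤ Y := (Int.le_of_dvd (abs_pos.mpr hr₃)
    ((abs_dvd_abs _ _).mpr ⟨α * β, by rw [hr3]; ring⟩)).trans hrY
  have hβY : |β| ≤ Y := (Int.le_of_dvd (abs_pos.mpr hr₃)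
    ((abs_dvd_abs _ _).mpr ⟨α ^ 2, by rw [hr3]; ring⟩)).trans hrY
  have hα1 : 1 ≤ |α| := Int.one_le_abs hα0
  have hβ1 : 1 ≤ |β| := Int.one_le_abs hβ0
  obtain ⟨D, hD⟩ : ∃ D : ℤ, D = (β - α) ^ 2 * α := ⟨_, rfl⟩
  obtain ⟨v, hv⟩ : ∃ v : ℤ, v = u 2 - 2 * α * u 1 + α ^ 2 * u 0 := ⟨_, rfl⟩
  obtain ⟨b', hb'⟩ : ∃ b' : ℤ, b' = α * v := ⟨_, rfl⟩
  obtain ⟨c', hc'⟩ : ∃ c' : ℤ, c' = D * u 0 - b' := ⟨_, rfl⟩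
  obtain ⟨d', hd'⟩ : ∃ d' : ℤ, d' = (β - α) ^ 2 * u 1 - β * v - c' := ⟨_, rfl⟩
  have e0 := hu 0
  have e1 := hu 1
  have e2 := hu 2
  norm_num at e0 e1 e2
  have hDQ : (D : ℚ) = ((β : ℚ) - α) ^ 2 * α := by rw [hD]; push_cast; ring
  have hvQ : (v : ℚ) = ((β : ℚ) - α) ^ 2 * b := by
    rw [hv]; push_cast; rw [e0, e1, e2]; ring
  have hbQ : (D : ℚ) * b = b' := by rw [hb']; push_cast; rw [hvQ, hDQ]; ring
  have hcQ : (D : ℚ) * c = c' := by rw [hc']; push_cast; rw [← hbQ, e0]; ring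
  have haQ : (D : ℚ) * a = d' := by
    rw [hd']; push_cast; rw [← hcQ, hvQ, hDQ, e1]; ring
  have hD0 : D ≠ 0 := by
    rw [hD]
    exact mul_ne_zero (pow_ne_zero 2 (sub_ne_zero.mpr hαβ.symm)) hα0
  have hD0' : (D : ℚ) ≠ 0 := by exact_mod_cast hD0
  have hY0 : (0 : ℤ) ≤ Y := by omega
  obtain ⟨hDY, hbY, hcY, hdY⟩ := abs_cleared_coefficients_le α β (u 0) (u 1) (u 2) Y D v b' c' d'
    hY11 hαY hβY hu0Y hu1Y hu2Y hD hv hb' hc' hd'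
  have hY4 : 24 * Y ^ 4 ≤ Y ^ 8 := by
    have : 24 ≤ Y ^ 4 := by
      calc (24 : ℤ) ≤ 11 ^ 4 := by norm_num
        _ ≤ Y ^ 4 := by gcongr
    calc 24 * Y ^ 4 ≤ Y ^ 4 * Y ^ 4 := by gcongr
      _ = Y ^ 8 := by ring
  have hY34 : Y ^ 3 ≤ Y ^ 4 := pow_le_pow_right₀ (by omega) (by norm_num)
  have hYn1 : Y ≤ n := (le_self_pow₀ (by omega) (by norm_num : 8 ≠ 0)).trans hYn.le
  have hYp : 0 ≤ Y ^ 4 := pow_nonneg hY0 4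
  have hDn : |D| ≤ n := by linarith
  have hbn : |b'| ≤ (n : ℤ) ^ 2 := by
    have : (n : ℤ) ≤ (n : ℤ) ^ 2 := le_self_pow₀ (by omega) two_ne_zero
    linarith
  have hln : |d' * n + c'| ≤ (n : ℤ) ^ 2 := by
    have h1 := abs_add_le (d' * n) c'
    rw [abs_mul, Nat.abs_cast] at h1
    have h2 : |d'| * (n : ℤ) ≤ 16 * Y ^ 4 * n := by gcongr
    have h3 : Y ^ 4 * 1 ≤ Y ^ 4 * n := mul_le_mul_of_nonneg_left (by omega) hYp
    have h4 : 24 * Y ^ 4 * n ≤ n * n :=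
      mul_le_mul_of_nonneg_right (hY4.trans hYn.le) (by omega)
    linarith
  have hsum : (u n : ℚ) = ∑ i ∈ Finset.Icc 1 k, (a' i : ℚ) * ((m i).factorial : ℚ) := by
    exact_mod_cast heq
  have hfull := hnd 1 k le_rfl hk le_rfl
  rw [← hsum, hu n] at hfull
  have hb0 : b' ≠ 0 := by
    rintro rfl
    have : b = 0 := by simpa [hD0'] using hbQ
    exact hfull.1 (by rw [this]; ring)
  have hl : (D : ℚ) * (a * n + c) = ((d' * n + c' : ℤ) : ℚ) := by
    push_cast; rw [← haQ, ← hcQ]; ring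
  have hl0 : d' * n + c' ≠ 0 := by
    intro h0
    rw [h0] at hl
    have : a * n + c = 0 := by simpa [hD0'] using hl
    exact hfull.2 (by rw [this]; ring)
  have hDu : (d' * n + c') * α ^ n + b' * β ^ n =
      D * ∑ i ∈ Finset.Ioc 0 k, a' i * ((m i).factorial : ℤ) := by
    have h1 : (D : ℚ) * u n = ((d' * n + c' : ℤ) : ℚ) * (α : ℚ) ^ n + b' * (β : ℚ) ^ n := by
      rw [hu n, ← hl, ← hbQ]; ring
    rw [← Finset.Icc_add_one_left_eq_Ioc, zero_add, ← heq]
    exact_mod_cast h1.symm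
  have hpart : ∀ (F : ℤ) (x : ℚ), F ≠ 0 → (D : ℚ) * x = F →
      (∀ j, 1 ≤ j → j ≤ k →
        ∑ i ∈ Finset.Icc j k, (a' i : ℚ) * ((m i).factorial : ℚ) ≠ x) →
      ∀ j, 1 ≤ j → j ≤ k →
        F - D * ∑ i ∈ Finset.Ioc j k, a' i * ((m i).factorial : ℤ) ≠ 0 := by
    intro F x hF0 hx hne j hj hjk h0
    rcases hjk.eq_or_lt with rfl | hlt
    · simp at h0; exact hF0 h0
    · refine hne (j + 1) (by omega) hlt (mul_left_cancel₀ hD0' ?_)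
      rw [hx, Finset.Icc_add_one_left_eq_Ioc]
      exact_mod_cast (sub_eq_zero.mp h0).symm
  rw [hc₂]
  rcases hone with h1 | h1
  · have hγβ : γ = |β| := by rw [hγ, h1, abs_one, max_eq_right hβ1]
    have hg1 : 1 < |β| := by
      rcases abs_cases β with ⟨h, _⟩ | ⟨h, _⟩ <;> omega
    rw [hγβ]
    refine natCast_lt_of_eq_sum_factorial β b' (d' * n + c') D Y n A k a' m hY11 hYn1 hg1 hβY
      hb0 hbn hln hDn hk hA haA hmdec ?_
      (hpart _ _ hl0 hl fun j hj hjk => ?_)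
    · rw [← hDu, h1]; ring
    · have := (hnd j k hj hjk le_rfl).1
      simpa [h1] using this
  · have hγα : γ = |α| := by rw [hγ, h1, abs_one, max_eq_left hα1]
    have hg1 : 1 < |α| := by
      rcases abs_cases α with ⟨h, _⟩ | ⟨h, _⟩ <;> omega
    rw [hγα]
    refine natCast_lt_of_eq_sum_factorial α (d' * n + c') b' D Y n A k a' m hY11 hYn1 hg1 hαY
      hl0 hln hbn hDn hk hA haA hmdec ?_
      (hpart _ _ hb0 hbQ fun j hj hjk => ?_)
    · rw [← hDu, h1]; ring
    · have := (hnd j k hj hjk le_rfl).2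
      simpa [h1] using this
end

section
/- Let C_n = n·2^n + 1 and let S denote the set of positive integers all of whose prime factors lie in {2, 3, 5, 7}. Suppose n, m₁, m₂ are positive integers with m₁ ≥ m₂ and s ∈ S satisfy C_n = m₁! + m₂! + s, and suppose the solution is non-degenerate, i.e., none of the three quantities m₁!, m₂!, and m₁! + m₂! is equal to n·2^n or to 1. Then (n, m₁, m₂, s) is one of the seven tuples (2, 2, 2, 5), (3, 2, 2, 21), (4, 4, 3, 35), (5, 4, 2, 135), (5, 5, 3, 35), (7, 6, 2, 175), (8, 6, 3, 1323). -/
section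

open Polynomial Finset

theorem pow_dvd_fwdDiff_iter_pow_mul_pow {p w : ℤ} (hw : p ∣ w - 1) (k j t : ℕ) :
    p ^ (j - k) ∣ (fwdDiff (1 : ℕ))^[j] (fun t : ℕ => (t : ℤ) ^ k * w ^ t) t := by
  induction j generalizing k t with
  | zero => simp
  | succ j ih =>
    have key : fwdDiff (1 : ℕ) (fun t : ℕ => (t : ℤ) ^ k * w ^ t) =
        (w - 1) • (fun t : ℕ => (t : ℤ) ^ k * w ^ t) +
          ∑ i ∈ range k, (w * k.choose i) • (fun t : ℕ => (t : ℤ) ^ i * w ^ t) := by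
      funext t
      simp only [fwdDiff, Pi.add_apply, Pi.smul_apply, smul_eq_mul, Finset.sum_apply,
        Nat.cast_add, Nat.cast_one, add_pow, one_pow, mul_one, sum_range_succ,
        Nat.choose_self, pow_succ, sum_mul, add_mul]
      have : ∑ i ∈ range k, w * (k.choose i : ℤ) * ((t : ℤ) ^ i * w ^ t) =
          ∑ i ∈ range k, (t : ℤ) ^ i * (k.choose i : ℤ) * (w ^ t * w) :=
        sum_congr rfl fun i _ => by ring
      rw [this]
      ring
    rw [Function.iterate_succ_apply, key, fwdDiff_iter_add, fwdDiff_iter_finsetSum,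
      fwdDiff_iter_const_smul]
    simp only [fwdDiff_iter_const_smul, Pi.add_apply, Pi.smul_apply, smul_eq_mul,
      Finset.sum_apply]
    refine dvd_add ?_ (dvd_sum fun i hi => Dvd.dvd.mul_left ?_ _)
    · refine (pow_dvd_pow p (show j + 1 - k ≤ (j - k) + 1 by omega)).trans ?_
      rw [pow_succ']
      exact mul_dvd_mul hw (ih k t)
    · have := mem_range.1 hi
      exact (pow_dvd_pow p (show j + 1 - k ≤ j - i by omega)).trans (ih i t)

/-- A pigeonhole principle for systems of linear congruences. -/
theorem exists_small_solution_of_congruences {ι κ : Type*} [Fintype ι] [DecidableEq ι] [Fintype κ]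
    (p X : ℕ) [NeZero p] (w : κ → ℕ) (q : κ → ι → ℤ)
    (hX : p ^ (∑ j, w j) < X ^ Fintype.card ι) :
    ∃ c : ι → ℤ, c ≠ 0 ∧ (∀ i, |c i| ≤ X) ∧ ∀ j, (p : ℤ) ^ w j ∣ ∑ i, c i * q j i := by
  classical
  let f : (ι → Fin X) → (∀ j : κ, ZMod (p ^ w j)) :=
    fun c j => ((∑ i, ((c i : ℕ) : ℤ) * q j i : ℤ) : ZMod (p ^ w j))
  have hcard : Fintype.card (∀ j : κ, ZMod (p ^ w j)) < Fintype.card (ι → Fin X) := by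
    simpa [Fintype.card_pi, ZMod.card, prod_pow_eq_pow_sum] using hX
  obtain ⟨a, b, hab, hf⟩ := Fintype.exists_ne_map_eq_of_card_lt f hcard
  refine ⟨fun i => ((a i : ℕ) : ℤ) - ((b i : ℕ) : ℤ), ?_, ?_, ?_⟩
  · intro h
    apply hab
    funext i
    have := congrFun h i
    simp only [Pi.zero_apply] at this
    exact Fin.ext (by omega)
  · intro i
    have h1 := (a i).isLt
    have h2 := (b i).isLt
    exact abs_le.2 ⟨by dsimp only; omega, by dsimp only; omega⟩
  · intro j
    have := congrFun hf j
    have h := ((ZMod.intCast_eq_intCast_iff_dvd_sub _ _ _).1 this.symm)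
    simp only [sub_mul, sum_sub_distrib]
    exact_mod_cast h

theorem coeff_prod_sum_of_natDegree_le {R ι : Type*} [CommRing R] (s : Finset ι) (f : ι → R[X])
    (d : ι → ℕ) (h : ∀ i ∈ s, (f i).natDegree ≤ d i) :
    (∏ i ∈ s, f i).coeff (∑ i ∈ s, d i) = ∏ i ∈ s, (f i).coeff (d i) := by
  classical
  induction s using Finset.induction_on with
  | empty => simp
  | insert a s ha ih =>
    rw [prod_insert ha, sum_insert ha, prod_insert ha,
      coeff_mul_add_eq_of_natDegree_le (h a (mem_insert_self a s))
        ((natDegree_prod_le s f).trans (sum_le_sum fun i hi => h i (mem_insert_of_mem hi))),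
      ih fun i hi => h i (mem_insert_of_mem hi)]

/-- An exponential polynomial `∑ l, P l (X) * Y ^ l` with `Y` multiplied by `g` as `X` is shifted
by `1` vanishes identically as soon as it has sufficiently many runs of zeros. -/
theorem eq_zero_of_many_runs_of_zeros {L D : ℕ} (P : Fin L → ℚ[X])
    (hdeg : ∀ l, (P l).natDegree ≤ D) {g : ℚ} (hg : 1 < g) {F : Type*} [Fintype F]
    (t u : F → ℚ) (ht : Function.Injective t) (hu : ∀ f, u f ≠ 0)
    (hcard : D * L < Fintype.card F)
    (hzero : ∀ f, ∀ e : ℕ, e < L → ∑ l, (P l).eval (t f + e) * (g ^ e * u f) ^ (l : ℕ) = 0) :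
    P = 0 := by
  classical
  by_contra hP
  obtain ⟨l₀, hl₀⟩ : ∃ l, P l ≠ 0 := by
    by_contra! h
    exact hP (funext h)
  let Q : Fin L → ℚ[X] := fun l => if P l = 0 then 1 else P l
  have hQ0 : ∀ l, Q l ≠ 0 := fun l => by
    by_cases h : P l = 0 <;> simp [Q, h]
  have hQdeg : ∀ l, (Q l).natDegree ≤ D := fun l => by
    by_cases h : P l = 0
    · simp [Q, h]
    · simpa [Q, h] using hdeg l
  let M : Matrix (Fin L) (Fin L) ℚ[X] :=
    Matrix.of fun e l => (Q l).comp (X + C ((e : ℕ) : ℚ)) * C ((g ^ (e : ℕ)) ^ (l : ℕ))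
  have hcompdeg : ∀ (e : ℚ) l, ((Q l).comp (X + C e)).natDegree = (Q l).natDegree := fun e l => by
    rw [natDegree_comp, natDegree_X_add_C, mul_one]
  have hMdeg : ∀ e l, (M e l).natDegree ≤ (Q l).natDegree := fun e l => by
    simp only [M, Matrix.of_apply]
    exact (natDegree_mul_C_le _ _).trans (hcompdeg _ l).le
  have hMcoeff : ∀ e l, (M e l).coeff (Q l).natDegree =
      (Q l).leadingCoeff * (g ^ (e : ℕ)) ^ (l : ℕ) := fun e l => by
    simp only [M, Matrix.of_apply, coeff_mul_C]
    congr 1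
    have h2 := leadingCoeff_comp (p := Q l) (q := X + C ((e : ℕ) : ℚ))
      (by rw [natDegree_X_add_C]; exact one_ne_zero)
    rw [leadingCoeff_X_add_C, one_pow, mul_one] at h2
    rw [← h2, leadingCoeff, hcompdeg]
  have hcoeff : M.det.coeff (∑ l, (Q l).natDegree) =
      (Matrix.of fun e l : Fin L => (Q l).leadingCoeff *
        Matrix.vandermonde (fun e : Fin L => g ^ (e : ℕ)) e l).det := by
    rw [Matrix.det_apply', Matrix.det_apply', finsetSum_coeff]
    refine sum_congr rfl fun σ _ => ?_
    rw [← C_eq_intCast, coeff_C_mul,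
      coeff_prod_sum_of_natDegree_le univ _ _ fun l _ => hMdeg (σ l) l]
    congr 1
    exact prod_congr rfl fun l _ => by simp [hMcoeff, Matrix.vandermonde_apply]
  have hdet : M.det ≠ 0 := by
    intro h0
    rw [h0, coeff_zero, Matrix.det_mul_row] at hcoeff
    refine mul_ne_zero ?_ ?_ hcoeff.symm
    · exact prod_ne_zero_iff.2 fun l _ => leadingCoeff_ne_zero.2 (hQ0 l)
    · rw [Matrix.det_vandermonde_ne_zero_iff]
      intro a b hab
      exact Fin.ext (pow_right_injective₀ (by linarith) hg.ne' hab)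
  have hdetdeg : M.det.natDegree ≤ D * L := by
    rw [Matrix.det_apply']
    refine natDegree_sum_le_of_forall_le _ _ fun σ _ => ?_
    rw [← C_eq_intCast]
    refine (natDegree_C_mul_le _ _).trans ((natDegree_prod_le _ _).trans ?_)
    calc ∑ l, (M (σ l) l).natDegree ≤ ∑ _l : Fin L, D :=
          sum_le_sum fun l _ => (hMdeg _ l).trans (hQdeg l)
      _ = D * L := by simp [mul_comm]
  have hroot : ∀ f, M.det.eval (t f) = 0 := by
    intro f
    rw [← coe_evalRingHom, RingHom.map_det, ← Matrix.exists_mulVec_eq_zero_iff]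
    refine ⟨fun l => if P l = 0 then 0 else u f ^ (l : ℕ), ?_, ?_⟩
    · intro h
      have := congrFun h l₀
      simp [hl₀, hu f] at this
    · funext e
      refine Eq.trans ?_ (hzero f e e.isLt)
      rw [Matrix.mulVec, dotProduct]
      refine sum_congr rfl fun l _ => ?_
      by_cases h : P l = 0
      · simp [h]
      · simp [h, M, Q, mul_pow, eval_comp, mul_assoc]
  refine hdet (eq_zero_of_natDegree_lt_card_of_eval_eq_zero M.det ht hroot ?_)
  exact hdetdeg.trans_lt hcard

theorem sum_range_add_tsub (K V : ℕ) :
    ∑ j ∈ range (K + V), (V - (j - K)) = K * V + V * (V + 1) / 2 := by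
  have h : ∑ i ∈ range V, (V - i) = V * (V + 1) / 2 := by
    have hid := Finset.sum_range_id (V + 1)
    rw [Nat.add_sub_cancel, mul_comm] at hid
    rw [← hid, ← Finset.sum_range_reflect, sum_range_succ', add_zero]
    refine sum_congr rfl fun i hi => ?_
    have := mem_range.1 hi
    omega
  rw [sum_range_add, ← h]
  congr 1
  · rw [sum_congr rfl fun j hj => by rw [Nat.sub_eq_zero_of_le (mem_range.1 hj).le, Nat.sub_zero]]
    simp
  · exact sum_congr rfl fun i _ => by rw [Nat.add_sub_cancel_left]

/-- Auxiliary exponential polynomials with small integer coefficients and values divisible by a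
large power of `p`. -/
theorem exists_exponential_polynomial (p K L V X : ℕ) [NeZero p] (g : ℤ) (hg : (p : ℤ) ∣ g - 1)
    (hX : p ^ (K * V + V * (V + 1) / 2) < X ^ (K * L)) :
    ∃ c : Fin K × Fin L → ℤ, c ≠ 0 ∧ (∀ i, |c i| ≤ X) ∧
      ∀ t : ℕ, (p : ℤ) ^ V ∣
        ∑ i : Fin K × Fin L, c i * ((t : ℤ) ^ (i.1 : ℕ) * (g ^ (i.2 : ℕ)) ^ t) := by
  let F : Fin K × Fin L → ℕ → ℤ := fun i t => (t : ℤ) ^ (i.1 : ℕ) * (g ^ (i.2 : ℕ)) ^ t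
  have hF : ∀ (j : ℕ) i, (p : ℤ) ^ (j - K) ∣ (fwdDiff (1 : ℕ))^[j] (F i) 0 := fun j i => by
    have hw : (p : ℤ) ∣ g ^ (i.2 : ℕ) - 1 :=
      hg.trans (by simpa using sub_dvd_pow_sub_pow g 1 (i.2 : ℕ))
    have hi := i.1.isLt
    exact (pow_dvd_pow _ (by omega)).trans (pow_dvd_fwdDiff_iter_pow_mul_pow hw i.1 j 0)
  choose q hq using hF
  obtain ⟨c, hc0, hcX, hc⟩ := exists_small_solution_of_congruences p X
    (fun j : Fin (K + V) => V - ((j : ℕ) - K)) (fun j i => q j i) (by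
      rw [Fin.sum_univ_eq_sum_range (fun j => V - (j - K)), sum_range_add_tsub]
      simpa using hX)
  refine ⟨c, hc0, hcX, fun t => ?_⟩
  have hnewton : ∀ i, F i t = ∑ j ∈ range (t + 1), (t.choose j : ℤ) * ((p : ℤ) ^ (j - K) * q j i) :=
    fun i => by
      have := shift_eq_sum_fwdDiff_iter (1 : ℕ) (F i) t 0
      simp only [zero_add, smul_eq_mul, mul_one, nsmul_eq_mul] at this
      rw [this]
      exact sum_congr rfl fun j _ => by rw [hq]
  have hsum : ∑ i, c i * F i t =
      ∑ j ∈ range (t + 1), (t.choose j : ℤ) * ((p : ℤ) ^ (j - K) * ∑ i, c i * q j i) := by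
    simp only [hnewton, mul_sum]
    rw [sum_comm]
    exact sum_congr rfl fun j _ => sum_congr rfl fun i _ => by ring
  change (p : ℤ) ^ V ∣ ∑ i, c i * F i t
  rw [hsum]
  refine dvd_sum fun j _ => Dvd.dvd.mul_left ?_ _
  by_cases hj : j < K + V
  · refine (pow_dvd_pow _ (show V ≤ (j - K) + (V - (j - K)) by omega)).trans ?_
    rw [pow_add]
    exact mul_dvd_mul_left _ (hc ⟨j, hj⟩)
  · exact (pow_dvd_pow _ (by omega)).trans (dvd_mul_right _ _)

/-- A `p`-adic lower bound of Gelfond type: `x * g ^ n - y` is not divisible by `p ^ V` as soon as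
the parameters `K`, `L`, `R`, `S`, `X` can be chosen so that the stated inequalities hold. -/
theorem not_pow_dvd_mul_pow_sub {p g n K L R S V X H : ℕ} (hp : p ≠ 0) (hg : 2 ≤ g)
    (hpg : (p : ℤ) ∣ (g : ℤ) - 1) {x y : ℤ} (hx : x ≠ 0) (hy : y ≠ 0) (hxH : |x| ≤ H)
    (hyH : |y| ≤ H) (hX : p ^ (K * V + V * (V + 1) / 2) < X ^ (K * L))
    (hRS : (K - 1) * L < R * S) (hSn : S ≤ n)
    (hsize : K * L * (X * ((S + L + R * n) ^ K * (g ^ ((S + L) * L) * H ^ (R * L)))) < p ^ V) :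
    ¬ (p : ℤ) ^ V ∣ x * (g : ℤ) ^ n - y := by
  intro hdvd
  have : NeZero p := ⟨hp⟩
  obtain ⟨c, hc0, hcX, hc⟩ := exists_exponential_polynomial p K L V X (g : ℤ) hpg hX
  have hH : 1 ≤ H := by
    have := (Int.one_le_abs hx).trans hxH
    exact_mod_cast this
  -- the values at the points of the box, with denominators cleared
  let Z : ℕ → ℕ → ℤ := fun r s => ∑ i : Fin K × Fin L,
    c i * (((s + r * n : ℕ) : ℤ) ^ (i.1 : ℕ) *
      ((g : ℤ) ^ (s * (i.2 : ℕ)) * (y ^ (r * (i.2 : ℕ)) * x ^ (r * (L - 1 - (i.2 : ℕ))))))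
  have hZdvd : ∀ r s, (p : ℤ) ^ V ∣ Z r s := by
    intro r s
    have h1 := (hc (s + r * n)).mul_left (x ^ (r * (L - 1)))
    rw [mul_sum] at h1
    refine (dvd_sub_right h1).1 ?_
    rw [← sum_sub_distrib]
    refine dvd_sum fun i _ => ?_
    obtain ⟨l', hl'⟩ : ∃ l', L - 1 = (i.2 : ℕ) + l' := ⟨L - 1 - i.2, by have := i.2.isLt; omega⟩
    have h2 : x ^ (r * (L - 1)) * (c i * (((s + r * n : ℕ) : ℤ) ^ (i.1 : ℕ) *
          ((g : ℤ) ^ (i.2 : ℕ)) ^ (s + r * n))) -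
        c i * (((s + r * n : ℕ) : ℤ) ^ (i.1 : ℕ) *
          ((g : ℤ) ^ (s * (i.2 : ℕ)) * (y ^ (r * (i.2 : ℕ)) * x ^ (r * (L - 1 - (i.2 : ℕ)))))) =
        (c i * ((s + r * n : ℕ) : ℤ) ^ (i.1 : ℕ) * (g : ℤ) ^ (s * (i.2 : ℕ)) * x ^ (r * l')) *
          ((x * (g : ℤ) ^ n) ^ (r * (i.2 : ℕ)) - y ^ (r * (i.2 : ℕ))) := by
      rw [hl', Nat.add_sub_cancel_left]
      generalize ((s + r * n : ℕ) : ℤ) = T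
      ring
    rw [h2]
    exact (hdvd.trans (sub_dvd_pow_sub_pow _ _ _)).mul_left _
  have hZsmall : ∀ r s, r < R → s < S + L → |Z r s| < (p : ℤ) ^ V := by
    intro r s hr hs
    have hterm : ∀ i : Fin K × Fin L, |c i * (((s + r * n : ℕ) : ℤ) ^ (i.1 : ℕ) *
        ((g : ℤ) ^ (s * (i.2 : ℕ)) * (y ^ (r * (i.2 : ℕ)) * x ^ (r * (L - 1 - (i.2 : ℕ))))))| ≤
        (X : ℤ) * (((S + L + R * n : ℕ) : ℤ) ^ K *
          ((g : ℤ) ^ ((S + L) * L) * (H : ℤ) ^ (R * L))) := by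
      intro i
      have hi1 := i.1.isLt
      have hi2 := i.2.isLt
      have hH' : (1 : ℤ) ≤ H := by exact_mod_cast hH
      rw [abs_mul, abs_mul, abs_mul, abs_mul, abs_pow, abs_pow, abs_pow, abs_pow,
        Nat.abs_cast, Nat.abs_cast]
      have e1 : ((s + r * n : ℕ) : ℤ) ^ (i.1 : ℕ) ≤ ((S + L + R * n : ℕ) : ℤ) ^ K := by
        have : s + r * n ≤ S + L + R * n := add_le_add hs.le (Nat.mul_le_mul_right n hr.le)
        calc ((s + r * n : ℕ) : ℤ) ^ (i.1 : ℕ) ≤ ((S + L + R * n : ℕ) : ℤ) ^ (i.1 : ℕ) := by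
              gcongr
          _ ≤ _ := pow_le_pow_right₀ (by
              have : 1 ≤ S + L + R * n := by omega
              exact_mod_cast this) hi1.le
      have e2 : (g : ℤ) ^ (s * (i.2 : ℕ)) ≤ (g : ℤ) ^ ((S + L) * L) :=
        pow_le_pow_right₀ (by exact_mod_cast (by omega : 1 ≤ g)) (Nat.mul_le_mul hs.le hi2.le)
      have e3 : |y| ^ (r * (i.2 : ℕ)) * |x| ^ (r * (L - 1 - (i.2 : ℕ))) ≤ (H : ℤ) ^ (R * L) := by
        calc |y| ^ (r * (i.2 : ℕ)) * |x| ^ (r * (L - 1 - (i.2 : ℕ)))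
            ≤ (H : ℤ) ^ (r * (i.2 : ℕ)) * (H : ℤ) ^ (r * (L - 1 - (i.2 : ℕ))) := by gcongr
          _ = (H : ℤ) ^ (r * (L - 1)) := by
              rw [← pow_add, ← mul_add]
              congr 2
              omega
          _ ≤ _ := pow_le_pow_right₀ hH' (Nat.mul_le_mul hr.le (Nat.sub_le _ _))
      have := hcX i
      gcongr
    calc |Z r s| ≤ ∑ i : Fin K × Fin L, (X : ℤ) * (((S + L + R * n : ℕ) : ℤ) ^ K *
          ((g : ℤ) ^ ((S + L) * L) * (H : ℤ) ^ (R * L))) :=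
          (abs_sum_le_sum_abs _ _).trans (sum_le_sum fun i _ => hterm i)
      _ = ((K * L * (X * ((S + L + R * n) ^ K * (g ^ ((S + L) * L) * H ^ (R * L)))) : ℕ) : ℤ) := by
          simp
      _ < _ := by exact_mod_cast hsize
  have hZzero : ∀ r s, r < R → s < S + L → Z r s = 0 := fun r s hr hs =>
    Int.eq_zero_of_abs_lt_dvd (hZdvd r s) (hZsmall r s hr hs)
  let P : Fin L → ℚ[X] := fun l => ∑ k : Fin K, C (c (k, l) : ℚ) * Polynomial.X ^ (k : ℕ)
  have hP : P = 0 := by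
    refine eq_zero_of_many_runs_of_zeros (D := K - 1) P ?_ (g := (g : ℚ))
      (by exact_mod_cast hg) (F := Fin R × Fin S)
      (fun f => (((f.2 : ℕ) + (f.1 : ℕ) * n : ℕ) : ℚ))
      (fun f => (g : ℚ) ^ (f.2 : ℕ) * ((y : ℚ) / x) ^ (f.1 : ℕ)) ?_ ?_ (by simpa using hRS) ?_
    · intro l
      refine natDegree_sum_le_of_forall_le _ _ fun k _ => ?_
      have := k.isLt
      exact (natDegree_C_mul_X_pow_le _ _).trans (by omega)
    · rintro ⟨r, s⟩ ⟨r', s'⟩ h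
      have h : (s : ℕ) + r * n = s' + r' * n := Nat.cast_injective (R := ℚ) h
      have hs := s.isLt
      have hs' := s'.isLt
      have hn : 0 < n := by omega
      have h1 : (s : ℕ) = s' := by
        have := congrArg (· % n) h
        simpa [Nat.mod_eq_of_lt (hs.trans_le hSn), Nat.mod_eq_of_lt (hs'.trans_le hSn)] using this
      have h2 : (r : ℕ) = r' := by
        rw [h1] at h
        exact Nat.eq_of_mul_eq_mul_right hn (by omega)
      exact Prod.ext (Fin.ext h2) (Fin.ext h1)
    · intro f
      have : (g : ℚ) ≠ 0 := by exact_mod_cast (by omega : g ≠ 0)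
      have : (x : ℚ) ≠ 0 := by exact_mod_cast hx
      have : (y : ℚ) ≠ 0 := by exact_mod_cast hy
      positivity
    · rintro ⟨r, s⟩ e he
      have hx' : (x : ℚ) ≠ 0 := by exact_mod_cast hx
      have hz := hZzero r (s + e) r.isLt (by have := s.isLt; omega)
      have hz' : ((Z r (s + e) : ℤ) : ℚ) = 0 := by rw [hz]; simp
      have hmul : (x : ℚ) ^ ((r : ℕ) * (L - 1)) ≠ 0 := pow_ne_zero _ hx'
      refine (mul_eq_zero.1 ?_).resolve_left hmul
      rw [← hz']
      simp only [Z, P, eval_finsetSum, Fintype.sum_prod_type, Int.cast_sum]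
      rw [sum_comm, mul_sum]
      refine sum_congr rfl fun l _ => ?_
      rw [sum_mul, mul_sum]
      refine sum_congr rfl fun k _ => ?_
      obtain ⟨l', hl'⟩ : ∃ l', L - 1 = (l : ℕ) + l' := ⟨L - 1 - l, by have := l.isLt; omega⟩
      rw [hl', Nat.add_sub_cancel_left]
      simp only [eval_mul, eval_C, eval_pow, eval_X]
      push_cast
      have hT : ((s : ℕ) : ℚ) + (r : ℕ) * (n : ℚ) + e = (s : ℕ) + e + (r : ℕ) * (n : ℚ) := by ring
      rw [hT]
      generalize ((s : ℕ) : ℚ) + e + (r : ℕ) * (n : ℚ) = T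
      have hy' : (y : ℚ) ^ ((r : ℕ) * l) =
          ((y : ℚ) / x) ^ ((r : ℕ) * l) * (x : ℚ) ^ ((r : ℕ) * l) := by
        rw [div_pow, div_mul_cancel₀ _ (pow_ne_zero _ hx')]
      rw [hy']
      generalize (y : ℚ) / x = Y
      ring
  apply hc0
  funext ⟨k, l⟩
  have h := congrArg (fun q => Polynomial.coeff q (k : ℕ)) (congrFun hP l)
  simp only [P, Pi.zero_apply, coeff_zero, finsetSum_coeff, coeff_C_mul_X_pow] at h
  rw [sum_eq_single k] at h
  · simpa using h
  · intro b _ hb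
    rw [if_neg fun h' => hb (Fin.ext h'.symm)]
  · simp

/-- The power of `p` dividing `n * 2 ^ n + T` is bounded polynomially in the sizes of `n` and
`T`. -/
theorem not_pow_dvd_mul_two_pow_add {p e : ℕ} (hp : 3 ≤ p) (he0 : e ≠ 0) (he : e ≤ 4)
    (hpe : (p : ℤ) ∣ 2 ^ e - 1) {n d τ : ℕ} (hd : 15 ≤ d) (hn : n < 2 ^ (3 * d)) (hτ : 3 * d ≤ τ)
    (hnτ : 240 * d * τ ≤ n) {T : ℤ} (hT : T ≠ 0) (hTτ : |T| ≤ 2 ^ τ) :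
    ¬ (p : ℤ) ^ (72000 * d ^ 2 * τ) ∣ (n : ℤ) * 2 ^ n + T := by
  intro hdvd
  have hdτ : 45 * d ≤ d * τ := by nlinarith
  have hdτ' : 15 * τ ≤ d * τ := Nat.mul_le_mul_right τ hd
  have hd2τ : 15 * (d * τ) ≤ d ^ 2 * τ := by nlinarith
  have hd2τ' : 45 * d ^ 2 ≤ d ^ 2 * τ := by nlinarith
  have hn0 : 0 < n := by nlinarith
  have hnabs : |(n : ℤ)| ≤ 2 ^ τ := by
    rw [Nat.abs_cast]
    exact_mod_cast hn.le.trans (Nat.pow_le_pow_right (by norm_num) hτ)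
  have hpow : ∀ z : ℤ, |z| ≤ 2 ^ τ → |z ^ e| ≤ ((2 ^ (4 * τ) : ℕ) : ℤ) := fun z hz => by
    rw [abs_pow]
    calc |z| ^ e ≤ (2 ^ τ) ^ e := by gcongr
      _ ≤ (2 ^ τ) ^ 4 := pow_le_pow_right₀ (one_le_pow₀ (by norm_num)) he
      _ = ((2 ^ (4 * τ) : ℕ) : ℤ) := by push_cast; ring
  refine not_pow_dvd_mul_pow_sub (p := p) (g := 2 ^ e) (n := n) (K := 6000 * d * τ) (L := 12 * d)
    (R := 300 * d) (S := 240 * d * τ) (V := 72000 * d ^ 2 * τ)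
    (X := p ^ (6000 * d * τ + 36000 * d ^ 2 * τ + 1)) (H := 2 ^ (4 * τ))
    (x := (n : ℤ) ^ e) (y := (-T) ^ e) (by omega) ?_ (by exact_mod_cast hpe)
    (pow_ne_zero _ (by exact_mod_cast hn0.ne')) (pow_ne_zero _ (neg_ne_zero.2 hT))
    (hpow _ hnabs) (hpow _ (by rwa [abs_neg])) ?_ ?_ hnτ ?_ ?_
  · exact Nat.le_self_pow he0 2
  · rw [← pow_mul]
    refine Nat.pow_lt_pow_right (by omega) ?_
    have h1 : 72000 * d ^ 2 * τ * (72000 * d ^ 2 * τ + 1) / 2 =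
        36000 * d ^ 2 * τ * (72000 * d ^ 2 * τ + 1) := by
      rw [show 72000 * d ^ 2 * τ * (72000 * d ^ 2 * τ + 1) =
        36000 * d ^ 2 * τ * (72000 * d ^ 2 * τ + 1) * 2 by ring]
      exact Nat.mul_div_cancel _ (by norm_num)
    rw [h1]
    have h2 : 0 < 36000 * d ^ 2 * τ := by
      have : 0 < d := by omega
      have : 0 < τ := by omega
      positivity
    nlinarith
  · have h1 : 0 < 6000 * d * τ := by
      have : 0 < d := by omega
      have : 0 < τ := by omega
      positivity
    calc (6000 * d * τ - 1) * (12 * d) < 6000 * d * τ * (12 * d) :=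
          Nat.mul_lt_mul_of_pos_right (by omega) (by omega)
      _ = 300 * d * (240 * d * τ) := by ring
  · have hV : 6000 * d * τ * (12 * d) ≤ 2 ^ (17 + 2 * d + τ) := by
      calc 6000 * d * τ * (12 * d) = 72000 * (d * d) * τ := by ring
        _ ≤ 2 ^ 17 * (2 ^ d * 2 ^ d) * 2 ^ τ := by
            have h1 : d ≤ 2 ^ d := d.lt_two_pow_self.le
            have h2 : τ ≤ 2 ^ τ := τ.lt_two_pow_self.le
            gcongr
            norm_num
        _ = 2 ^ (17 + 2 * d + τ) := by ring
    have ht : 240 * d * τ + 12 * d + 300 * d * n ≤ 2 ^ (4 * d) := by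
      have h1 : ∀ m, 15 ≤ m → 2 + 300 * m ≤ 2 ^ m := by
        intro m hm
        induction m, hm using Nat.le_induction with
        | base => norm_num
        | succ m hm ih => rw [pow_succ]; omega
      have h2 : 12 * d ≤ n := by nlinarith
      calc 240 * d * τ + 12 * d + 300 * d * n ≤ (2 + 300 * d) * n := by nlinarith
        _ ≤ 2 ^ d * 2 ^ (3 * d) := Nat.mul_le_mul (h1 d hd) hn.le
        _ = 2 ^ (4 * d) := by ring
    obtain ⟨E, hE⟩ : ∃ E, 18000 * (d ^ 2 * τ) = E + 3000 * (d * τ) + 1 :=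
      ⟨18000 * (d ^ 2 * τ) - 3000 * (d * τ) - 1, by omega⟩
    have hpE : 2 ^ (3 * E) ≤ p ^ (2 * E) := by
      rw [pow_mul, pow_mul]
      exact Nat.pow_le_pow_left (by nlinarith) E
    have hsplit : p ^ (72000 * d ^ 2 * τ) =
        p ^ (6000 * d * τ + 36000 * d ^ 2 * τ + 1) * (p ^ (2 * E) * p) := by
      rw [← pow_succ, ← pow_add]
      congr 1
      nlinarith
    rw [hsplit, mul_left_comm]
    refine Nat.mul_lt_mul_of_pos_left ?_ (pow_pos (by omega) _)
    calc 6000 * d * τ * (12 * d) * ((240 * d * τ + 12 * d + 300 * d * n) ^ (6000 * d * τ) *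
          ((2 ^ e) ^ ((240 * d * τ + 12 * d) * (12 * d)) * (2 ^ (4 * τ)) ^ (300 * d * (12 * d))))
        ≤ 2 ^ (17 + 2 * d + τ) * ((2 ^ (4 * d)) ^ (6000 * d * τ) *
          ((2 ^ 4) ^ ((240 * d * τ + 12 * d) * (12 * d)) *
            (2 ^ (4 * τ)) ^ (300 * d * (12 * d)))) := by
          gcongr
          norm_num
      _ = 2 ^ (17 + 2 * d + τ + (24000 * (d ^ 2 * τ) + (11520 * (d ^ 2 * τ) + 576 * d ^ 2 +
            14400 * (d ^ 2 * τ)))) := by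
          rw [← pow_mul, ← pow_mul, ← pow_mul, ← pow_add, ← pow_add, ← pow_add]
          congr 1
          ring
      _ ≤ 2 ^ (3 * E) := Nat.pow_le_pow_right (by norm_num) (by omega)
      _ ≤ p ^ (2 * E) := hpE
      _ < p ^ (2 * E) * p :=
          lt_mul_of_one_lt_right (pow_pos (by omega) _) (by omega)
  · refine hdvd.trans ?_
    have h := sub_dvd_pow_sub_pow ((n : ℤ) * 2 ^ n) (-T) e
    rw [sub_neg_eq_add, mul_pow, ← pow_mul, mul_comm n e, pow_mul] at h
    exact_mod_cast h

theorem pow_dvd_factorial_of_mul_le {p V m : ℕ} (hp : 0 < p) (h : p * V ≤ m) :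
    p ^ V ∣ m.factorial := by
  refine dvd_trans ?_ (Nat.factorial_dvd_factorial h)
  clear h
  induction V with
  | zero => simp
  | succ V ih =>
    have h1 : p * (V + 1) = (p * (V + 1) - 1) + 1 := by
      have : 0 < p * (V + 1) := by positivity
      omega
    rw [h1, Nat.factorial_succ, ← h1, pow_succ']
    refine mul_dvd_mul (dvd_mul_right _ _) (ih.trans (Nat.factorial_dvd_factorial ?_))
    rw [mul_add, mul_one]
    omega

theorem dvd_of_forall_not_pow_dvd {a b c i j k : ℕ} (h3 : ¬ 3 ^ i ∣ 3 ^ a * 5 ^ b * 7 ^ c)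
    (h5 : ¬ 5 ^ j ∣ 3 ^ a * 5 ^ b * 7 ^ c) (h7 : ¬ 7 ^ k ∣ 3 ^ a * 5 ^ b * 7 ^ c) :
    3 ^ a * 5 ^ b * 7 ^ c ∣ 3 ^ i * 5 ^ j * 7 ^ k := by
  have ha : a ≤ i := by
    by_contra! h
    exact h3 ((pow_dvd_pow 3 h.le).trans (Dvd.intro _ (mul_assoc _ _ _).symm))
  have hb : b ≤ j := by
    by_contra! h
    exact h5 ((pow_dvd_pow 5 h.le).trans ⟨3 ^ a * 7 ^ c, by ring⟩)
  have hc : c ≤ k := by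
    by_contra! h
    exact h7 ((pow_dvd_pow 7 h.le).trans (dvd_mul_left _ _))
  exact mul_dvd_mul (mul_dvd_mul (pow_dvd_pow 3 ha) (pow_dvd_pow 5 hb)) (pow_dvd_pow 7 hc)

theorem exists_eq_of_smooth {s : ℕ} (hs : s ≠ 0) (h2 : ¬ 2 ∣ s)
    (h : ∀ p, p.Prime → p ∣ s → p ∈ ({2, 3, 5, 7} : Finset ℕ)) :
    ∃ a b c, s = 3 ^ a * 5 ^ b * 7 ^ c := by
  obtain ⟨a, u, hu, rfl⟩ := Nat.exists_eq_pow_mul_and_not_dvd hs 3 (by norm_num)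
  obtain ⟨b, v, hv, rfl⟩ := Nat.exists_eq_pow_mul_and_not_dvd (right_ne_zero_of_mul hs) 5
    (by norm_num)
  obtain ⟨c, w, hw, rfl⟩ := Nat.exists_eq_pow_mul_and_not_dvd
    (right_ne_zero_of_mul (right_ne_zero_of_mul hs)) 7 (by norm_num)
  refine ⟨a, b, c, ?_⟩
  have hw1 : w = 1 := by
    by_contra hne
    obtain ⟨q, hq, hqw⟩ := Nat.exists_prime_and_dvd hne
    have hqs : q ∣ 3 ^ a * (5 ^ b * (7 ^ c * w)) := ((hqw.mul_left _).mul_left _).mul_left _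
    have hmem := h q hq hqs
    simp only [Finset.mem_insert, Finset.mem_singleton] at hmem
    rcases hmem with rfl | rfl | rfl | rfl
    · exact h2 hqs
    · exact hu ((hqw.mul_left _).mul_left _)
    · exact hv (hqw.mul_left _)
    · exact hw hqw
  rw [hw1]
  ring

/-- A solution of the equation with `s = 3 ^ a * 5 ^ b * 7 ^ c`. -/
structure IsSolution (n m₁ m₂ a b c : ℕ) : Prop where
  le : m₂ ≤ m₁
  two_le : 2 ≤ m₂
  one_lt : 1 < 3 ^ a * 5 ^ b * 7 ^ c
  eq : n * 2 ^ n + 1 = m₁.factorial + m₂.factorial + 3 ^ a * 5 ^ b * 7 ^ c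

namespace IsSolution

variable {n m₁ m₂ a b c : ℕ}

theorem two_le_factorial (h : IsSolution n m₁ m₂ a b c) : 2 ≤ m₂.factorial :=
  Nat.factorial_le h.two_le

theorem factorial_le (h : IsSolution n m₁ m₂ a b c) : m₂.factorial ≤ m₁.factorial :=
  Nat.factorial_le h.le

theorem not_two_pow_dvd (h : IsSolution n m₁ m₂ a b c) {B : ℕ} (hB : B ≤ n)
    (hs : 3 ^ a * 5 ^ b * 7 ^ c ≤ 2 ^ B) : ¬ 2 ^ B ∣ m₂.factorial := by
  intro h2
  have heq := h.eq
  have h1 := h.one_lt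
  obtain ⟨u, hu⟩ := Nat.exists_eq_add_of_lt h1
  have h3 : 2 ^ B ∣ m₁.factorial + m₂.factorial + (u + 1) := by
    have : m₁.factorial + m₂.factorial + (u + 1) = n * 2 ^ n := by omega
    rw [this]
    exact (pow_dvd_pow 2 hB).mul_left n
  have h4 := (Nat.dvd_add_right
    (dvd_add (h2.trans (Nat.factorial_dvd_factorial h.le)) h2)).1 h3
  have := Nat.le_of_dvd (by omega) h4
  omega

/-- If no high power of `3`, `5`, `7` divides `n * 2 ^ n + T`, but such powers divide the other
terms except for `s`, then `s` is small. -/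
theorem smooth_lt (h : IsSolution n m₁ m₂ a b c) {d τ f : ℕ} (hd : 15 ≤ d) (hn : n < 2 ^ (3 * d))
    (hτ : 3 * d ≤ τ) (hnτ : 240 * d * τ ≤ n) (hf1 : f ≠ 1) (hf : f ≤ 2 ^ τ)
    (hfm : ∃ r, r + f = m₁.factorial + m₂.factorial ∧
      ∀ p ∈ ({3, 5, 7} : Finset ℕ), p ^ (72000 * d ^ 2 * τ) ∣ r) :
    3 ^ a * 5 ^ b * 7 ^ c < 2 ^ (7 * (72000 * d ^ 2 * τ)) := by
  obtain ⟨r, hr, hrp⟩ := hfm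
  have hT : (1 - f : ℤ) ≠ 0 := by omega
  have hTτ : |(1 - f : ℤ)| ≤ 2 ^ τ := by
    have h1 : (f : ℤ) ≤ 2 ^ τ := by exact_mod_cast hf
    have h2 : (1 : ℤ) ≤ 2 ^ τ := one_le_pow₀ (by norm_num)
    rw [abs_le]
    constructor <;> omega
  set V := 72000 * d ^ 2 * τ with hV
  have key : ∀ p ∈ ({3, 5, 7} : Finset ℕ), ¬ p ^ V ∣ 3 ^ a * 5 ^ b * 7 ^ c := by
    intro p hp hdvd
    have h1 : p ^ V ∣ r + 3 ^ a * 5 ^ b * 7 ^ c := dvd_add (hrp p hp) hdvd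
    have h2 : (p : ℤ) ^ V ∣ (n : ℤ) * 2 ^ n + (1 - f) := by
      have h3 : (n : ℤ) * 2 ^ n + (1 - f) = ((r + 3 ^ a * 5 ^ b * 7 ^ c : ℕ) : ℤ) := by
        have h4 : (((n * 2 ^ n + 1 : ℕ)) : ℤ) = ((r + f + 3 ^ a * 5 ^ b * 7 ^ c : ℕ) : ℤ) := by
          rw [h.eq, hr]
        push_cast at h4 ⊢
        linarith
      rw [h3]
      exact_mod_cast h1
    simp only [Finset.mem_insert, Finset.mem_singleton] at hp
    rcases hp with rfl | rfl | rfl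
    · exact not_pow_dvd_mul_two_pow_add (e := 2) (by norm_num) (by norm_num) (by norm_num)
        (by norm_num) hd hn hτ hnτ hT hTτ h2
    · exact not_pow_dvd_mul_two_pow_add (e := 4) (by norm_num) (by norm_num) (by norm_num)
        (by norm_num) hd hn hτ hnτ hT hTτ h2
    · exact not_pow_dvd_mul_two_pow_add (e := 3) (by norm_num) (by norm_num) (by norm_num)
        (by norm_num) hd hn hτ hnτ hT hTτ h2
  have hV0 : V ≠ 0 := by
    have : 0 < d := by omega
    have : 0 < τ := by omega
    positivity
  calc 3 ^ a * 5 ^ b * 7 ^ c ≤ 3 ^ V * 5 ^ V * 7 ^ V :=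
        Nat.le_of_dvd (by positivity) (dvd_of_forall_not_pow_dvd (key 3 (by simp))
          (key 5 (by simp)) (key 7 (by simp)))
    _ = 105 ^ V := by rw [← mul_pow, ← mul_pow]; norm_num
    _ < 128 ^ V := Nat.pow_lt_pow_left (by norm_num) hV0
    _ = 2 ^ (7 * V) := by rw [pow_mul 2 7 V]; norm_num

theorem le_of_factorial_add_le (h : IsSolution n m₁ m₂ a b c) {d τ : ℕ} (hd : 15 ≤ d)
    (hn : n < 2 ^ (3 * d)) (hτ : 3 * d ≤ τ) (hm : m₁.factorial + m₂.factorial ≤ 2 ^ τ) :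
    n ≤ 8 * (72000 * d ^ 2 * τ) := by
  by_contra! hlt
  have hdτ : d * τ ≤ d ^ 2 * τ := Nat.mul_le_mul_right τ (Nat.le_self_pow two_ne_zero d)
  have hτ2 : τ ≤ d * τ := Nat.le_mul_of_pos_left τ (by omega)
  have h2 := h.two_le_factorial
  have h3 := h.factorial_le
  have hs := h.smooth_lt hd hn hτ (by nlinarith) (f := m₁.factorial + m₂.factorial) (by omega) hm
    ⟨0, by simp⟩
  have heq := h.eq
  set V := 72000 * d ^ 2 * τ with hV
  have hτV : τ ≤ 7 * V := by nlinarith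
  have h4 : 2 ^ τ ≤ 2 ^ (7 * V) := Nat.pow_le_pow_right (by norm_num) hτV
  have h5 : 2 ^ (7 * V) + 2 ^ (7 * V) ≤ 2 ^ (8 * V) := by
    rw [← two_mul, ← pow_succ']
    exact Nat.pow_le_pow_right (by norm_num) (by omega)
  have h6 : 2 ^ (8 * V) < 2 ^ n := Nat.pow_lt_pow_right (by norm_num) hlt
  have h7 : 2 ^ n ≤ n * 2 ^ n := Nat.le_mul_of_pos_left _ (by omega)
  omega

end IsSolution

theorem factorial_le_two_pow_s11 {m M B : ℕ} (hm : m ≤ M) (hM : M ≤ 2 ^ B) :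
    m.factorial ≤ 2 ^ (B * M) := by
  calc m.factorial ≤ m ^ m := Nat.factorial_le_pow m
    _ ≤ (2 ^ B) ^ m := Nat.pow_le_pow_left (hm.trans hM) m
    _ ≤ (2 ^ B) ^ M := Nat.pow_le_pow_right (by positivity) hm
    _ = 2 ^ (B * M) := (pow_mul _ _ _).symm

theorem mul_pow_nine_lt {d : ℕ} (hd : 40 ≤ d) :
    8 * (72000 * 51 * 72000 * 42 * 216000) * (d + 1) ^ 9 < 8 ^ d := by
  induction d, hd using Nat.le_induction with
  | base => norm_num
  | succ d hd ih =>
    have h1 : (5 * (d + 1 + 1)) ^ 9 ≤ (6 * (d + 1)) ^ 9 := Nat.pow_le_pow_left (by omega) 9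
    rw [mul_pow, mul_pow] at h1
    rw [pow_succ 8 d]
    norm_num at h1 ih ⊢
    omega

namespace IsSolution

variable {n m₁ m₂ a b c : ℕ}

theorem lt_two_pow (h : IsSolution n m₁ m₂ a b c) : n < 2 ^ 120 := by
  by_contra! hn
  obtain ⟨d, hd40, hdn, hnd⟩ : ∃ d, 40 ≤ d ∧ 8 ^ d ≤ n ∧ n < 8 ^ (d + 1) := by
    refine ⟨Nat.log 8 n, ?_, Nat.pow_log_le_self 8 (by positivity),
      Nat.lt_pow_succ_log_self (by norm_num) n⟩
    exact Nat.le_log_of_pow_le (by norm_num) (by norm_num at hn ⊢; exact hn)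
  have hbig := (mul_pow_nine_lt hd40).trans_le hdn
  obtain ⟨D, hD⟩ : ∃ D, D = d + 1 := ⟨_, rfl⟩
  rw [← hD] at hbig hnd
  have hD15 : 15 ≤ D := by omega
  have hnD : n < 2 ^ (3 * D) := by rw [pow_mul]; exact hnd
  obtain ⟨V₁, hV₁⟩ : ∃ V₁, V₁ = 72000 * D ^ 2 * (3 * D) := ⟨_, rfl⟩
  obtain ⟨V₂, hV₂⟩ : ∃ V₂, V₂ = 72000 * D ^ 2 * (42 * D * V₁) := ⟨_, rfl⟩
  obtain ⟨V₃, hV₃⟩ : ∃ V₃, V₃ = 72000 * D ^ 2 * (51 * D * V₂) := ⟨_, rfl⟩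
  have hV₃n : 8 * V₃ < n := by
    refine lt_of_eq_of_lt ?_ hbig
    rw [hV₃, hV₂, hV₁]
    ring
  have hDD : 15 * D ≤ D ^ 2 := by nlinarith
  have hV₁0 : 0 < V₁ := by rw [hV₁]; positivity
  have hV₂0 : 0 < V₂ := by rw [hV₂]; positivity
  have e1 : 42 * D * V₁ ≤ V₂ := by
    rw [hV₂]; exact Nat.le_mul_of_pos_left _ (by positivity)
  have e1' : 240 * D * (42 * D * V₁) ≤ V₂ := by
    rw [hV₂]; exact Nat.mul_le_mul_right _ (by omega)
  have e2 : 51 * D * V₂ ≤ V₃ := by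
    rw [hV₃]; exact Nat.le_mul_of_pos_left _ (by positivity)
  have e3 : 630 * V₁ ≤ 42 * D * V₁ := Nat.mul_le_mul_right _ (by omega)
  have e4 : 765 * V₂ ≤ 51 * D * V₂ := Nat.mul_le_mul_right _ (by omega)
  have hV₁D : 240 * D * (3 * D) ≤ V₁ := by
    rw [hV₁]; exact Nat.mul_le_mul_right _ (by omega)
  have hV₁D' : 3 * D ≤ V₁ := by nlinarith
  have h2 := h.two_le_factorial
  have hpow : ∀ p ∈ ({3, 5, 7} : Finset ℕ), 0 < p ∧ p ≤ 7 := by decide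
  -- the smaller factorial is small
  have hm₂ : m₂ ≤ 14 * V₁ := by
    by_contra! hlt
    have hdvd : ∀ p ∈ ({3, 5, 7} : Finset ℕ), p ^ V₁ ∣ m₂.factorial := fun p hp =>
      pow_dvd_factorial_of_mul_le (hpow p hp).1
        (by have := Nat.mul_le_mul_right V₁ (hpow p hp).2; omega)
    have hs := h.smooth_lt hD15 hnD le_rfl (by omega) (f := 0) (by norm_num) (by positivity)
      ⟨_, rfl, fun p hp => by
        rw [← hV₁]
        exact dvd_add ((hdvd p hp).trans (Nat.factorial_dvd_factorial h.le)) (hdvd p hp)⟩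
    rw [← hV₁] at hs
    exact h.not_two_pow_dvd (by omega) hs.le (pow_dvd_factorial_of_mul_le two_pos (by omega))
  have hf₂ : m₂.factorial ≤ 2 ^ (42 * D * V₁) := by
    refine (factorial_le_two_pow_s11 hm₂ (B := 3 * D) (by omega)).trans_eq ?_
    congr 1
    ring
  -- the larger factorial is small
  have hm₁ : m₁ ≤ 16 * V₂ := by
    by_contra! hlt
    have hs := h.smooth_lt hD15 hnD (τ := 42 * D * V₁) (by omega) (by omega)
      (f := m₂.factorial) (by omega) hf₂ ⟨_, rfl, fun p hp => by
        rw [← hV₂]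
        exact pow_dvd_factorial_of_mul_le (hpow p hp).1
          (by have := Nat.mul_le_mul_right V₂ (hpow p hp).2; omega)⟩
    rw [← hV₂] at hs
    have heq := h.eq
    have h1 := h.one_lt
    obtain ⟨u, hu⟩ := Nat.exists_eq_add_of_lt h1
    have h3 : 2 ^ (8 * V₂) ∣ m₁.factorial + (m₂.factorial + (u + 1)) := by
      have : m₁.factorial + (m₂.factorial + (u + 1)) = n * 2 ^ n := by omega
      rw [this]
      exact (pow_dvd_pow 2 (by omega)).mul_left n
    have h4 := (Nat.dvd_add_right (pow_dvd_factorial_of_mul_le two_pos (by omega))).1 h3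
    have h5 := Nat.le_of_dvd (by omega) h4
    have h6 : 2 ^ (42 * D * V₁) ≤ 2 ^ (7 * V₂) := Nat.pow_le_pow_right (by norm_num) (by omega)
    have h7 : 2 ^ (7 * V₂) + 2 ^ (7 * V₂) ≤ 2 ^ (8 * V₂) := by
      rw [← two_mul, ← pow_succ']
      exact Nat.pow_le_pow_right (by norm_num) (by omega)
    omega
  have hf₁ : m₁.factorial + m₂.factorial ≤ 2 ^ (51 * D * V₂) := by
    have h1 : m₁.factorial ≤ 2 ^ (48 * D * V₂) := by
      refine (factorial_le_two_pow_s11 hm₁ (B := 3 * D) (by omega)).trans_eq ?_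
      congr 1
      ring
    have h3 := h.factorial_le
    calc m₁.factorial + m₂.factorial ≤ 2 ^ (48 * D * V₂) + 2 ^ (48 * D * V₂) := by omega
      _ = 2 ^ (48 * D * V₂ + 1) := by rw [pow_succ]; ring
      _ ≤ 2 ^ (51 * D * V₂) := Nat.pow_le_pow_right (by norm_num) (by nlinarith)
  have := h.le_of_factorial_add_le hD15 hnD (by omega) hf₁
  rw [← hV₃] at this
  omega

end IsSolution

namespace HenselSearch

/-- Evaluates its first argument before passing it on. -/
def force {α : Sort*} (x : ℕ) (f : ℕ → α) : α :=
  Nat.rec (f 0) (fun k _ => f k.succ) x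

theorem force_eq {α : Sort*} (x : ℕ) (f : ℕ → α) : force x f = f x := by
  cases x <;> rfl

/-- The pairs `(p ^ j, 2 ^ (o * p ^ j) mod P)`, where the list starts with the pair `(q, g)`. -/
def table (p P k : ℕ) : ℕ → ℕ → List (ℕ × ℕ) :=
  Nat.rec (fun _ _ => []) (fun _ ih q g => (q, g) :: ih (q.mul p) ((g.pow p).mod P)) k

/-- Passes on `table p P k q g` with evaluated entries. -/
def withTable {α : Sort*} (p P k : ℕ) : ℕ → ℕ → (List (ℕ × ℕ) → α) → α :=
  Nat.rec (fun _ _ f => f []) (fun _ ih q g f =>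
    force q fun q => force g fun g => ih (q.mul p) ((g.pow p).mod P) fun l => f ((q, g) :: l)) k

theorem withTable_eq {α : Sort*} (p P k q g : ℕ) (f : List (ℕ × ℕ) → α) :
    withTable p P k q g f = f (table p P k q g) := by
  induction k generalizing q g f with
  | zero => rfl
  | succ k ih =>
    change force q (fun q => force g fun g => withTable p P k (q * p) (g ^ p % P)
      fun l => f ((q, g) :: l)) = f ((q, g) :: table p P k (q * p) (g ^ p % P))
    rw [force_eq, force_eq, ih]

/-- Lifts a solution `x` of `x * 2 ^ x + V ≡ 0` digit by digit, where `w` stands for `2 ^ x`,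
until it is at least `N`. -/
def lift (o p P N V iv : ℕ) (l : List (ℕ × ℕ)) : ℕ → ℕ → Bool :=
  List.rec (fun x _ => Nat.ble N x) (fun e _ ih x w =>
    bif Nat.ble N x then true else
      force (((((x.mul w).add V).div e.1).mul iv).mod p) fun c =>
        force (x.add ((o.mul e.1).mul c)) fun x =>
          force ((w.mul (e.2.pow c)).mod P) fun w => ih x w) l

/-- Runs `lift` for all residue classes `e.1`, where `e.2 * o * 2 ^ e.1 ≡ -1`. -/
def liftAll (o p P N V : ℕ) (l : List (ℕ × ℕ)) (cls : List (ℕ × ℕ)) : Bool :=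
  List.rec true (fun e _ ih => bif lift o p P N V e.2 l e.1 (Nat.pow 2 e.1) then ih else false) cls

/-- Runs `liftAll` for `V = 1 + h' - i!` for all `i ≥ m`, where `h ≡ -m!`, until `q`
divides `i!`. -/
def searchOne (o p P N : ℕ) (l cls : List (ℕ × ℕ)) (q h' fuel : ℕ) : ℕ → ℕ → Bool :=
  Nat.rec (fun _ _ => false) (fun _ ih m h =>
    bif Nat.beq (h.mod q) 0 then true else
      force ((h'.add h).succ) fun V =>
        bif liftAll o p P N V l cls then
          force m.succ fun m => force ((h.mul m).mod P) fun h => ih m h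
        else false) fuel

/-- Looks for a precision `J` that suffices for excluding `V = 1 + h'`, and passes on `p ^ J`. -/
def withPrecision (o p P N : ℕ) (cls : List (ℕ × ℕ)) (h' : ℕ) (f : ℕ → Bool) (fuel : ℕ) :
    ℕ → Bool :=
  Nat.rec (fun _ => false) (fun _ ih J =>
    bif withTable p P J 1 (2 ^ o) fun l => liftAll o p P N h'.succ l cls then
      force (p.pow J) f else force J.succ ih) fuel

/-- Runs `searchOne` for `h' = -i!` for all `i ≥ m`, where `h ≡ -m!`, until `q` divides `i!`. -/
def searchTwo (o p P N K : ℕ) (l cls : List (ℕ × ℕ)) (q J₀ fuel : ℕ) : ℕ → ℕ → Bool :=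
  Nat.rec (fun _ _ => false) (fun _ ih m h =>
    bif Nat.beq (h.mod q) 0 then true else
      bif withPrecision o p P N cls h (fun q => searchOne o p P N l cls q h 1000 m h)
          (K + 1 - J₀) J₀ then
        force m.succ fun m => force ((h.mul m).mod P) fun h => ih m h
      else false) fuel

/-- The complete search for a single factorial, modulo `p ^ K` and for `n < N`. -/
def runOne (o p K N J₀ : ℕ) (cls : List (ℕ × ℕ)) : Bool :=
  force (p ^ K) fun P => force N fun N => withTable p P K 1 (2 ^ o) fun l =>
    withPrecision o p P N cls 0 (fun q => searchOne o p P N l cls q 0 1000 2 (P - 2))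
      (K + 1 - J₀) J₀

/-- The complete search for two factorials, modulo `p ^ K` and for `n < N`. -/
def runTwo (o p K N J₀ : ℕ) (cls : List (ℕ × ℕ)) : Bool :=
  force (p ^ K) fun P => force N fun N => withTable p P K 1 (2 ^ o) fun l =>
    withPrecision o p P N cls 0 (fun q => searchTwo o p P N K l cls q J₀ 1000 2 (P - 2))
      (K + 1 - J₀) J₀


theorem digit_eq {o p K V iv n j x w t : ℕ} (hp : 0 < p) (ho : 2 ^ o ≡ 1 [MOD p])
    (hdvd : p ^ (j + 1) ∣ n * 2 ^ n + V) (hj : j < K) (hn : n = x + o * p ^ j * t)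
    (hw : w ≡ 2 ^ x [MOD p ^ K]) (hiv : p ∣ iv * o * w + 1) :
    (x * w + V) / p ^ j * iv % p = t % p := by
  have hone : (2 ^ (o * p ^ j)) ≡ 1 [MOD p ^ (j + 1)] := by
    have h1 : (p : ℤ) ∣ 2 ^ o - 1 := by
      have := (Nat.modEq_iff_dvd.1 ho.symm)
      push_cast at this
      exact this
    have h2 := dvd_sub_pow_of_dvd_sub h1 j
    refine (Nat.modEq_iff_dvd.2 ?_).symm
    push_cast
    rwa [one_pow, ← pow_mul] at h2
  have hKj : p ^ (j + 1) ∣ p ^ K := pow_dvd_pow p hj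
  have h2n : 2 ^ n ≡ w [MOD p ^ (j + 1)] := by
    have h1 : 2 ^ n = 2 ^ x * (2 ^ (o * p ^ j)) ^ t := by rw [← pow_mul, ← pow_add, hn]
    rw [h1]
    simpa using (hw.symm.of_dvd hKj).mul (hone.pow t)
  have h3 : p ^ (j + 1) ∣ n * w + V :=
    (((h2n.mul_left n).add_right V).dvd_iff dvd_rfl).1 hdvd
  have h4 : n * w + V = p ^ j * (o * t * w) + (x * w + V) := by rw [hn]; ring
  rw [h4] at h3
  obtain ⟨z, hz⟩ : p ^ j ∣ x * w + V :=
    (Nat.dvd_add_right (dvd_mul_right _ _)).1 ((pow_dvd_pow p (Nat.le_succ j)).trans h3)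
  rw [hz, ← mul_add, pow_succ] at h3
  have h5 := Nat.dvd_of_mul_dvd_mul_left (pow_pos hp j) h3
  rw [hz, Nat.mul_div_cancel_left _ (pow_pos hp j)]
  refine (Nat.modEq_iff_dvd.2 ?_ : z * iv ≡ t [MOD p])
  have h6 : (p : ℤ) ∣ (o * t * w + z : ℕ) := Int.natCast_dvd_natCast.2 h5
  have h7 : (p : ℤ) ∣ (iv * o * w + 1 : ℕ) := Int.natCast_dvd_natCast.2 hiv
  have h8 := dvd_sub (h7.mul_left t) (h6.mul_left iv)
  have h9 : (t : ℤ) * (iv * o * w + 1 : ℕ) - iv * (o * t * w + z : ℕ) = t - (z * iv : ℕ) := by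
    push_cast
    ring
  rwa [h9] at h8

theorem le_of_lift {o p K L N V iv n : ℕ} (hp : 0 < p) (ho : 2 ^ o ≡ 1 [MOD p])
    (hL : L ≤ K) (hdvd : p ^ L ∣ n * 2 ^ n + V) {k j g x w t : ℕ} (hjk : j + k ≤ L)
    (hg : g ≡ 2 ^ (o * p ^ j) [MOD p ^ K]) (hn : n = x + o * p ^ j * t)
    (hw : w ≡ 2 ^ x [MOD p ^ K]) (hiv : p ∣ iv * o * w + 1)
    (h : lift o p (p ^ K) N V iv (table p (p ^ K) k (p ^ j) g) x w = true) : N ≤ n := by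
  induction k generalizing j g x w t with
  | zero =>
    have : N ≤ x := Nat.le_of_ble_eq_true h
    rw [hn]
    exact this.trans (Nat.le_add_right _ _)
  | succ k ih =>
    change (bif Nat.ble N x then true else
      force ((x * w + V) / p ^ j * iv % p) fun c => force (x + o * p ^ j * c) fun x =>
        force (w * g ^ c % p ^ K) fun w => lift o p (p ^ K) N V iv
          (table p (p ^ K) k (p ^ (j + 1)) (g ^ p % p ^ K)) x w) = true at h
    simp only [force_eq] at h
    cases hb : Nat.ble N x with
    | true =>
      rw [hn]
      exact (Nat.le_of_ble_eq_true hb).trans (Nat.le_add_right _ _)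
    | false =>
      rw [hb, cond_false, digit_eq hp ho ((pow_dvd_pow p (by omega)).trans hdvd) (by omega) hn hw
        hiv] at h
      have hpK : p ∣ p ^ K := dvd_pow_self p (by omega)
      refine ih (by omega) ?_ (t := t / p) ?_ ?_ ?_ h
      · refine (Nat.mod_modEq _ _).trans ((hg.pow p).trans ?_)
        rw [← pow_mul, mul_assoc, ← pow_succ]
      · conv_lhs => rw [hn, ← Nat.mod_add_div t p]
        ring
      · refine (Nat.mod_modEq _ _).trans ((hw.mul (hg.pow _)).trans ?_)
        rw [← pow_mul, ← pow_add]
      · have hg1 : g ≡ 1 [MOD p] := by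
          refine (hg.of_dvd hpK).trans ?_
          rw [pow_mul]
          simpa using ho.pow (p ^ j)
        have hw1 : w * g ^ (t % p) % p ^ K ≡ w [MOD p] := by
          refine ((Nat.mod_modEq _ _).of_dvd hpK).trans ?_
          simpa using (hg1.pow (t % p)).mul_left w
        exact (((hw1.mul_left (iv * o)).add_right 1).dvd_iff dvd_rfl).2 hiv

/-- The list `cls` contains every residue class modulo `o` together with suitable inverses. -/
structure IsClassList (o p : ℕ) (cls : List (ℕ × ℕ)) : Prop where
  exists_mem : ∀ r < o, ∃ iv, (r, iv) ∈ cls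
  dvd : ∀ e ∈ cls, p ∣ e.2 * o * 2 ^ e.1 + 1

theorem lift_of_liftAll {o p P N V : ℕ} {l cls : List (ℕ × ℕ)} (h : liftAll o p P N V l cls = true)
    {e : ℕ × ℕ} (he : e ∈ cls) : lift o p P N V e.2 l e.1 (2 ^ e.1) = true := by
  induction cls with
  | nil => simp at he
  | cons e' cls ih =>
    change (bif lift o p P N V e'.2 l e'.1 (2 ^ e'.1) then liftAll o p P N V l cls else false)
      = true at h
    cases hb : lift o p P N V e'.2 l e'.1 (2 ^ e'.1) with
    | false => simp [hb] at h
    | true =>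
      rw [hb, cond_true] at h
      rcases List.mem_cons.1 he with rfl | he
      · exact hb
      · exact ih h he

/-- No `n < N` satisfies `p ^ k ∣ n * 2 ^ n + V`. -/
def Excluded (p k N V : ℕ) : Prop :=
  ∀ n < N, ¬ p ^ k ∣ n * 2 ^ n + V

theorem Excluded.congr {p k N V V' : ℕ} (h : Excluded p k N V) (hV : V ≡ V' [MOD p ^ k]) :
    Excluded p k N V' :=
  fun n hn hdvd => h n hn (((hV.add_left _).dvd_iff dvd_rfl).2 hdvd)

theorem Excluded.mono {p k K N V : ℕ} (h : Excluded p k N V) (hk : k ≤ K) : Excluded p K N V :=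
  fun n hn hdvd => h n hn ((pow_dvd_pow p hk).trans hdvd)

variable {o p K N : ℕ} {cls : List (ℕ × ℕ)}

theorem excluded_of_liftAll (hp : 0 < p) (ho0 : 0 < o) (ho : 2 ^ o ≡ 1 [MOD p])
    (hcls : IsClassList o p cls) {L V : ℕ} (hL : L ≤ K)
    (h : liftAll o p (p ^ K) N V (table p (p ^ K) L 1 (2 ^ o)) cls = true) :
    Excluded p L N V := by
  intro n hn hdvd
  obtain ⟨iv, hiv⟩ := hcls.exists_mem (n % o) (Nat.mod_lt n ho0)
  have h1 := lift_of_liftAll h hiv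
  refine hn.not_ge (le_of_lift hp ho hL hdvd (j := 0) (k := L) (g := 2 ^ o) (x := n % o)
    (w := 2 ^ (n % o)) (t := n / o) (by omega) (by simp [Nat.ModEq.refl]) ?_ rfl
    (hcls.dvd _ hiv) h1)
  rw [pow_zero, mul_one, Nat.mod_add_div]

theorem excluded_of_searchOne (hp : 0 < p) (ho0 : 0 < o) (ho : 2 ^ o ≡ 1 [MOD p])
    (hcls : IsClassList o p cls) {J h' : ℕ} (hJ : J ≤ K) (hJh : Excluded p J N (1 + h'))
    {fuel m h : ℕ} (hh : p ^ K ∣ m.factorial + h)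
    (hs : searchOne o p (p ^ K) N (table p (p ^ K) K 1 (2 ^ o)) cls (p ^ J) h' fuel m h = true)
    {i g : ℕ} (hi : m ≤ i) (hg : p ^ K ∣ i.factorial + g) : Excluded p K N (1 + h' + g) := by
  induction fuel generalizing m h with
  | zero => exact absurd hs Bool.false_ne_true
  | succ fuel ih =>
    change (bif Nat.beq (h % p ^ J) 0 then true else force (h' + h).succ fun V =>
        bif liftAll o p (p ^ K) N V (table p (p ^ K) K 1 (2 ^ o)) cls then
          force (m + 1) fun m => force (h * m % p ^ K) fun h => searchOne o p (p ^ K) N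
            (table p (p ^ K) K 1 (2 ^ o)) cls (p ^ J) h' fuel m h
        else false) = true at hs
    simp only [force_eq] at hs
    have hJK : p ^ J ∣ p ^ K := pow_dvd_pow p hJ
    cases hb : Nat.beq (h % p ^ J) 0 with
    | true =>
      have h1 : p ^ J ∣ m.factorial :=
        (Nat.dvd_add_left (Nat.dvd_of_mod_eq_zero (Nat.eq_of_beq_eq_true hb))).1 (hJK.trans hh)
      have h2 : p ^ J ∣ g :=
        (Nat.dvd_add_right (h1.trans (Nat.factorial_dvd_factorial hi))).1 (hJK.trans hg)
      refine (hJh.congr ?_).mono hJ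
      simpa using ((Nat.modEq_zero_iff_dvd.2 h2).symm.add_left (1 + h'))
    | false =>
      rw [hb, cond_false] at hs
      cases hb' : liftAll o p (p ^ K) N (h' + h).succ (table p (p ^ K) K 1 (2 ^ o)) cls with
      | false => simp [hb'] at hs
      | true =>
        rw [hb', cond_true] at hs
        rcases hi.eq_or_lt with rfl | hi
        · refine (excluded_of_liftAll hp ho0 ho hcls le_rfl hb').congr ?_
          have h1 : h ≡ g [MOD p ^ K] :=
            Nat.ModEq.add_left_cancel' m.factorial
              ((Nat.modEq_zero_iff_dvd.2 hh).trans (Nat.modEq_zero_iff_dvd.2 hg).symm)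
          have h2 : (h' + h).succ = 1 + h' + h := by omega
          rw [h2]
          exact h1.add_left _
        · refine ih ?_ hs hi
          have h1 : h * (m + 1) % p ^ K ≡ (m + 1) * h [MOD p ^ K] := by
            rw [mul_comm (m + 1)]
            exact Nat.mod_modEq _ _
          refine ((h1.add_left _).dvd_iff dvd_rfl).2 ?_
          rw [Nat.factorial_succ, ← mul_add]
          exact hh.mul_left _

theorem exists_of_withPrecision (hp : 0 < p) (ho0 : 0 < o) (ho : 2 ^ o ≡ 1 [MOD p])
    (hcls : IsClassList o p cls) {h' fuel J₀ : ℕ} {f : ℕ → Bool}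
    (hfuel : J₀ + fuel ≤ K + 1) (hs : withPrecision o p (p ^ K) N cls h' f fuel J₀ = true) :
    ∃ J ≤ K, Excluded p J N (1 + h') ∧ f (p ^ J) = true := by
  induction fuel generalizing J₀ with
  | zero => exact absurd hs Bool.false_ne_true
  | succ fuel ih =>
    change (bif withTable p (p ^ K) J₀ 1 (2 ^ o) fun l => liftAll o p (p ^ K) N h'.succ l cls then
      force (p ^ J₀) f else force (J₀ + 1)
        (withPrecision o p (p ^ K) N cls h' f fuel)) = true at hs
    simp only [force_eq, withTable_eq] at hs
    cases hb : liftAll o p (p ^ K) N h'.succ (table p (p ^ K) J₀ 1 (2 ^ o)) cls with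
    | true =>
      rw [hb, cond_true] at hs
      have h1 := excluded_of_liftAll hp ho0 ho hcls (by omega) hb
      rw [Nat.succ_eq_one_add] at h1
      exact ⟨J₀, by omega, h1, hs⟩
    | false =>
      rw [hb, cond_false] at hs
      exact ih (by omega) hs

theorem excluded_of_searchTwo (hp : 0 < p) (ho0 : 0 < o) (ho : 2 ^ o ≡ 1 [MOD p])
    (hcls : IsClassList o p cls) {J J₀ : ℕ} (hJ : J ≤ K) (hJh : Excluded p J N 1)
    (hJ₀ : J₀ ≤ K) {fuel m h : ℕ} (hh : p ^ K ∣ m.factorial + h)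
    (hs : searchTwo o p (p ^ K) N K (table p (p ^ K) K 1 (2 ^ o)) cls (p ^ J) J₀ fuel m h = true)
    {i g i' g' : ℕ} (hi : m ≤ i) (hg : p ^ K ∣ i.factorial + g) (hi' : i ≤ i')
    (hg' : p ^ K ∣ i'.factorial + g') : Excluded p K N (1 + g + g') := by
  induction fuel generalizing m h with
  | zero => exact absurd hs Bool.false_ne_true
  | succ fuel ih =>
    change (bif Nat.beq (h % p ^ J) 0 then true else
      bif withPrecision o p (p ^ K) N cls h (fun q => searchOne o p (p ^ K) N
          (table p (p ^ K) K 1 (2 ^ o)) cls q h 1000 m h)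
          (K + 1 - J₀) J₀ then
        force (m + 1) fun m => force (h * m % p ^ K) fun h => searchTwo o p (p ^ K) N K
          (table p (p ^ K) K 1 (2 ^ o)) cls (p ^ J) J₀ fuel m h
      else false) = true at hs
    simp only [force_eq] at hs
    have hJK : p ^ J ∣ p ^ K := pow_dvd_pow p hJ
    cases hb : Nat.beq (h % p ^ J) 0 with
    | true =>
      have h1 : p ^ J ∣ m.factorial :=
        (Nat.dvd_add_left (Nat.dvd_of_mod_eq_zero (Nat.eq_of_beq_eq_true hb))).1 (hJK.trans hh)
      have h2 : p ^ J ∣ g :=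
        (Nat.dvd_add_right (h1.trans (Nat.factorial_dvd_factorial hi))).1 (hJK.trans hg)
      have h3 : p ^ J ∣ g' := (Nat.dvd_add_right
        (h1.trans (Nat.factorial_dvd_factorial (hi.trans hi')))).1 (hJK.trans hg')
      refine (hJh.congr ?_).mono hJ
      rw [add_assoc]
      simpa using ((Nat.modEq_zero_iff_dvd.2 (dvd_add h2 h3)).symm.add_left 1)
    | false =>
      rw [hb, cond_false] at hs
      cases hb' : withPrecision o p (p ^ K) N cls h (fun q => searchOne o p (p ^ K) N
          (table p (p ^ K) K 1 (2 ^ o)) cls q h 1000 m h) (K + 1 - J₀) J₀ with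
      | false => simp [hb'] at hs
      | true =>
        rw [hb', cond_true] at hs
        rcases hi.eq_or_lt with rfl | hi
        · obtain ⟨J', hJ', hex, hs'⟩ :=
            exists_of_withPrecision hp ho0 ho hcls (by omega) hb'
          have h1 : h ≡ g [MOD p ^ K] :=
            Nat.ModEq.add_left_cancel' m.factorial
              ((Nat.modEq_zero_iff_dvd.2 hh).trans (Nat.modEq_zero_iff_dvd.2 hg).symm)
          exact (excluded_of_searchOne hp ho0 ho hcls hJ' hex hh hs' hi' hg').congr
            ((h1.add_left 1).add_right g')
        · refine ih ?_ hs hi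
          have h1 : h * (m + 1) % p ^ K ≡ (m + 1) * h [MOD p ^ K] := by
            rw [mul_comm (m + 1)]
            exact Nat.mod_modEq _ _
          refine ((h1.add_left _).dvd_iff dvd_rfl).2 ?_
          rw [Nat.factorial_succ, ← mul_add]
          exact hh.mul_left _

theorem excluded_of_runOne (hp : 2 ≤ p) (ho0 : 0 < o) (ho : 2 ^ o ≡ 1 [MOD p])
    (hcls : IsClassList o p cls) {J₀ : ℕ} (hJ₀ : J₀ ≤ K) (hK : K ≠ 0)
    (h : runOne o p K N J₀ cls = true) {i g : ℕ} (hi : 2 ≤ i) (hg : p ^ K ∣ i.factorial + g) :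
    Excluded p K N (1 + g) := by
  simp only [runOne, force_eq, withTable_eq] at h
  obtain ⟨J, hJ, hex, hs⟩ :=
    exists_of_withPrecision (by omega) ho0 ho hcls (by omega) h
  have h2 : 2 ≤ p ^ K := hp.trans (Nat.le_self_pow hK p)
  exact excluded_of_searchOne (by omega) ho0 ho hcls hJ hex
    (by rw [Nat.factorial_two, Nat.add_sub_cancel' h2]) hs hi hg

theorem excluded_of_runTwo (hp : 2 ≤ p) (ho0 : 0 < o) (ho : 2 ^ o ≡ 1 [MOD p])
    (hcls : IsClassList o p cls) {J₀ : ℕ} (hJ₀ : J₀ ≤ K) (hK : K ≠ 0)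
    (h : runTwo o p K N J₀ cls = true) {i g i' g' : ℕ} (hi : 2 ≤ i)
    (hg : p ^ K ∣ i.factorial + g) (hi' : i ≤ i') (hg' : p ^ K ∣ i'.factorial + g') :
    Excluded p K N (1 + g + g') := by
  simp only [runTwo, force_eq, withTable_eq] at h
  obtain ⟨J, hJ, hex, hs⟩ :=
    exists_of_withPrecision (by omega) ho0 ho hcls (by omega) h
  have h2 : 2 ≤ p ^ K := hp.trans (Nat.le_self_pow hK p)
  exact excluded_of_searchTwo (by omega) ho0 ho hcls hJ hex hJ₀
    (by rw [Nat.factorial_two, Nat.add_sub_cancel' h2]) hs hi hg hi' hg'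

theorem exists_dvd_add {P : ℕ} (hP : 0 < P) (f : ℕ) : ∃ g, P ∣ f + g :=
  ⟨f * (P - 1), f, by
    obtain ⟨Q, rfl⟩ := Nat.exists_eq_add_of_le hP
    rw [Nat.add_sub_cancel_left]
    ring⟩

theorem isClassList_three : IsClassList 2 3 [(0, 1), (1, 2)] where
  exists_mem r hr := by interval_cases r <;> simp
  dvd := by decide

theorem isClassList_five : IsClassList 4 5 [(0, 1), (1, 3), (2, 4), (3, 2)] where
  exists_mem r hr := by interval_cases r <;> simp
  dvd := by decide

theorem isClassList_seven : IsClassList 3 7 [(0, 2), (1, 1), (2, 4)] where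
  exists_mem r hr := by interval_cases r <;> simp
  dvd := by decide

theorem runOne_three : runOne 2 3 80 (2 ^ 120) 78 [(0, 1), (1, 2)] = true := by decide +kernel

theorem runOne_five : runOne 4 5 57 (2 ^ 120) 53 [(0, 1), (1, 3), (2, 4), (3, 2)] = true := by
  decide +kernel

theorem runOne_seven : runOne 3 7 46 (2 ^ 120) 44 [(0, 2), (1, 1), (2, 4)] = true := by
  decide +kernel

theorem runTwo_three : runTwo 2 3 34 (2 ^ 40) 25 [(0, 1), (1, 2)] = true := by decide +kernel

theorem runTwo_five : runTwo 4 5 24 (2 ^ 40) 17 [(0, 1), (1, 3), (2, 4), (3, 2)] = true := by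
  decide +kernel

theorem runTwo_seven : runTwo 3 7 20 (2 ^ 40) 14 [(0, 2), (1, 1), (2, 4)] = true := by
  decide +kernel

theorem runTwo_three_small : runTwo 2 3 11 200 5 [(0, 1), (1, 2)] = true := by decide +kernel

theorem runTwo_five_small : runTwo 4 5 8 200 3 [(0, 1), (1, 3), (2, 4), (3, 2)] = true := by
  decide +kernel

theorem runTwo_seven_small : runTwo 3 7 6 200 3 [(0, 2), (1, 1), (2, 4)] = true := by
  decide +kernel

/-- Passes on the list of all pairs `(j, f j)` for `i ≤ j < i + k`, with evaluated entries. -/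
def withMap {α : Sort*} (f : ℕ → ℕ) (k : ℕ) : ℕ → (List (ℕ × ℕ) → α) → α :=
  Nat.rec (fun _ F => F []) (fun _ ih i F =>
    force i fun i => force (f i) fun x => ih i.succ fun l => F ((i, x) :: l)) k

theorem withMap_eq {α : Sort*} (f : ℕ → ℕ) (k i : ℕ) (F : List (ℕ × ℕ) → α) :
    withMap f k i F = F ((List.range' i k).map fun j => (j, f j)) := by
  induction k generalizing i F with
  | zero => rfl
  | succ k ih =>
    change force i (fun i => force (f i) fun x => withMap f k i.succ fun l => F ((i, x) :: l)) = _
    rw [force_eq, force_eq, ih, List.range'_succ, List.map_cons]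

/-- No `s` with `1 < s ≤ A` satisfies `s + x ≡ 1` modulo `P`. -/
def avoids (A P x : ℕ) : Bool :=
  Nat.beq (x.mod P) 0 || Nat.ble ((x.mod P).add A) P

theorem not_dvd_of_avoids {A P x u : ℕ} (h : avoids A P x = true) (hA : A ≤ P) (hu : u + 1 < A) :
    ¬ P ∣ x + (u + 1) := by
  intro hdvd
  have h1 : P ∣ x % P + (u + 1) :=
    (((Nat.mod_modEq x P).add_right _).dvd_iff dvd_rfl).2 hdvd
  rcases Bool.or_eq_true_iff.1 h with h | h
  · have h2 : x % P = 0 := Nat.eq_of_beq_eq_true h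
    rw [h2, zero_add] at h1
    have := Nat.le_of_dvd (Nat.succ_pos u) h1
    omega
  · have h2 : x % P + A ≤ P := Nat.le_of_ble_eq_true h
    have := Nat.le_of_dvd (by omega) h1
    omega

/-- Runs `avoids` for all sums of two factorials of numbers from `2` to `k + 1`. -/
def avoidsTwo (A B k : ℕ) : Bool :=
  force (2 ^ A) fun A => force (2 ^ B) fun P =>
    withMap (fun i => (i.factorial).mod P) k 2 fun l =>
      l.all fun e => l.all fun e' => avoids A P (e.2.add e'.2)

theorem avoids_factorial : (withMap (fun i => (i.factorial).mod (2 ^ 420)) 431 2 fun l =>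
    force (2 ^ 389) fun A => force (2 ^ 420) fun P => l.all fun e => avoids A P e.2) = true := by
  decide +kernel

theorem avoidsTwo_large : avoidsTwo 167 200 207 = true := by decide +kernel

theorem avoidsTwo_small : avoidsTwo 53 70 71 = true := by decide +kernel

/-- Whether `(n, m₁, m₂)` is one of the solutions. -/
def isListed (n m₁ m₂ : ℕ) : Bool :=
  decide ((n, m₁, m₂) ∈ [(2, 2, 2), (3, 2, 2), (4, 4, 3), (5, 4, 2), (5, 5, 3), (7, 6, 2),
    (8, 6, 3)])

/-- Whether `C - f - f'` is at most `1`, or not a divisor of `Q`, or a listed solution. -/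
def smallCheck (Q n C m₁ f m₂ f' : ℕ) : Bool :=
  force (f.add f') fun F => Nat.ble C F.succ || Nat.blt m₁ m₂ ||
    Nat.blt 0 (Q.mod (C.sub F)) || isListed n m₁ m₂

theorem small_cases : (withMap (fun i => (i.mul (Nat.pow 2 i)).succ) 70 0 fun l =>
    withMap Nat.factorial 22 2 fun l' => force (3 ^ 11 * 5 ^ 8 * 7 ^ 6) fun Q =>
    l.all fun e => l'.all fun e' => l'.all fun e'' =>
      smallCheck Q e.1 e.2 e'.1 e'.2 e''.1 e''.2) = true := by decide +kernel

theorem factorial_mod_mem {P k m : ℕ} (hk : 0 < k) (hP : P ∣ (k + 1).factorial) (hm : 2 ≤ m) :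
    ∃ i ∈ List.range' 2 k, m.factorial ≡ i.factorial [MOD P] := by
  rcases le_or_gt m (k + 1) with h | h
  · exact ⟨m, by simp; omega, rfl⟩
  · exact ⟨k + 1, by simp; omega,
      (Nat.modEq_zero_iff_dvd.2 (hP.trans (Nat.factorial_dvd_factorial h.le))).trans
        (Nat.modEq_zero_iff_dvd.2 hP).symm⟩

set_option exponentiation.threshold 500 in
theorem not_dvd_factorial_add {m u : ℕ} (hm : 2 ≤ m) (hu : u + 1 < 2 ^ 389) :
    ¬ 2 ^ 420 ∣ m.factorial + (u + 1) := by
  have h := avoids_factorial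
  simp only [withMap_eq, force_eq, List.all_eq_true, List.mem_map, forall_exists_index, and_imp,
    forall_apply_eq_imp_iff₂] at h
  have hP : 2 ^ 420 ∣ (431 + 1).factorial := by decide +kernel
  obtain ⟨i, hi, him⟩ := factorial_mod_mem (by norm_num) hP hm
  intro hdvd
  have h1 : m.factorial ≡ i.factorial % 2 ^ 420 [MOD 2 ^ 420] := him.trans (Nat.mod_modEq _ _).symm
  exact not_dvd_of_avoids (h i hi) (Nat.pow_le_pow_right (by norm_num) (by norm_num)) hu
    (((h1.add_right _).dvd_iff dvd_rfl).1 hdvd)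

theorem not_dvd_factorial_add_factorial_add {A B k m m' u : ℕ} (h : avoidsTwo A B k = true)
    (hAB : A ≤ B) (hk : 0 < k) (hP : 2 ^ B ∣ (k + 1).factorial) (hm : 2 ≤ m) (hm' : 2 ≤ m')
    (hu : u + 1 < 2 ^ A) : ¬ 2 ^ B ∣ m.factorial + m'.factorial + (u + 1) := by
  simp only [avoidsTwo, withMap_eq, force_eq, List.all_eq_true, List.mem_map, forall_exists_index,
    and_imp, forall_apply_eq_imp_iff₂] at h
  obtain ⟨i, hi, him⟩ := factorial_mod_mem hk hP hm
  obtain ⟨j, hj, hjm⟩ := factorial_mod_mem hk hP hm'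
  intro hdvd
  have h1 : m.factorial + m'.factorial ≡ i.factorial % 2 ^ B + j.factorial % 2 ^ B [MOD 2 ^ B] :=
    (him.trans (Nat.mod_modEq _ _).symm).add (hjm.trans (Nat.mod_modEq _ _).symm)
  exact not_dvd_of_avoids (h i hi j hj) (Nat.pow_le_pow_right (by norm_num) hAB) hu
    (((h1.add_right _).dvd_iff dvd_rfl).1 hdvd)

theorem mem_of_small {n m₁ m₂ s : ℕ} (hn : n < 70) (hm₁ : m₁ < 24) (hm₂ : 2 ≤ m₂) (hm : m₂ ≤ m₁)
    (hs : 1 < s) (hsQ : s ∣ 3 ^ 11 * 5 ^ 8 * 7 ^ 6)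
    (heq : n * 2 ^ n + 1 = m₁.factorial + m₂.factorial + s) :
    (n, m₁, m₂) ∈ [(2, 2, 2), (3, 2, 2), (4, 4, 3), (5, 4, 2), (5, 5, 3), (7, 6, 2),
      (8, 6, 3)] := by
  have h := small_cases
  simp only [withMap_eq, force_eq, List.all_eq_true, List.mem_map, forall_exists_index, and_imp,
    forall_apply_eq_imp_iff₂] at h
  have h1 := h n (by simp; omega) m₁ (by simp; omega) m₂ (by simp; omega)
  simp only [smallCheck, force_eq, Bool.or_eq_true] at h1
  rcases h1 with ((h1 | h1) | h1) | h1
  · have h2 : n * 2 ^ n + 1 ≤ m₁.factorial + m₂.factorial + 1 := Nat.le_of_ble_eq_true h1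
    omega
  · have h2 : m₁ + 1 ≤ m₂ := Nat.le_of_ble_eq_true h1
    omega
  · have h2 : 0 + 1 ≤ (3 ^ 11 * 5 ^ 8 * 7 ^ 6) % (n * 2 ^ n + 1 - (m₁.factorial + m₂.factorial)) :=
      Nat.le_of_ble_eq_true h1
    rw [heq, Nat.add_sub_cancel_left, Nat.mod_eq_zero_of_dvd hsQ] at h2
    omega
  · exact of_decide_eq_true h1

end HenselSearch

namespace IsSolution

variable {n m₁ m₂ a b c : ℕ}

open HenselSearch

theorem not_pow_dvd_of_runOne (h : IsSolution n m₁ m₂ a b c) {o p K N J₀ : ℕ}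
    {cls : List (ℕ × ℕ)} (hp : 2 ≤ p) (ho0 : 0 < o) (ho : 2 ^ o ≡ 1 [MOD p])
    (hcls : IsClassList o p cls) (hJ₀ : J₀ ≤ K) (hK : K ≠ 0) (hrun : runOne o p K N J₀ cls = true)
    (hn : n < N) (hm₁ : p * K ≤ m₁) : ¬ p ^ K ∣ 3 ^ a * 5 ^ b * 7 ^ c := by
  intro hdvd
  obtain ⟨g, hg⟩ := exists_dvd_add (pow_pos (by omega : 0 < p) K) m₂.factorial
  refine excluded_of_runOne hp ho0 ho hcls hJ₀ hK hrun h.two_le hg n hn ?_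
  have h1 : n * 2 ^ n + (1 + g) =
      m₁.factorial + (m₂.factorial + g) + 3 ^ a * 5 ^ b * 7 ^ c := by
    have := h.eq
    omega
  rw [h1]
  exact dvd_add (dvd_add (pow_dvd_factorial_of_mul_le (by omega) hm₁) hg) hdvd

theorem not_pow_dvd_of_runTwo (h : IsSolution n m₁ m₂ a b c) {o p K N J₀ : ℕ}
    {cls : List (ℕ × ℕ)} (hp : 2 ≤ p) (ho0 : 0 < o) (ho : 2 ^ o ≡ 1 [MOD p])
    (hcls : IsClassList o p cls) (hJ₀ : J₀ ≤ K) (hK : K ≠ 0) (hrun : runTwo o p K N J₀ cls = true)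
    (hn : n < N) : ¬ p ^ K ∣ 3 ^ a * 5 ^ b * 7 ^ c := by
  intro hdvd
  obtain ⟨g₂, hg₂⟩ := exists_dvd_add (pow_pos (by omega : 0 < p) K) m₂.factorial
  obtain ⟨g₁, hg₁⟩ := exists_dvd_add (pow_pos (by omega : 0 < p) K) m₁.factorial
  refine excluded_of_runTwo hp ho0 ho hcls hJ₀ hK hrun h.two_le hg₂ h.le hg₁ n hn ?_
  have h1 : n * 2 ^ n + (1 + g₂ + g₁) =
      (m₁.factorial + g₁) + (m₂.factorial + g₂) + 3 ^ a * 5 ^ b * 7 ^ c := by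
    have := h.eq
    omega
  rw [h1]
  exact dvd_add (dvd_add hg₁ hg₂) hdvd

/-- The equation modulo `2 ^ B`. -/
theorem exists_two_pow_dvd (h : IsSolution n m₁ m₂ a b c) {B : ℕ} (hB : B ≤ n) :
    ∃ u, 3 ^ a * 5 ^ b * 7 ^ c = u + 2 ∧ 2 ^ B ∣ m₁.factorial + m₂.factorial + (u + 1) := by
  have heq := h.eq
  obtain ⟨u, hu⟩ := Nat.exists_eq_add_of_lt h.one_lt
  refine ⟨u, by omega, ?_⟩
  have h1 : m₁.factorial + m₂.factorial + (u + 1) = n * 2 ^ n := by omega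
  rw [h1]
  exact (pow_dvd_pow 2 hB).mul_left n

set_option exponentiation.threshold 500 in
theorem lt_eight_hundred_forty (h : IsSolution n m₁ m₂ a b c) (hn : 420 ≤ n) : m₁ < 840 := by
  by_contra! hm₁
  have hlt := h.lt_two_pow
  have hs := Nat.le_of_dvd (by positivity) (dvd_of_forall_not_pow_dvd
    (h.not_pow_dvd_of_runOne (by norm_num) (by norm_num) (by decide) isClassList_three
      (by norm_num) (by norm_num) runOne_three hlt (by omega))
    (h.not_pow_dvd_of_runOne (by norm_num) (by norm_num) (by decide) isClassList_five
      (by norm_num) (by norm_num) runOne_five hlt (by omega))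
    (h.not_pow_dvd_of_runOne (by norm_num) (by norm_num) (by decide) isClassList_seven
      (by norm_num) (by norm_num) runOne_seven hlt (by omega)))
  obtain ⟨u, hu, hdvd⟩ := h.exists_two_pow_dvd hn
  rw [add_assoc] at hdvd
  have hbound : 3 ^ 80 * 5 ^ 57 * 7 ^ 46 < 2 ^ 389 := by decide +kernel
  refine not_dvd_factorial_add h.two_le (lt_trans (by omega) (hs.trans_lt hbound))
    ((Nat.dvd_add_right (pow_dvd_factorial_of_mul_le two_pos hm₁)).1 hdvd)

theorem lt_two_pow_forty (h : IsSolution n m₁ m₂ a b c) : n < 2 ^ 40 := by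
  rcases lt_or_ge n 420 with hn | hn
  · exact hn.trans (by norm_num)
  have hm : m₁.factorial + m₂.factorial ≤ 2 ^ 8401 := by
    have h1 := factorial_le_two_pow_s11 (h.lt_eight_hundred_forty hn).le (B := 10) (by norm_num)
    have h2 := h.factorial_le
    rw [pow_succ]
    omega
  have h1 := h.le_of_factorial_add_le (d := 40) (by norm_num) h.lt_two_pow (by norm_num) hm
  have h2 := h.le_of_factorial_add_le (d := 15) (by norm_num) (h1.trans_lt (by norm_num))
    (by norm_num) hm
  exact h2.trans_lt (by norm_num)

theorem lt_two_hundred (h : IsSolution n m₁ m₂ a b c) : n < 200 := by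
  by_contra! hn
  have hlt := h.lt_two_pow_forty
  have hs := Nat.le_of_dvd (by positivity) (dvd_of_forall_not_pow_dvd
    (h.not_pow_dvd_of_runTwo (by norm_num) (by norm_num) (by decide) isClassList_three
      (by norm_num) (by norm_num) runTwo_three hlt)
    (h.not_pow_dvd_of_runTwo (by norm_num) (by norm_num) (by decide) isClassList_five
      (by norm_num) (by norm_num) runTwo_five hlt)
    (h.not_pow_dvd_of_runTwo (by norm_num) (by norm_num) (by decide) isClassList_seven
      (by norm_num) (by norm_num) runTwo_seven hlt))
  obtain ⟨u, hu, hdvd⟩ := h.exists_two_pow_dvd hn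
  have hbound : 3 ^ 34 * 5 ^ 24 * 7 ^ 20 < 2 ^ 167 := by norm_num
  exact not_dvd_factorial_add_factorial_add avoidsTwo_large (by norm_num) (by norm_num)
    (by decide +kernel) (h.two_le.trans h.le) h.two_le
    (lt_trans (by omega) (hs.trans_lt hbound)) hdvd

theorem smooth_dvd (h : IsSolution n m₁ m₂ a b c) :
    3 ^ a * 5 ^ b * 7 ^ c ∣ 3 ^ 11 * 5 ^ 8 * 7 ^ 6 :=
  dvd_of_forall_not_pow_dvd
    (h.not_pow_dvd_of_runTwo (by norm_num) (by norm_num) (by decide) isClassList_three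
      (by norm_num) (by norm_num) runTwo_three_small h.lt_two_hundred)
    (h.not_pow_dvd_of_runTwo (by norm_num) (by norm_num) (by decide) isClassList_five
      (by norm_num) (by norm_num) runTwo_five_small h.lt_two_hundred)
    (h.not_pow_dvd_of_runTwo (by norm_num) (by norm_num) (by decide) isClassList_seven
      (by norm_num) (by norm_num) runTwo_seven_small h.lt_two_hundred)

theorem lt_seventy (h : IsSolution n m₁ m₂ a b c) : n < 70 := by
  by_contra! hn
  have hs := Nat.le_of_dvd (by positivity) h.smooth_dvd
  obtain ⟨u, hu, hdvd⟩ := h.exists_two_pow_dvd hn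
  have hbound : 3 ^ 11 * 5 ^ 8 * 7 ^ 6 < 2 ^ 53 := by norm_num
  exact not_dvd_factorial_add_factorial_add avoidsTwo_small (by norm_num) (by norm_num)
    (by decide +kernel) (h.two_le.trans h.le) h.two_le
    (lt_trans (by omega) (hs.trans_lt hbound)) hdvd

theorem mem (h : IsSolution n m₁ m₂ a b c) : (n, m₁, m₂) ∈ [(2, 2, 2), (3, 2, 2), (4, 4, 3),
    (5, 4, 2), (5, 5, 3), (7, 6, 2), (8, 6, 3)] := by
  have hn := h.lt_seventy
  have hm₁ : m₁ < 24 := by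
    by_contra! hm
    have h1 : (24).factorial ≤ m₁.factorial := Nat.factorial_le hm
    have h2 : n * 2 ^ n ≤ 69 * 2 ^ 69 :=
      Nat.mul_le_mul (by omega) (Nat.pow_le_pow_right (by norm_num) (by omega))
    have h3 : 69 * 2 ^ 69 < (24).factorial := by decide +kernel
    have := h.eq
    have := h.one_lt
    omega
  exact mem_of_small hn hm₁ h.two_le h.le h.one_lt h.smooth_dvd h.eq

end IsSolution

end

/-- Theorem 3 (non-degenerate solutions): all non-degenerate solutions of
`C_n = m₁! + m₂! + s` with `C_n = n·2^n + 1`, `m₁ ≥ m₂ ≥ 1` and `s` a positive integer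
whose prime factors lie in `{2, 3, 5, 7}` are the seven listed tuples. Non-degeneracy
means that none of `m₁!`, `m₂!`, `m₁! + m₂!` equals `n·2^n` or `1`. -/
theorem cullen_two_factorials_S_unit_nondegenerate
    (n m₁ m₂ s : ℕ) (hn : 0 < n) (hm₁ : 0 < m₁) (hm₂ : 0 < m₂) (hm : m₂ ≤ m₁)
    (hs : 0 < s) (hsP : ∀ p, p.Prime → p ∣ s → p ∈ ({2, 3, 5, 7} : Finset ℕ))
    (heq : n * 2 ^ n + 1 = Nat.factorial m₁ + Nat.factorial m₂ + s)
    (hnd₁ : Nat.factorial m₁ ≠ n * 2 ^ n) (hnd₁' : Nat.factorial m₁ ≠ 1)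
    (hnd₂ : Nat.factorial m₂ ≠ n * 2 ^ n) (hnd₂' : Nat.factorial m₂ ≠ 1)
    (hnd₃ : Nat.factorial m₁ + Nat.factorial m₂ ≠ n * 2 ^ n)
    (hnd₃' : Nat.factorial m₁ + Nat.factorial m₂ ≠ 1) :
    (n, m₁, m₂, s) ∈ ({(2, 2, 2, 5), (3, 2, 2, 21), (4, 4, 3, 35), (5, 4, 2, 135),
      (5, 5, 3, 35), (7, 6, 2, 175), (8, 6, 3, 1323)} : Set (ℕ × ℕ × ℕ × ℕ)) := by
  have hm₂' : 2 ≤ m₂ := by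
    by_contra! h
    exact hnd₂' (Nat.factorial_eq_one.2 (by omega))
  have h2 : ¬ 2 ∣ s := by
    have e1 : 2 ∣ m₁.factorial := Nat.dvd_factorial two_pos (hm₂'.trans hm)
    have e2 : 2 ∣ m₂.factorial := Nat.dvd_factorial two_pos hm₂'
    have e3 : 2 ∣ n * 2 ^ n := (dvd_pow_self 2 hn.ne').mul_left n
    omega
  obtain ⟨a, b, c, rfl⟩ := exists_eq_of_smooth hs.ne' h2 hsP
  have hmem := IsSolution.mem (n := n) (a := a) (b := b) (c := c) ⟨hm, hm₂', by omega, heq⟩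
  simp only [List.mem_cons, Prod.mk.injEq, List.not_mem_nil, or_false] at hmem
  simp only [Set.mem_insert_iff, Set.mem_singleton_iff, Prod.mk.injEq]
  rcases hmem with ⟨rfl, rfl, rfl⟩ | ⟨rfl, rfl, rfl⟩ | ⟨rfl, rfl, rfl⟩ | ⟨rfl, rfl, rfl⟩ |
    ⟨rfl, rfl, rfl⟩ | ⟨rfl, rfl, rfl⟩ | ⟨rfl, rfl, rfl⟩ <;>
    norm_num [Nat.factorial] at heq ⊢ <;> omega
end

section
/- Let C_n = n·2^n + 1 and let S denote the set of positive integers all of whose prime factors lie in {2, 3, 5, 7}. Suppose n, m₁, m₂ are positive integers with m₁ ≥ m₂, s ∈ S, n < 10^66, and C_n = m₁! + m₂! + s, and suppose the solution is degenerate, i.e., at least one of the three quantities m₁!, m₂!, m₁! + m₂! equals n·2^n or equals 1. If it is not the case that m₂ = 1, m₁ > 10⁴ and C_n ≤ (m₁!)² hold simultaneously, then (n, m₁, m₂, s) is one of the twelve tuples (1, 1, 1, 1), (2, 1, 1, 7), (2, 2, 1, 6), (2, 3, 1, 2), (2, 3, 2, 1), (3, 3, 1, 18), (4, 1, 1, 63),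 (4, 4, 1, 40), (5, 5, 1, 40), (6, 3, 1, 378), (6, 4, 1, 360), (9, 6, 1, 3888). -/
open Nat

/-! ### Iterating a step function that signals failure by `0` -/

/-- `iterTwoPow f k x` applies `f` to `x` in total `2 ^ k` times and returns `0` as soon as a
partial result is `0`. -/
def iterTwoPow (f : ℕ → ℕ) : ℕ → ℕ → ℕ
  | 0, x => f x
  | k + 1, x =>
    match iterTwoPow f k x with
    | 0 => 0
    | y + 1 => iterTwoPow f k (y + 1)

theorem iterTwoPow_spec {f e : ℕ → ℕ} {P : ℕ → Prop}
    (hf : ∀ m, f (e m) ≠ 0 → P m ∧ f (e m) = e (m + 1)) (k m : ℕ)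
    (h : iterTwoPow f k (e m) ≠ 0) :
    (∀ i < 2 ^ k, P (m + i)) ∧ iterTwoPow f k (e m) = e (m + 2 ^ k) := by
  induction k generalizing m with
  | zero =>
    obtain ⟨h1, h2⟩ := hf m h
    refine ⟨fun i hi => ?_, h2⟩
    obtain rfl : i = 0 := by simpa using hi
    exact h1
  | succ k ih =>
    have key : iterTwoPow f k (e m) ≠ 0 ∧
        iterTwoPow f (k + 1) (e m) = iterTwoPow f k (iterTwoPow f k (e m)) := by
      rw [iterTwoPow] at h ⊢
      split at h
      · exact absurd rfl h
      · rename_i y hy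
        simp [hy]
    obtain ⟨h1, h2⟩ := ih m key.1
    rw [key.2, h2] at h ⊢
    obtain ⟨h3, h4⟩ := ih _ h
    refine ⟨fun i hi => ?_, by rw [h4]; ring_nf⟩
    by_cases hik : i < 2 ^ k
    · exact h1 i hik
    · have := h3 (i - 2 ^ k) (by rw [pow_succ] at hi; omega)
      rwa [show m + 2 ^ k + (i - 2 ^ k) = m + i by omega] at this

/-! ### Odd parts of factorials -/

/-- The largest odd divisor of `m !`. -/
def oddFactorial (m : ℕ) : ℕ := m ! / 2 ^ (m !).factorization 2

theorem two_pow_mul_oddFactorial (m : ℕ) :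
    2 ^ (m !).factorization 2 * oddFactorial m = m ! :=
  Nat.ordProj_mul_ordCompl_eq_self _ _

theorem odd_oddFactorial (m : ℕ) : Odd (oddFactorial m) := by
  rw [← Nat.not_even_iff_odd, even_iff_two_dvd]
  exact Nat.not_dvd_ordCompl Nat.prime_two (Nat.factorial_ne_zero m)

theorem factorization_two_factorial_lt {m : ℕ} (hm : m ≠ 0) : (m !).factorization 2 < m := by
  have h := sub_one_mul_padicValNat_factorial_lt_of_ne_zero 2 hm
  rw [Nat.factorization_def _ Nat.prime_two]
  simpa using h

/-- Sends the code `m * 2 ^ K + r` of a pair `(m, r)` to that of `(m + 1, r q mod 2 ^ K)`, where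
`q = (m + 1) / gcd (m + 1) (2 ^ 64)`, or to `0` if `check r` fails or `q` is even. -/
def oddFactorialStep (K : ℕ) (check : ℕ → Bool) (x : ℕ) : ℕ :=
  cond (check (x % 2 ^ K) &&
      Nat.beq ((x / 2 ^ K + 1) / Nat.gcd (x / 2 ^ K + 1) (2 ^ 64) % 2) 1)
    ((x / 2 ^ K + 1) * 2 ^ K +
      x % 2 ^ K * ((x / 2 ^ K + 1) / Nat.gcd (x / 2 ^ K + 1) (2 ^ 64)) % 2 ^ K)
    0

/-- The pair `(m, oddFactorial m mod 2 ^ K)` as a single number. -/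
def oddFactorialCode (K m : ℕ) : ℕ := m * 2 ^ K + oddFactorial m % 2 ^ K

theorem oddFactorialStep_spec (K : ℕ) (check : ℕ → Bool) (m : ℕ)
    (h : oddFactorialStep K check (oddFactorialCode K m) ≠ 0) :
    check (oddFactorial m % 2 ^ K) = true ∧
      oddFactorialStep K check (oddFactorialCode K m) = oddFactorialCode K (m + 1) := by
  have hK : 0 < 2 ^ K := by positivity
  have hlt : oddFactorial m % 2 ^ K < 2 ^ K := Nat.mod_lt _ hK
  have hdiv : oddFactorialCode K m / 2 ^ K = m := by
    rw [oddFactorialCode, mul_comm, Nat.mul_add_div hK, Nat.div_eq_of_lt hlt, add_zero]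
  have hmod : oddFactorialCode K m % 2 ^ K = oddFactorial m % 2 ^ K := by
    rw [oddFactorialCode, mul_comm, Nat.mul_add_mod, Nat.mod_mod]
  unfold oddFactorialStep at h ⊢
  rw [hdiv, hmod] at h ⊢
  set q := (m + 1) / Nat.gcd (m + 1) (2 ^ 64) with hq
  cases hc : (check (oddFactorial m % 2 ^ K) && Nat.beq (q % 2) 1) with
  | false => simp [hc] at h
  | true =>
    rw [Bool.and_eq_true, Nat.beq_eq] at hc
    refine ⟨hc.1, ?_⟩
    obtain ⟨j, -, hj⟩ := (Nat.dvd_prime_pow Nat.prime_two).1 (Nat.gcd_dvd_right (m + 1) (2 ^ 64))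
    have hm : 2 ^ j * q = m + 1 := by
      rw [hq, ← hj]
      exact Nat.mul_div_cancel' (Nat.gcd_dvd_left _ _)
    have hodd : oddFactorial (m + 1) = oddFactorial m * q := by
      unfold oddFactorial
      rw [Nat.factorial_succ, Nat.ordCompl_mul, mul_comm, ← hm,
        Nat.ordCompl_pow_mul_of_not_dvd j Nat.prime_two (by omega)]
    rw [cond_true, oddFactorialCode, hodd, Nat.mul_mod (oddFactorial m) q, Nat.mul_mod _ q,
      Nat.mod_mod]

theorem check_oddFactorial {K k m : ℕ} {check : ℕ → Bool} {x : ℕ}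
    (hx : x = oddFactorialCode K m)
    (h : Nat.ble 1 (iterTwoPow (oddFactorialStep K check) k x) = true) :
    ∀ i < 2 ^ k, check (oddFactorial (m + i) % 2 ^ K) = true := by
  subst hx
  exact (iterTwoPow_spec (P := fun m => check (oddFactorial m % 2 ^ K) = true)
    (oddFactorialStep_spec K check) k m (Nat.one_le_iff_ne_zero.1 (Nat.le_of_ble_eq_true h))).1

/-! ### The 2-adic logarithm modulo a power of two -/

/-- `x ^ (16 ^ j) mod M`. -/
def powIter (M x : ℕ) : ℕ → ℕ
  | 0 => Nat.mod x M
  | j + 1 => Nat.mod (Nat.pow (powIter M x j) 16) M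

/-- For odd `x`, the class modulo `2 ^ (4 J)` of the 2-adic logarithm of `x`. -/
def twoLog (J x : ℕ) : ℕ := powIter (Nat.pow 2 (8 * J)) x J / 2 ^ (4 * J)

/-- Holds unless the multiple by `lam` of the logarithm of `r` is within `E` of
a multiple of `2 ^ (4 J)`. -/
def logCheck (J lam E r : ℕ) : Bool :=
  Nat.blt (2 * E) ((lam * twoLog J r + E) % 2 ^ (4 * J))

/-! ### Kernel computations -/

theorem residue_check :
    Nat.ble 1 (iterTwoPow (oddFactorialStep 256 fun r => Nat.blt (r + 10 ^ 66) (2 ^ 256)) 14 1)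
      = true := by
  decide +kernel

theorem log_check_large :
    Nat.ble 1 (iterTwoPow (oddFactorialStep (4 * 180)
      (logCheck 180
        1822348465445277486923250391488760359779134341213261983605425628230552119809391863322677116678645432593266044384919575711778512124546488092427628538018438515950691536773931199085292973012163934495739373281444360648388
        (3 * 10 ^ 66 * 2 ^ 481))) 9 (11 * 2 ^ (4 * 180) + 155925)) = true := by
  decide +kernel

theorem log_check_small :
    Nat.ble 1 (iterTwoPow (oddFactorialStep (4 * 16)
      (logCheck 16 2415152845884983644 (1760 * 6825975861104))) 8
      (11 * 2 ^ (4 * 16) + 155925)) = true := by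
  decide +kernel

/-- `f k` holds for all `k < b`. -/
def allBelow (f : ℕ → Bool) : ℕ → Bool
  | 0 => true
  | k + 1 => f k && allBelow f k

/-- If `n 2 ^ n - F` is a divisor of `210 ^ 800`, then `(n, m)` is one of eleven pairs. -/
def pairCheck (m F n : ℕ) : Bool :=
  cond (Nat.beq (210 ^ 800 % (n * 2 ^ n - F)) 0)
    (decide ((n, m) ∈ [(1, 1), (2, 1), (2, 2), (2, 3), (3, 3), (4, 1), (4, 4), (5, 5), (6, 3),
      (6, 4), (9, 6)])) true

/-- `pairCheck m F n` for all `n < b`; the case split forces the evaluation of `F`. -/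
def factorialPairCheck (b m : ℕ) : ℕ → Bool
  | 0 => true
  | F + 1 => cond (Nat.beq m 0) true (allBelow (pairCheck m (F + 1)) b)

theorem pair_check_smooth_factorial :
    allBelow (fun m => factorialPairCheck 740 m (m !)) 11 = true := by
  decide +kernel

theorem pair_check_small :
    allBelow (fun m => factorialPairCheck 100 m (m !)) 29 = true := by
  decide +kernel

/-! ### Additivity of the logarithm and short dual vectors -/

/-- `l` is a logarithm of `x` modulo `2 ^ N`. -/
def IsTwoLog (N : ℕ) (x l : ℤ) : Prop := x ^ 2 ^ N ≡ 1 + 2 ^ N * l [ZMOD 2 ^ (2 * N)]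

theorem IsTwoLog.mul {N : ℕ} {x y k l : ℤ} (hx : IsTwoLog N x k) (hy : IsTwoLog N y l) :
    IsTwoLog N (x * y) (k + l) := by
  unfold IsTwoLog at *
  rw [mul_pow]
  refine (Int.ModEq.mul hx hy).trans (Int.modEq_iff_dvd.2 ⟨-(k * l), ?_⟩)
  ring

theorem IsTwoLog.pow {N : ℕ} {x l : ℤ} (hx : IsTwoLog N x l) (b : ℕ) :
    IsTwoLog N (x ^ b) (b * l) := by
  induction b with
  | zero => simp [IsTwoLog, Int.ModEq.refl]
  | succ b ih =>
    have := ih.mul hx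
    rw [pow_succ]
    convert this using 1
    push_cast
    ring

theorem IsTwoLog.unique {N : ℕ} {x k l : ℤ} (hk : IsTwoLog N x k) (hl : IsTwoLog N x l) :
    k ≡ l [ZMOD 2 ^ N] := by
  obtain ⟨c, hc⟩ := (Int.ModEq.trans hk.symm hl).dvd
  have h2 : (2 : ℤ) ^ N ≠ 0 := by positivity
  refine Int.modEq_iff_dvd.2 ⟨c, mul_left_cancel₀ h2 ?_⟩
  rw [two_mul, pow_add] at hc
  linear_combination hc

theorem two_pow_dvd_pow_sub_pow {x y : ℤ} (hx : Odd x) (hy : Odd y) {N : ℕ}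
    (h : (2 : ℤ) ^ N ∣ x - y) (j : ℕ) : (2 : ℤ) ^ (N + j) ∣ x ^ 2 ^ j - y ^ 2 ^ j := by
  induction j with
  | zero => simpa using h
  | succ j ih =>
    have hev : (2 : ℤ) ∣ x ^ 2 ^ j + y ^ 2 ^ j := (hx.pow.add_odd hy.pow).two_dvd
    have hfac : x ^ 2 ^ (j + 1) - y ^ 2 ^ (j + 1) =
        (x ^ 2 ^ j - y ^ 2 ^ j) * (x ^ 2 ^ j + y ^ 2 ^ j) := by
      rw [pow_succ 2 j, pow_mul, pow_mul]
      ring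
    rw [← add_assoc, pow_succ, hfac]
    exact mul_dvd_mul ih hev

theorem IsTwoLog.of_dvd_add {N : ℕ} (hN : 0 < N) {x y l : ℤ} (hx : Odd x) (hy : Odd y)
    (h : (2 : ℤ) ^ N ∣ x + y) (hl : IsTwoLog N y l) : IsTwoLog N x l := by
  have h1 := two_pow_dvd_pow_sub_pow hx hy.neg (by simpa using h) N
  rw [Even.neg_pow ((Nat.even_pow' hN.ne').2 even_two), ← two_mul] at h1
  exact (Int.modEq_iff_dvd.2 h1).symm.trans hl

theorem powIter_eq (M x j : ℕ) : powIter M x j = x ^ 16 ^ j % M := by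
  induction j with
  | zero => rw [pow_zero, pow_one]; rfl
  | succ j ih =>
    change powIter M x j ^ 16 % M = _
    rw [ih, ← Nat.pow_mod, ← pow_mul, pow_succ]

theorem isTwoLog_twoLog {J : ℕ} {x : ℕ} (hx : Odd x) :
    IsTwoLog (4 * J) x (twoLog J x) := by
  have hxz : Odd (x : ℤ) := by exact_mod_cast hx
  have h16 : 16 ^ J = 2 ^ (4 * J) := by rw [pow_mul]; norm_num
  have h1 : ((2 : ℤ) ^ (4 * J)) ∣ (x : ℤ) ^ 2 ^ (4 * J) - 1 := by
    have := two_pow_dvd_pow_sub_pow (N := 0) hxz odd_one (by simp) (4 * J)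
    simpa using this
  set y := powIter (Nat.pow 2 (8 * J)) x J with hy
  have hy' : y = x ^ 2 ^ (4 * J) % 2 ^ (8 * J) := by rw [hy, powIter_eq, h16, Nat.pow_eq]
  have h2 : (x : ℤ) ^ 2 ^ (4 * J) ≡ y [ZMOD 2 ^ (2 * (4 * J))] := by
    rw [hy', show 2 * (4 * J) = 8 * J by ring]
    push_cast
    exact (Int.mod_modEq _ _).symm
  have h3 : ((2 : ℤ) ^ (4 * J)) ∣ y - 1 := by
    have h4 : ((2 : ℤ) ^ (4 * J)) ∣ y - (x : ℤ) ^ 2 ^ (4 * J) :=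
      (pow_dvd_pow 2 (by omega)).trans h2.dvd
    have := dvd_add h4 h1
    simpa using this
  refine h2.trans ?_
  rcases Nat.eq_zero_or_pos J with rfl | hJ
  · exact Int.modEq_iff_dvd.2 (by simp)
  have hP : 1 < 2 ^ (4 * J) := Nat.one_lt_two_pow (by omega)
  have h5 : y % 2 ^ (4 * J) = 1 := by
    have : (y : ℤ) ≡ 1 [ZMOD ((2 ^ (4 * J) : ℕ) : ℤ)] :=
      (Int.modEq_iff_dvd.2 (by push_cast; exact h3)).symm
    have h6 : y ≡ 1 [MOD 2 ^ (4 * J)] := (Int.natCast_modEq_iff).1 (by exact_mod_cast this)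
    rw [h6, Nat.mod_eq_of_lt hP]
  have h7 := Nat.mod_add_div y (2 ^ (4 * J))
  rw [h5] at h7
  have h8 : (y : ℤ) = 1 + 2 ^ (4 * J) * (twoLog J x : ℤ) := by
    rw [twoLog, ← hy]
    exact_mod_cast h7.symm
  rw [h8]

/-- The product `3 ^ b * 5 ^ c * 7 ^ d`. -/
def oddSmooth (b c d : ℕ) : ℕ := 3 ^ b * 5 ^ c * 7 ^ d

theorem odd_oddSmooth (b c d : ℕ) : Odd (oddSmooth b c d) :=
  ((Odd.pow (by decide)).mul (Odd.pow (by decide))).mul (Odd.pow (by decide))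

theorem two_pow_le_oddSmooth (b c d : ℕ) : 2 ^ (b + c + d) ≤ oddSmooth b c d := by
  rw [pow_add, pow_add, oddSmooth]
  gcongr <;> norm_num

theorem isTwoLog_oddSmooth (J b c d : ℕ) :
    IsTwoLog (4 * J) (oddSmooth b c d)
      (b * twoLog J 3 + c * twoLog J 5 + d * twoLog J 7) := by
  have h3 := (isTwoLog_twoLog (J := J) (x := 3) (by decide)).pow b
  have h5 := (isTwoLog_twoLog (J := J) (x := 5) (by decide)).pow c
  have h7 := (isTwoLog_twoLog (J := J) (x := 7) (by decide)).pow d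
  have := (h3.mul h5).mul h7
  unfold oddSmooth
  exact_mod_cast this

/-- `lam` times the logarithms of `3`, `5`, `7` are congruent to `w3`, `w5`, `w7`, all of
absolute value at most `W`. -/
structure IsShortDual (J : ℕ) (W lam w3 w5 w7 : ℤ) : Prop where
  three : lam * twoLog J 3 ≡ w3 [ZMOD 2 ^ (4 * J)]
  five : lam * twoLog J 5 ≡ w5 [ZMOD 2 ^ (4 * J)]
  seven : lam * twoLog J 7 ≡ w7 [ZMOD 2 ^ (4 * J)]
  abs_three : |w3| ≤ W
  abs_five : |w5| ≤ W
  abs_seven : |w7| ≤ W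

theorem IsShortDual.congr {J : ℕ} {W lam w3 w5 w7 : ℤ} (h : IsShortDual J W lam w3 w5 w7)
    (hJ : 0 < J) {x b c d : ℕ} {l : ℤ} (hx : Odd x) (hl : IsTwoLog (4 * J) x l)
    (hdvd : 2 ^ (4 * J) ∣ x + oddSmooth b c d) :
    b * w3 + c * w5 + d * w7 ≡ lam * l [ZMOD 2 ^ (4 * J)] := by
  have h1 : IsTwoLog (4 * J) x (b * twoLog J 3 + c * twoLog J 5 + d * twoLog J 7) :=
    (isTwoLog_oddSmooth J b c d).of_dvd_add (by omega) (by exact_mod_cast hx)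
      (by exact_mod_cast odd_oddSmooth b c d) (by exact_mod_cast hdvd)
  have h2 := (h1.unique hl).mul_left lam
  refine Int.ModEq.trans ?_ h2
  have h3 := ((h.three.mul_left b).add (h.five.mul_left c)).add (h.seven.mul_left d)
  refine Int.ModEq.trans h3.symm ?_
  rw [show (b * (lam * twoLog J 3) + c * (lam * twoLog J 5) + d * (lam * twoLog J 7) : ℤ) =
    lam * (b * twoLog J 3 + c * twoLog J 5 + d * twoLog J 7) by ring]

theorem IsShortDual.abs_combination_le {J : ℕ} {W lam w3 w5 w7 : ℤ} (h : IsShortDual J W lam w3 w5 w7)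
    (x y z : ℤ) : |x * w3 + y * w5 + z * w7| ≤ (|x| + |y| + |z|) * W := by
  calc |x * w3 + y * w5 + z * w7| ≤ |x * w3| + |y * w5| + |z * w7| := abs_add_three _ _ _
    _ = |x| * |w3| + |y| * |w5| + |z| * |w7| := by simp only [abs_mul]
    _ ≤ |x| * W + |y| * W + |z| * W := by
      have := h.abs_three
      have := h.abs_five
      have := h.abs_seven
      gcongr
    _ = (|x| + |y| + |z|) * W := by ring

theorem IsShortDual.not_dvd {J B lam r b c d : ℕ} {W : ℕ} {w3 w5 w7 : ℤ}
    (h : IsShortDual J W lam w3 w5 w7) (hJ : 0 < J) (hr : Odd r)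
    (hB : b + c + d ≤ B) (hcheck : logCheck J lam (B * W) r = true) :
    ¬ 2 ^ (4 * J) ∣ r + oddSmooth b c d := by
  intro hdvd
  have h1 := h.congr hJ hr (isTwoLog_twoLog hr) hdvd
  have h2 := h.abs_combination_le b c d
  set z : ℤ := b * w3 + c * w5 + d * w7
  have h3 : |z| ≤ (B * W : ℕ) := by
    refine h2.trans ?_
    simp only [Nat.abs_cast]
    exact_mod_cast Nat.mul_le_mul_right W hB
  have hc := Nat.le_of_ble_eq_true hcheck
  set E := B * W
  set P := 2 ^ (4 * J)
  rw [abs_le] at h3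
  have hP : 0 < P := by positivity
  have h4 : lam * twoLog J r + E ≡ (z + E).toNat [MOD P] := by
    rw [← Int.natCast_modEq_iff]
    push_cast
    rw [Int.toNat_of_nonneg (by linarith)]
    have := h1.symm.add_right E
    simpa [P] using this
  have h5 : (z + E).toNat ≤ 2 * E := by omega
  have h6 : (z + E).toNat % P ≤ (z + E).toNat := Nat.mod_le _ _
  rw [h4] at hc
  omega

theorem IsShortDual.eq_zero {J B b c d b' c' d' : ℕ} {W lam w3 w5 w7 : ℤ}
    (h : IsShortDual J W lam w3 w5 w7) (hJ : 0 < J)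
    (hB : b + c + d + (b' + c' + d') ≤ B) (hBW : B * W < 2 ^ (4 * J))
    (hdvd : 2 ^ (4 * J) ∣ oddSmooth b' c' d' + oddSmooth b c d) :
    ((b : ℤ) - b') * w3 + ((c : ℤ) - c') * w5 + ((d : ℤ) - d') * w7 = 0 := by
  have h0 : 0 ≤ W := (abs_nonneg _).trans h.abs_three
  have hself : (b' : ℤ) * w3 + c' * w5 + d' * w7 ≡
      lam * (b' * twoLog J 3 + c' * twoLog J 5 + d' * twoLog J 7) [ZMOD 2 ^ (4 * J)] := by
    have h3 := ((h.three.mul_left b').add (h.five.mul_left c')).add (h.seven.mul_left d')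
    refine h3.symm.trans ?_
    rw [show (b' * (lam * twoLog J 3) + c' * (lam * twoLog J 5) + d' * (lam * twoLog J 7) : ℤ) =
      lam * (b' * twoLog J 3 + c' * twoLog J 5 + d' * twoLog J 7) by ring]
  have h1 := h.congr hJ (odd_oddSmooth b' c' d') (isTwoLog_oddSmooth J b' c' d') hdvd
  have h2 := (hself.trans h1.symm).dvd
  refine Int.eq_zero_of_abs_lt_dvd (m := 2 ^ (4 * J)) ?_ (lt_of_le_of_lt ?_ hBW)
  · convert h2 using 1
    ring
  · refine (h.abs_combination_le _ _ _).trans (mul_le_mul_of_nonneg_right ?_ h0)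
    have e1 : |(b : ℤ) - b'| ≤ b + b' := by rw [abs_le]; omega
    have e2 : |(c : ℤ) - c'| ≤ c + c' := by rw [abs_le]; omega
    have e3 : |(d : ℤ) - d'| ≤ d + d' := by rw [abs_le]; omega
    omega

theorem isShortDual_large : IsShortDual 180 (2 ^ 481 : ℕ)
    (1822348465445277486923250391488760359779134341213261983605425628230552119809391863322677116678645432593266044384919575711778512124546488092427628538018438515950691536773931199085292973012163934495739373281444360648388 : ℕ)
    (-110247934849090341755765197673451653542745303523411981572769084952920647552877605411444114765356546986894443539472827009337325244815847832497456)
    4840885095374412677219885745976128533348865401538124380405835516752626872125897708898398795498495124216279416795020135524894296149300885302976240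
    (-742722971937721149114157155794332269442767926054573907507593492117371299658533996216033681368573477214297631703385839876080893226042125230634656) := by
  constructor <;> decide +kernel

theorem isShortDual_large' : IsShortDual 180 (2 ^ 481 : ℕ)
    272297311005992454298993284304707352084517343060773257487214057053865313023873913204474498011309545201209455934629474266427810585898866504517517006570029782242917923233386383144672556132775075841086204494656935255334
    (-4419575783313246884362871819676521711247219329003788887583988841759733935955572348132939558502782717197810950847594779448251452040223940497688520)
    (-1151455214067844531391634430479347119191216986389075139442285809661612525456039304463802766436442041467510632069625225622566739897449965568343448)
    2828695924543878558154011057383270399489321086693926494838021924664921776888298991444376624964951573590561100269671380412069984820595517170980368 := by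
  constructor <;> decide +kernel

theorem isShortDual_large'' : IsShortDual 180 (2 ^ 481 : ℕ)
    4020581860034803806590975604345727358300167198127037103006486778479136435891376422173224573862331746819286291398316866313707842086614959610800314696194615309310975383768483073989927570638327718407078102941087830288157
    314791508932661389385767459658950100546209145059313567933845009344848382223347237159123681175639870562888591617471183997250705814983669761413028
    2553913938819688776427553287683473006703834529744199251354734333130029487103805681321462379920260472630287861478660288971465479264531357072703500
    5039986617476142438054152739348464275428642353415487313180692667238711755807856506304722894023082847421684613698900499138261761076426005458596216 := by
  constructor <;> decide +kernel

theorem isShortDual_small : IsShortDual 16 (6825975861104 : ℕ) (2415152845884983644 : ℕ)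
    4629228309424 (-6825975861104) (-1695102914144) := by
  constructor <;> decide +kernel

/-- Cramer rule for a homogeneous system of three equations. -/
theorem eq_zero_of_det_ne_zero {a₁ a₂ a₃ b₁ b₂ b₃ c₁ c₂ c₃ x y z : ℤ}
    (ha : x * a₁ + y * a₂ + z * a₃ = 0) (hb : x * b₁ + y * b₂ + z * b₃ = 0)
    (hc : x * c₁ + y * c₂ + z * c₃ = 0)
    (hdet : a₁ * (b₂ * c₃ - b₃ * c₂) - a₂ * (b₁ * c₃ - b₃ * c₁) + a₃ * (b₁ * c₂ - b₂ * c₁) ≠ 0) :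
    x = 0 ∧ y = 0 ∧ z = 0 := by
  refine ⟨mul_right_cancel₀ hdet ?_, mul_right_cancel₀ hdet ?_, mul_right_cancel₀ hdet ?_⟩
  · linear_combination (b₂ * c₃ - b₃ * c₂) * ha - (a₂ * c₃ - a₃ * c₂) * hb +
      (a₂ * b₃ - a₃ * b₂) * hc
  · linear_combination -(b₁ * c₃ - b₃ * c₁) * ha + (a₁ * c₃ - a₃ * c₁) * hb -
      (a₁ * b₃ - a₃ * b₁) * hc
  · linear_combination (b₁ * c₂ - b₂ * c₁) * ha - (a₁ * c₂ - a₂ * c₁) * hb +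
      (a₁ * b₂ - a₂ * b₁) * hc

theorem not_two_pow_dvd_oddSmooth_add {b c d b' c' d' : ℕ}
    (hB : b + c + d + (b' + c' + d') ≤ 3 * 10 ^ 66) :
    ¬ 2 ^ (4 * 180) ∣ oddSmooth b' c' d' + oddSmooth b c d := by
  intro hdvd
  have hBW : ((3 * 10 ^ 66 : ℕ) : ℤ) * ((2 ^ 481 : ℕ) : ℤ) < 2 ^ (4 * 180) := by
    decide +kernel
  obtain ⟨hb, hc, hd⟩ := eq_zero_of_det_ne_zero
    (isShortDual_large.eq_zero (by norm_num) hB hBW hdvd)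
    (isShortDual_large'.eq_zero (by norm_num) hB hBW hdvd)
    (isShortDual_large''.eq_zero (by norm_num) hB hBW hdvd) (by norm_num)
  obtain rfl : b = b' := by omega
  obtain rfl : c = c' := by omega
  obtain rfl : d = d' := by omega
  have h4 : 4 ∣ oddSmooth b c d + oddSmooth b c d :=
    (pow_dvd_pow 2 (show 2 ≤ 4 * 180 by norm_num)).trans hdvd
  have := Nat.odd_iff.1 (odd_oddSmooth b c d)
  omega

/-! ### Smooth numbers -/

theorem exists_eq_two_pow_mul_oddSmooth {s : ℕ} (hs : 0 < s)
    (h : ∀ p, p.Prime → p ∣ s → p ∈ ({2, 3, 5, 7} : Finset ℕ)) :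
    ∃ a b c d, s = 2 ^ a * oddSmooth b c d := by
  induction s using Nat.strong_induction_on with
  | _ s ih =>
    by_cases h1 : s = 1
    · exact ⟨0, 0, 0, 0, by simp [h1, oddSmooth]⟩
    have hp := Nat.minFac_prime h1
    obtain ⟨t, ht⟩ := Nat.minFac_dvd s
    have ht0 : 0 < t := Nat.pos_of_ne_zero fun h0 => by simp [h0] at ht; omega
    obtain ⟨a, b, c, d, hd⟩ := ih t (by nlinarith [hp.two_le]) ht0
      fun p hp hpt => h p hp (ht ▸ Dvd.dvd.mul_left hpt _)
    have hmem := h _ hp (Nat.minFac_dvd s)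
    simp only [Finset.mem_insert, Finset.mem_singleton] at hmem
    unfold oddSmooth at hd ⊢
    rcases hmem with hq | hq | hq | hq <;> rw [hq, hd] at ht
    · exact ⟨a + 1, b, c, d, by rw [ht]; ring⟩
    · exact ⟨a, b + 1, c, d, by rw [ht]; ring⟩
    · exact ⟨a, b, c + 1, d, by rw [ht]; ring⟩
    · exact ⟨a, b, c, d + 1, by rw [ht]; ring⟩

theorem eq_and_add_eq_of_two_pow {a v n o u : ℕ} (ho : Odd o) (hu : Odd u) (hv : v < n)
    (h : n * 2 ^ n = 2 ^ v * o + 2 ^ a * u) : a = v ∧ o + u = n * 2 ^ (n - v) := by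
  rw [Nat.odd_iff] at ho hu
  rcases lt_trichotomy a v with hav | rfl | hav
  · exfalso
    obtain ⟨k, rfl⟩ := Nat.exists_eq_add_of_lt hav
    obtain ⟨j, hj⟩ := Nat.exists_eq_add_of_lt hv
    have h1 : 2 ^ a * (2 * (n * 2 ^ (k + j + 1))) = 2 ^ a * (2 * (2 ^ k * o) + u) := by
      have e : 2 ^ n = 2 ^ (a + k + 1 + j + 1) := by rw [hj]
      rw [e] at h
      linear_combination h
    have h2 := Nat.eq_of_mul_eq_mul_left (by positivity) h1
    omega
  · refine ⟨rfl, Nat.eq_of_mul_eq_mul_left (pow_pos two_pos a) ?_⟩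
    rw [mul_add, ← h, mul_left_comm, ← pow_add, Nat.add_sub_cancel' hv.le]
  · exfalso
    obtain ⟨k, rfl⟩ := Nat.exists_eq_add_of_lt hav
    obtain ⟨j, hj⟩ := Nat.exists_eq_add_of_lt hv
    have h1 : 2 ^ v * (2 * (n * 2 ^ j)) = 2 ^ v * (2 * (2 ^ k * u) + o) := by
      have e : 2 ^ n = 2 ^ (v + j + 1) := by rw [hj]
      rw [e] at h
      linear_combination h
    have h2 := Nat.eq_of_mul_eq_mul_left (by positivity) h1
    omega

/-! ### Growth of factorials -/

theorem mul_two_pow_le_factorial {k j : ℕ} (hk : 3 ≤ k)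
    (hbase : (k + j) * 2 ^ (k + j) ≤ k !) {m : ℕ} (hm : k ≤ m) :
    (m + j) * 2 ^ (m + j) ≤ m ! := by
  induction m, hm using Nat.le_induction with
  | base => exact hbase
  | succ m hm ih =>
    rw [Nat.factorial_succ, show m + 1 + j = (m + j) + 1 by ring, pow_succ]
    have h1 : m + j + 1 ≤ 2 * (m + j) := by omega
    calc (m + j + 1) * (2 ^ (m + j) * 2) ≤ (2 * (m + j)) * (2 ^ (m + j) * 2) := by gcongr
      _ = 4 * ((m + j) * 2 ^ (m + j)) := by ring
      _ ≤ (m + 1) * m ! := Nat.mul_le_mul (by omega) ih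

theorem mul_two_pow_mono {n k : ℕ} (h : n ≤ k) : n * 2 ^ n ≤ k * 2 ^ k :=
  Nat.mul_le_mul h (Nat.pow_le_pow_right two_pos h)

theorem sub_one_mul_two_pow_le_factorial {m : ℕ} (hm : 4 ≤ m) :
    (m - 1) * 2 ^ (m - 1) ≤ m ! := by
  induction m, hm using Nat.le_induction with
  | base => decide
  | succ m hm ih =>
    obtain ⟨m, rfl⟩ := Nat.exists_eq_add_of_le' (show 1 ≤ m by omega)
    rw [Nat.factorial_succ]
    simp only [Nat.add_sub_cancel] at ih ⊢
    calc (m + 1) * 2 ^ (m + 1) ≤ (2 * m) * 2 ^ (m + 1) := by gcongr; omega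
      _ = 4 * (m * 2 ^ m) := by ring
      _ ≤ (m + 1 + 1) * (m + 1)! := Nat.mul_le_mul (by omega) ih

theorem factorization_two_factorial_lt_of_lt {n m : ℕ} (hm : 0 < m) (h : m ! < n * 2 ^ n) :
    (m !).factorization 2 < n := by
  by_contra! hn
  have hv := factorization_two_factorial_lt hm.ne'
  by_cases h4 : 4 ≤ m
  · have := mul_two_pow_mono (show n ≤ m - 1 by omega)
    have := sub_one_mul_two_pow_le_factorial h4
    omega
  · have hdvd : 2 ^ n ∣ m ! := (pow_dvd_pow 2 hn).trans (Nat.ordProj_dvd _ _)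
    have hnm : n < m := by omega
    have h4 : m < 4 := by omega
    interval_cases m <;> interval_cases n <;> revert h hdvd <;> decide

/-! ### The equation `n 2 ^ n = m ! + s` -/

theorem exists_oddFactorial_add_oddSmooth {n m s : ℕ} (hm : 0 < m) (hs : 0 < s)
    (hsP : ∀ p, p.Prime → p ∣ s → p ∈ ({2, 3, 5, 7} : Finset ℕ))
    (h : n * 2 ^ n = m ! + s) :
    ∃ b c d, s = 2 ^ (m !).factorization 2 * oddSmooth b c d ∧ (m !).factorization 2 < n ∧
      oddFactorial m + oddSmooth b c d = n * 2 ^ (n - (m !).factorization 2) := by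
  obtain ⟨a, b, c, d, rfl⟩ := exists_eq_two_pow_mul_oddSmooth hs hsP
  have hv := factorization_two_factorial_lt_of_lt hm (show m ! < n * 2 ^ n by omega)
  obtain ⟨rfl, h2⟩ := eq_and_add_eq_of_two_pow (odd_oddFactorial m) (odd_oddSmooth b c d) hv
    (by rw [two_pow_mul_oddFactorial]; exact h)
  exact ⟨b, c, d, rfl, hv, h2⟩

theorem add_le_of_oddSmooth_le {b c d n k x : ℕ} (hk : k ≤ n)
    (h : x + oddSmooth b c d = n * 2 ^ k) : b + c + d ≤ 2 * n := by
  have h1 := two_pow_le_oddSmooth b c d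
  have h2 : n * 2 ^ k ≤ 2 ^ n * 2 ^ n :=
    Nat.mul_le_mul n.lt_two_pow_self.le (Nat.pow_le_pow_right two_pos hk)
  rw [← pow_add, ← two_mul] at h2
  exact (Nat.pow_le_pow_iff_right (by norm_num)).1 (by omega : 2 ^ (b + c + d) ≤ 2 ^ (2 * n))

theorem exists_oddFactorial_eq_oddSmooth {m : ℕ} (hm : m < 11) :
    ∃ b c d, oddFactorial m = oddSmooth b c d ∧ b + c + d ≤ 22 := by
  have hle : oddFactorial m ≤ m ! := Nat.div_le_self _ _
  have hdvd : oddFactorial m ∣ m ! := ⟨_, by rw [mul_comm, two_pow_mul_oddFactorial]⟩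
  have hlt : m ! < 2 ^ 22 := (Nat.factorial_le (show m ≤ 10 by omega)).trans_lt (by decide)
  obtain ⟨a, b, c, d, h⟩ := exists_eq_two_pow_mul_oddSmooth (odd_oddFactorial m).pos (by
    intro p hp hpm
    have : p < 11 := ((hp.dvd_factorial).1 (hpm.trans hdvd)).trans_lt hm
    interval_cases p <;> revert hp <;> decide)
  have ha : a = 0 := by
    by_contra ha
    have := odd_oddFactorial m
    rw [h, ← Nat.not_even_iff_odd] at this
    exact this (((Nat.even_pow' ha).2 even_two).mul_right _)
  subst ha
  rw [pow_zero, one_mul] at h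
  refine ⟨b, c, d, h, (Nat.pow_le_pow_iff_right (a := 2) (by norm_num)).1 ?_⟩
  have := two_pow_le_oddSmooth b c d
  omega

theorem odd_oddFactorial_mod (m : ℕ) {K : ℕ} (hK : K ≠ 0) : Odd (oddFactorial m % 2 ^ K) := by
  rw [Nat.odd_iff, Nat.mod_mod_of_dvd _ (dvd_pow_self 2 hK), ← Nat.odd_iff]
  exact odd_oddFactorial m

theorem oddFactorialCode_eq {K m v o : ℕ} (h : m ! = 2 ^ v * o) (ho : o % 2 = 1)
    (hlt : o < 2 ^ K) : m * 2 ^ K + o = oddFactorialCode K m := by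
  rw [oddFactorialCode, oddFactorial, h,
    Nat.ordCompl_pow_mul_of_not_dvd v Nat.prime_two (by omega), Nat.mod_eq_of_lt hlt]

theorem IsShortDual.not_dvd_oddFactorial_add {J B lam W k m b c d : ℕ} {w3 w5 w7 : ℤ}
    (h : IsShortDual J W lam w3 w5 w7) (hJ : 5 ≤ J)
    (hcheck : Nat.ble 1 (iterTwoPow (oddFactorialStep (4 * J) (logCheck J lam (B * W))) k
      (11 * 2 ^ (4 * J) + 155925)) = true)
    (h11 : 11 ≤ m) (hm : m < 11 + 2 ^ k) (hB : b + c + d ≤ B) :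
    ¬ 2 ^ (4 * J) ∣ oddFactorial m + oddSmooth b c d := by
  have hlt : 155925 < 2 ^ (4 * J) :=
    (show 155925 < 2 ^ 20 by norm_num).trans_le (Nat.pow_le_pow_right two_pos (by omega))
  have hcode : 11 * 2 ^ (4 * J) + 155925 = oddFactorialCode (4 * J) 11 :=
    oddFactorialCode_eq (v := 8) (by decide) (by decide) hlt
  have hc := check_oddFactorial hcode hcheck (m - 11) (by omega)
  rw [Nat.add_sub_cancel' h11] at hc
  have hnot := h.not_dvd (by omega) (odd_oddFactorial_mod m (by omega)) hB hc
  have e : oddFactorial m % 2 ^ (4 * J) + oddSmooth b c d ≡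
      oddFactorial m + oddSmooth b c d [MOD 2 ^ (4 * J)] := (Nat.mod_modEq _ _).add_right _
  exact fun hdvd => hnot ((e.dvd_iff dvd_rfl).2 hdvd)

theorem not_two_pow_dvd_oddFactorial_add {m b c d : ℕ} (hm : m < 500)
    (hB : b + c + d ≤ 2 * 10 ^ 66) : ¬ 2 ^ (4 * 180) ∣ oddFactorial m + oddSmooth b c d := by
  by_cases h11 : m < 11
  · obtain ⟨b', c', d', h, hB'⟩ := exists_oddFactorial_eq_oddSmooth h11
    rw [h]
    exact not_two_pow_dvd_oddSmooth_add (by omega)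
  · exact isShortDual_large.not_dvd_oddFactorial_add (by norm_num) log_check_large (by omega)
      (by omega) (by omega)

theorem not_two_pow_dvd_oddFactorial_add_of_lt {m u : ℕ} (hm : m < 2 ^ 14) (hu : u < 10 ^ 66) :
    ¬ 2 ^ 256 ∣ oddFactorial m + u := by
  have hcode : 1 = oddFactorialCode 256 0 :=
    oddFactorialCode_eq (K := 256) (m := 0) (v := 0) (o := 1) rfl rfl (by norm_num)
  have h := check_oddFactorial hcode residue_check m hm
  rw [zero_add] at h
  have h1 := Nat.le_of_ble_eq_true h
  intro hdvd
  have e : oddFactorial m % 2 ^ 256 + u ≡ oddFactorial m + u [MOD 2 ^ 256] :=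
    (Nat.mod_modEq _ _).add_right _
  have h2 := (e.dvd_iff dvd_rfl).2 hdvd
  have h3 := (odd_oddFactorial_mod m (K := 256) (by norm_num)).pos
  have h4 := Nat.le_of_dvd (by omega) h2
  omega

theorem allBelow_spec {f : ℕ → Bool} {b : ℕ} (h : allBelow f b = true) {k : ℕ} (hk : k < b) :
    f k = true := by
  induction b with
  | zero => omega
  | succ b ih =>
    rw [allBelow, Bool.and_eq_true] at h
    rcases Nat.lt_succ_iff_lt_or_eq.1 hk with hk | rfl
    · exact ih h.2 hk
    · exact h.1

theorem mem_of_pairCheck {M N n m s : ℕ}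
    (hcheck : allBelow (fun m => factorialPairCheck N m (m !)) M = true) (hN : N ≤ 740)
    (hm0 : 0 < m) (hm : m < M) (hn : n < N) (hs : 0 < s)
    (hsP : ∀ p, p.Prime → p ∣ s → p ∈ ({2, 3, 5, 7} : Finset ℕ)) (h : n * 2 ^ n = m ! + s) :
    (n, m) ∈ [(1, 1), (2, 1), (2, 2), (2, 3), (3, 3), (4, 1), (4, 4), (5, 5), (6, 3),
      (6, 4), (9, 6)] := by
  have h1 := allBelow_spec hcheck hm
  obtain ⟨F, hF⟩ := Nat.exists_eq_add_of_lt (Nat.factorial_pos m)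
  rw [zero_add] at hF
  have hm' : Nat.beq m 0 = false := by
    rw [← Bool.not_eq_true, Nat.beq_eq]
    omega
  rw [hF, factorialPairCheck, hm', cond_false, ← hF] at h1
  have h2 := allBelow_spec h1 hn
  have hlt : s < 2 ^ 800 := by
    have h3 := mul_two_pow_mono (show n ≤ 740 by omega)
    have h4 : 740 * 2 ^ 740 < 2 ^ 800 := by decide +kernel
    omega
  obtain ⟨a, b, c, d, hsd⟩ := exists_eq_two_pow_mul_oddSmooth hs hsP
  have habcd : a + (b + c + d) ≤ 800 := by
    refine (Nat.pow_le_pow_iff_right (a := 2) (by norm_num)).1 ?_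
    have := Nat.mul_le_mul_left (2 ^ a) (two_pow_le_oddSmooth b c d)
    rw [pow_add]
    omega
  have hdvd : s ∣ 210 ^ 800 := by
    rw [hsd, oddSmooth, show 210 = 2 * (3 * 5 * 7) by norm_num, mul_pow, mul_pow, mul_pow]
    exact mul_dvd_mul (pow_dvd_pow _ (by omega)) (mul_dvd_mul (mul_dvd_mul
      (pow_dvd_pow _ (by omega)) (pow_dvd_pow _ (by omega))) (pow_dvd_pow _ (by omega)))
  have hbeq : Nat.beq (210 ^ 800 % s) 0 = true := by
    rw [Nat.beq_eq]
    exact Nat.mod_eq_zero_of_dvd hdvd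
  rw [pairCheck, show n * 2 ^ n - m ! = s by omega, hbeq, cond_true] at h2
  exact of_decide_eq_true h2

theorem pow_dvd_of_pow_dvd_of_add_eq {p e b o u n k x : ℕ} (hp : p.Prime) (hp2 : p ≠ 2)
    (hn0 : 0 < n) (hn : n < p ^ e) (ho : p ^ e ∣ o) (hu : u = p ^ b * x)
    (h : o + u = n * 2 ^ k) : p ^ b ∣ n := by
  have hcop : ∀ j, (p ^ j).Coprime (2 ^ k) := fun j =>
    Nat.Coprime.pow _ _ ((Nat.coprime_primes hp Nat.prime_two).2 hp2)
  have key : ∀ j, j ≤ e → j ≤ b → p ^ j ∣ n := fun j hje hjb =>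
    (hcop j).dvd_of_dvd_mul_right
      (h ▸ dvd_add ((pow_dvd_pow p hje).trans ho) (hu ▸ Dvd.dvd.mul_right (pow_dvd_pow p hjb) x))
  rcases le_total b e with hbe | hbe
  · exact key b hbe le_rfl
  · exact absurd (Nat.le_of_dvd hn0 (key e le_rfl hbe)) (by omega)

theorem pow_dvd_oddFactorial {p e m : ℕ} (hp : p.Prime) (hp2 : p ≠ 2) (h : p ^ e ∣ 500 !)
    (hm : 500 ≤ m) : p ^ e ∣ oddFactorial m := by
  have h1 : p ^ e ∣ m ! := h.trans (Nat.factorial_dvd_factorial hm)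
  rw [← two_pow_mul_oddFactorial] at h1
  exact (Nat.Coprime.pow _ _ ((Nat.coprime_primes hp Nat.prime_two).2 hp2)).dvd_of_dvd_mul_left h1

theorem oddSmooth_le_of_large {n m b c d k : ℕ} (hm : 500 ≤ m) (hn0 : 0 < n) (hn : n < 10 ^ 66)
    (h : oddFactorial m + oddSmooth b c d = n * 2 ^ k) : oddSmooth b c d ≤ n := by
  have h3 : 3 ^ b ∣ n := pow_dvd_of_pow_dvd_of_add_eq (e := 140) (x := 5 ^ c * 7 ^ d)
    Nat.prime_three (by norm_num) hn0 (hn.trans (by norm_num))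
    (pow_dvd_oddFactorial Nat.prime_three (by norm_num) (by decide +kernel) hm)
    (by rw [oddSmooth]; ring) h
  have h5 : 5 ^ c ∣ n := pow_dvd_of_pow_dvd_of_add_eq (e := 100) (x := 3 ^ b * 7 ^ d)
    Nat.prime_five (by norm_num) hn0 (hn.trans (by norm_num))
    (pow_dvd_oddFactorial Nat.prime_five (by norm_num) (by decide +kernel) hm)
    (by rw [oddSmooth]; ring) h
  have h7 : 7 ^ d ∣ n := pow_dvd_of_pow_dvd_of_add_eq (e := 80) (x := 3 ^ b * 5 ^ c)
    Nat.prime_seven (by norm_num) hn0 (hn.trans (by norm_num))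
    (pow_dvd_oddFactorial Nat.prime_seven (by norm_num) (by decide +kernel) hm)
    (by rw [oddSmooth]; ring) h
  have h35 : (3 ^ b).Coprime (5 ^ c) := Nat.Coprime.pow _ _ (by norm_num)
  have h357 : (3 ^ b * 5 ^ c).Coprime (7 ^ d) :=
    Nat.Coprime.mul_left (Nat.Coprime.pow _ _ (by norm_num)) (Nat.Coprime.pow _ _ (by norm_num))
  exact Nat.le_of_dvd hn0
    (h357.mul_dvd_of_dvd_of_dvd (h35.mul_dvd_of_dvd_of_dvd h3 h5) h7)

theorem lt_of_lt_add_of_factorial_lt {k j n m : ℕ} (hk : 3 ≤ k)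
    (hbase : (k + j) * 2 ^ (k + j) ≤ k !) (h : m ! < n * 2 ^ n) (hn : n < m + j) : m < k := by
  by_contra! hm
  have h1 := mul_two_pow_le_factorial hk hbase hm
  have h2 := mul_two_pow_mono hn.le
  omega

theorem mem_of_mul_two_pow_eq_factorial_add {n m s : ℕ} (hn0 : 0 < n) (hm0 : 0 < m) (hs : 0 < s)
    (hsP : ∀ p, p.Prime → p ∣ s → p ∈ ({2, 3, 5, 7} : Finset ℕ)) (hn : n < 10 ^ 66)
    (h : n * 2 ^ n = m ! + s) (hexc : ¬ (10 ^ 4 < m ∧ n * 2 ^ n + 1 ≤ m ! * m !)) :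
    (n, m) ∈ [(1, 1), (2, 1), (2, 2), (2, 3), (3, 3), (4, 1), (4, 4), (5, 5), (6, 3),
      (6, 4), (9, 6)] := by
  obtain ⟨b, c, d, hsd, hv, hsum⟩ := exists_oddFactorial_add_oddSmooth hm0 hs hsP h
  have hvm := factorization_two_factorial_lt hm0.ne'
  have hlt : m ! < n * 2 ^ n := by omega
  have hdvd : ∀ K, m + K ≤ n → 2 ^ K ∣ oddFactorial m + oddSmooth b c d := fun K hK => by
    rw [hsum]
    exact Dvd.dvd.mul_left (pow_dvd_pow 2 (by omega)) n
  have hB := add_le_of_oddSmooth_le (Nat.sub_le _ _) hsum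
  by_cases hsmall : n < m + 720
  · have hm160 : m < 160 :=
      lt_of_lt_add_of_factorial_lt (by norm_num) (by decide +kernel) hlt hsmall
    by_cases h11 : m < 11
    · exact mem_of_pairCheck pair_check_smooth_factorial (by norm_num) hm0 h11 (by omega) hs hsP h
    by_cases h64 : n < m + 64
    · have hm29 : m < 29 := lt_of_lt_add_of_factorial_lt (by norm_num) (by decide +kernel) hlt h64
      exact mem_of_pairCheck pair_check_small (by norm_num) hm0 hm29 (by omega) hs hsP h
    · exact absurd (hdvd (4 * 16) (by omega)) (isShortDual_small.not_dvd_oddFactorial_add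
        (by norm_num) log_check_small (by omega) (by omega) (by omega))
  exfalso
  by_cases hm500 : m < 500
  · exact not_two_pow_dvd_oddFactorial_add hm500 (by omega) (hdvd _ (by omega))
  rw [not_lt] at hm500
  have hu := oddSmooth_le_of_large hm500 hn0 hn hsum
  by_cases hm4 : m ≤ 10 ^ 4
  · exact not_two_pow_dvd_oddFactorial_add_of_lt (by norm_num at hm4 ⊢; omega) (by omega)
      (hdvd 256 (by omega))
  refine hexc ⟨by omega, ?_⟩
  have hfac : 10 ^ 66 + 2 ≤ m ! :=
    (show 10 ^ 66 + 2 ≤ (500)! by decide +kernel).trans (Nat.factorial_le hm500)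
  have h2v : 2 ^ (m !).factorization 2 ≤ m ! :=
    Nat.le_of_dvd (Nat.factorial_pos m) (Nat.ordProj_dvd _ _)
  have hs' : s ≤ m ! * 10 ^ 66 := by
    rw [hsd]
    exact Nat.mul_le_mul h2v (by omega)
  calc n * 2 ^ n + 1 ≤ m ! * (10 ^ 66 + 2) := by omega
    _ ≤ m ! * m ! := Nat.mul_le_mul_left _ hfac

/-! ### The equation `m₁ ! + m₂ ! = n 2 ^ n` -/

theorem lt_of_two_pow_dvd_factorial {n m : ℕ} (hm : m ≠ 0) (h : 2 ^ n ∣ m !) : n < m :=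
  ((Nat.prime_two.pow_dvd_iff_le_factorization (Nat.factorial_ne_zero m)).1 h).trans_lt
    (factorization_two_factorial_lt hm)

theorem two_pow_dvd_factorial_add_two {n m k : ℕ} (hk : m ≤ k) (h : 2 ^ n ∣ k ! + m !) :
    2 ^ n ∣ (m + 2)! := by
  have hsucc : (m + 2)! = (m + 2) * (m + 1) * m ! := by
    rw [Nat.factorial_succ, Nat.factorial_succ, mul_assoc]
  have heven : 2 ∣ (m + 2) * (m + 1) := (Nat.even_mul_succ_self (m + 1)).two_dvd.trans
    (by rw [mul_comm])
  rcases (show k = m ∨ k = m + 1 ∨ m + 2 ≤ k by omega) with rfl | rfl | hk2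
  · refine h.trans ?_
    rw [hsucc, ← two_mul]
    exact mul_dvd_mul_right heven _
  · refine h.trans ⟨m + 1, ?_⟩
    rw [hsucc, Nat.factorial_succ]
    ring
  · obtain ⟨q, hq⟩ := Nat.factorial_dvd_factorial hk2
    obtain ⟨r, hr⟩ := heven
    have hodd : k ! + m ! = m ! * (2 * (r * q) + 1) := by
      rw [hq, hsucc, hr]
      ring
    rw [hodd] at h
    have hcop : (2 ^ n).Coprime (2 * (r * q) + 1) :=
      Nat.Coprime.pow_left n (by simp)
    exact (hcop.dvd_of_dvd_mul_right h).trans (Nat.factorial_dvd_factorial (by omega))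

theorem eq_of_factorial_add_factorial_eq {n k m : ℕ} (hn : 0 < n) (hm0 : 0 < m) (hk : m ≤ k)
    (h : k ! + m ! = n * 2 ^ n) : n = 1 ∧ k = 1 ∧ m = 1 ∨ n = 2 ∧ k = 3 ∧ m = 2 := by
  have hnm := lt_of_two_pow_dvd_factorial (by omega)
    (two_pow_dvd_factorial_add_two hk (h ▸ Dvd.intro_left n rfl))
  have hle : m ! ≤ k ! := Nat.factorial_le hk
  have hm6 : m < 7 := by
    by_contra! hm7
    have h1 := mul_two_pow_le_factorial (k := 7) (j := 1) (by norm_num) (by decide) hm7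
    have h2 := mul_two_pow_mono (show n ≤ m + 1 by omega)
    have := Nat.factorial_pos m
    omega
  have hn8 : n < 8 := by omega
  have hk7 : k < 7 := by
    by_contra! hk7
    have h1 := Nat.factorial_le hk7
    have h2 := mul_two_pow_mono (show n ≤ 7 by omega)
    have h3 : 7 * 2 ^ 7 < 7 ! := by decide
    omega
  clear hle hnm
  interval_cases m <;> interval_cases n <;> interval_cases k <;> revert h <;> decide

/-- Theorem 3 (degenerate solutions): all degenerate solutions of `C_n = m₁! + m₂! + s`
with `C_n = n·2^n + 1`, `m₁ ≥ m₂ ≥ 1`, `s` a positive integer whose prime factors lie in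
`{2, 3, 5, 7}` and `n < 10^66` are the twelve listed tuples, except possibly if
`m₂ = 1`, `m₁ > 10⁴` and `C_n ≤ (m₁!)²` hold simultaneously. Degeneracy means that at
least one of `m₁!`, `m₂!`, `m₁! + m₂!` equals `n·2^n` or `1`. -/
theorem cullen_two_factorials_S_unit_degenerate
    (n m₁ m₂ s : ℕ) (hn : 0 < n) (hm₁ : 0 < m₁) (hm₂ : 0 < m₂) (hm : m₂ ≤ m₁)
    (hs : 0 < s) (hsP : ∀ p, p.Prime → p ∣ s → p ∈ ({2, 3, 5, 7} : Finset ℕ))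
    (hN : n < 10 ^ 66)
    (heq : n * 2 ^ n + 1 = Nat.factorial m₁ + Nat.factorial m₂ + s)
    (hdeg : Nat.factorial m₁ = n * 2 ^ n ∨ Nat.factorial m₁ = 1 ∨
      Nat.factorial m₂ = n * 2 ^ n ∨ Nat.factorial m₂ = 1 ∨
      Nat.factorial m₁ + Nat.factorial m₂ = n * 2 ^ n ∨
      Nat.factorial m₁ + Nat.factorial m₂ = 1)
    (hexc : ¬ (m₂ = 1 ∧ 10 ^ 4 < m₁ ∧ n * 2 ^ n + 1 ≤ Nat.factorial m₁ * Nat.factorial m₁)) :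
    (n, m₁, m₂, s) ∈ ({(1, 1, 1, 1), (2, 1, 1, 7), (2, 2, 1, 6), (2, 3, 1, 2),
      (2, 3, 2, 1), (3, 3, 1, 18), (4, 1, 1, 63), (4, 4, 1, 40), (5, 5, 1, 40),
      (6, 3, 1, 378), (6, 4, 1, 360), (9, 6, 1, 3888)} : Set (ℕ × ℕ × ℕ × ℕ)) := by
  have h1 := Nat.factorial_pos m₁
  have h2 := Nat.factorial_pos m₂
  have hone : Nat.factorial m₂ = 1 → (n, m₁, m₂, s) ∈ ({(1, 1, 1, 1), (2, 1, 1, 7), (2, 2, 1, 6),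
      (2, 3, 1, 2), (2, 3, 2, 1), (3, 3, 1, 18), (4, 1, 1, 63), (4, 4, 1, 40), (5, 5, 1, 40),
      (6, 3, 1, 378), (6, 4, 1, 360), (9, 6, 1, 3888)} : Set (ℕ × ℕ × ℕ × ℕ)) := by
    intro hm2
    obtain rfl : m₂ = 1 := by
      rcases Nat.factorial_eq_one.1 hm2 |>.lt_or_eq with h | h <;> omega
    have hmem := mem_of_mul_two_pow_eq_factorial_add hn hm₁ hs hsP hN (by omega)
      (fun h => hexc ⟨rfl, h⟩)
    simp only [List.mem_cons, List.not_mem_nil, or_false, Prod.mk.injEq] at hmem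
    rcases hmem with ⟨rfl, rfl⟩ | ⟨rfl, rfl⟩ | ⟨rfl, rfl⟩ | ⟨rfl, rfl⟩ | ⟨rfl, rfl⟩ | ⟨rfl, rfl⟩ |
      ⟨rfl, rfl⟩ | ⟨rfl, rfl⟩ | ⟨rfl, rfl⟩ | ⟨rfl, rfl⟩ | ⟨rfl, rfl⟩ <;>
    · norm_num [Nat.factorial] at heq
      simp
      omega
  rcases hdeg with h | h | h | h | h | h
  · omega
  · have := Nat.factorial_le hm
    exact hone (by omega)
  · omega
  · exact hone h
  · rcases eq_of_factorial_add_factorial_eq hn hm₂ hm h with ⟨rfl, rfl, rfl⟩ | ⟨rfl, rfl, rfl⟩ <;>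
    · obtain rfl : s = 1 := by omega
      simp
  · omega
end
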